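/- Let d ≥ 2 and let r > d(d+1) be integers. Let J_{r,d}(V) denote the number of 2r-tuples of integers (v₁, …, v_{2r}) with 1 ≤ v_i ≤ V satisfying v₁^j + v₂^j + ⋯ + v_r^j = v_{r+1}^j + ⋯ + v_{2r}^j for every 1 ≤ j ≤ d. Then J_{r,d}(V) ≪ V^{2r − d(d+1)/2}, with implied constant depending only on d and r. -/

import Mathlib

/-- `e(x) = exp(2πix)` -/
noncomputable def e (x : ℝ) : ℂ := Complex.exp (2 * Real.pi * Complex.I * x)

namespace VMV

/-- Translation invariance (modulo `m`; `m = 0` gives equality). -/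
lemma shift_dvd {ι : Type*} [Fintype ι] (x y : ι → ℤ) (m c : ℤ) (k : ℕ)
    (h : ∀ j, 1 ≤ j → j ≤ k → m ∣ ∑ i, x i ^ j - ∑ i, y i ^ j) :
    ∀ j, j ≤ k → m ∣ ∑ i, (x i + c) ^ j - ∑ i, (y i + c) ^ j := by
  intro j hj
  have key : ∑ i, (x i + c) ^ j - ∑ i, (y i + c) ^ j =
      ∑ l ∈ Finset.range (j + 1), (c ^ (j - l) * (j.choose l : ℤ)) *
        (∑ i, x i ^ l - ∑ i, y i ^ l) := by
    simp only [add_pow]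
    rw [Finset.sum_comm, Finset.sum_comm (s := Finset.univ (α := ι)), ← Finset.sum_sub_distrib]
    refine Finset.sum_congr rfl fun l _ => ?_
    rw [mul_sub, Finset.mul_sum, Finset.mul_sum]
    congr 1 <;> exact Finset.sum_congr rfl fun i _ => by ring
  rw [key]
  refine Finset.dvd_sum fun l hl => ?_
  rcases Nat.eq_zero_or_pos l with rfl | hl0
  · simp
  · exact Dvd.dvd.mul_left (h l hl0 (by have := Finset.mem_range.1 hl; omega)) _

open Classical in
/-- Number of solutions of the Vinogradov system with variables in `[0, X)`. -/
noncomputable def J (s k X : ℕ) : ℕ :=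
  ((Finset.univ : Finset ((Fin s → Fin X) × (Fin s → Fin X))).filter
    (fun z : (Fin s → Fin X) × (Fin s → Fin X) => ∀ j, 1 ≤ j → j ≤ k → ∑ i, ((z.1 i : ℕ) : ℤ) ^ j = ∑ i, ((z.2 i : ℕ) : ℤ) ^ j)).card

/-- A family of pairs of tuples, injecting into the solutions after translation and dilation. -/
lemma card_le_J {s k X : ℕ} (S : Finset ((Fin s → ℕ) × (Fin s → ℕ))) (q c : ℕ) (hq : 0 < q)
    (h1 : ∀ z ∈ S, ∀ i, c ≤ z.1 i ∧ q ∣ z.1 i - c ∧ (z.1 i - c) / q < X)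
    (h2 : ∀ z ∈ S, ∀ i, c ≤ z.2 i ∧ q ∣ z.2 i - c ∧ (z.2 i - c) / q < X)
    (h3 : ∀ z ∈ S, ∀ j, 1 ≤ j → j ≤ k →
      ∑ i, ((z.1 i : ℕ) : ℤ) ^ j = ∑ i, ((z.2 i : ℕ) : ℤ) ^ j) :
    S.card ≤ J s k X := by
  classical
  have hX : ∀ z : S, ∀ i : Fin s, ((z.1.1 i - c) / q < X) ∧ ((z.1.2 i - c) / q < X) :=
    fun z i => ⟨(h1 z z.2 i).2.2, (h2 z z.2 i).2.2⟩
  rw [← Finset.card_attach, J]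
  refine Finset.card_le_card_of_injOn
    (fun z : S => ((fun i => ⟨(z.1.1 i - c) / q, (hX z i).1⟩ : Fin s → Fin X),
      (fun i => ⟨(z.1.2 i - c) / q, (hX z i).2⟩ : Fin s → Fin X)))
    ?_ ?_
  · intro z _
    simp only [Finset.coe_filter, Finset.mem_univ, true_and, Set.mem_setOf_eq]
    intro j hj1 hjk
    have hs := shift_dvd (fun i => ((z.1.1 i : ℕ) : ℤ)) (fun i => ((z.1.2 i : ℕ) : ℤ)) 0 (-(c : ℤ)) k
      (fun j hj hjk => by rw [h3 z z.2 j hj hjk]; simp) j hjk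
    have hs' := sub_eq_zero.1 (zero_dvd_iff.1 hs)
    have e1 : ∀ i, ((z.1.1 i : ℕ) : ℤ) + -(c : ℤ) = q * (((z.1.1 i - c) / q : ℕ) : ℤ) := by
      intro i
      obtain ⟨a, b, _⟩ := h1 z z.2 i
      have := Nat.mul_div_cancel' b
      zify [a] at this
      push_cast [a]
      linarith
    have e2 : ∀ i, ((z.1.2 i : ℕ) : ℤ) + -(c : ℤ) = q * (((z.1.2 i - c) / q : ℕ) : ℤ) := by
      intro i
      obtain ⟨a, b, _⟩ := h2 z z.2 i
      have := Nat.mul_div_cancel' b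
      zify [a] at this
      push_cast [a]
      linarith
    simp only [e1, e2, mul_pow, ← Finset.mul_sum] at hs'
    have hq' : ((q : ℤ) ^ j) ≠ 0 := by positivity
    exact mul_left_cancel₀ hq' hs'
  · intro z _ w _ hzw
    simp only [Prod.mk.injEq] at hzw
    obtain ⟨ha, hb⟩ := hzw
    apply Subtype.ext
    apply Prod.ext
    · funext i
      have := congrFun ha i
      simp only [Fin.mk.injEq] at this
      obtain ⟨a1, a2, _⟩ := h1 z z.2 i
      obtain ⟨b1, b2, _⟩ := h1 w w.2 i
      have := Nat.div_left_inj a2 b2 |>.1 this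
      omega
    · funext i
      have := congrFun hb i
      simp only [Fin.mk.injEq] at this
      obtain ⟨a1, a2, _⟩ := h2 z z.2 i
      obtain ⟨b1, b2, _⟩ := h2 w w.2 i
      have := Nat.div_left_inj a2 b2 |>.1 this
      omega

lemma J_mono {s k X Y : ℕ} (h : X ≤ Y) : J s k X ≤ J s k Y := by
  classical
  unfold J
  refine Finset.card_le_card_of_injOn
    (fun z : (Fin s → Fin X) × (Fin s → Fin X) =>
      ((fun i => Fin.castLE h (z.1 i) : Fin s → Fin Y), (fun i => Fin.castLE h (z.2 i) : Fin s → Fin Y))) ?_ ?_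
  · intro z hz
    simpa using hz
  · intro z _ w _ hzw
    simp only [Prod.mk.injEq] at hzw
    apply Prod.ext
    · funext i; exact Fin.castLE_injective h (congrFun hzw.1 i)
    · funext i; exact Fin.castLE_injective h (congrFun hzw.2 i)

end VMV

namespace VMV

lemma pow_sum_unique {k p : ℕ} (hp : p.Prime) (hk : k < p) (z z' : Fin k → ℤ)
    (h0 : ∀ i, (p : ℤ) ∣ z' i - z i)
    (hinj : ∀ i j, (p : ℤ) ∣ z i - z j → i = j) (m : ℕ)
    (h : ∀ j, 1 ≤ j → j ≤ k → (p : ℤ) ^ m ∣ ∑ i, z' i ^ j - ∑ i, z i ^ j) :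
    ∀ i, (p : ℤ) ^ m ∣ z' i - z i := by
  have key : ∀ l, 1 ≤ l → l ≤ m → ∀ i, (p : ℤ) ^ l ∣ z' i - z i := by
    intro l hl
    induction l, hl using Nat.le_induction with
    | base => intro _ i; simpa using h0 i
    | succ l hl ih =>
      intro hlm
      have ih := ih (by omega)
      choose t ht using ih
      haveI : Fact p.Prime := ⟨hp⟩
      have hz' : ∀ i, z' i = z i + p ^ l * t i := fun i => by linarith [ht i]
      -- linear congruences for t
      have hlin : ∀ j : Fin k, (∑ i, (t i : ZMod p) * (z i : ZMod p) ^ (j : ℕ)) = 0 := by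
        intro j
        have h1 : (p : ℤ) ^ (l + 1) ∣ ∑ i, z' i ^ ((j : ℕ) + 1) - ∑ i, z i ^ ((j : ℕ) + 1) :=
          (pow_dvd_pow _ hlm).trans (h _ (by omega) (by have := j.2; omega))
        have h2 : ∀ i, ∃ c : ℤ, z' i ^ ((j : ℕ) + 1) - z i ^ ((j : ℕ) + 1) =
            p ^ l * ((((j : ℕ) + 1 : ℕ) : ℤ) * (t i * z i ^ (j : ℕ))) + p ^ (l + 1) * c := by
          intro i
          obtain ⟨c, hc⟩ := Polynomial.powAddExpansion (z i) (p ^ l * t i) ((j : ℕ) + 1)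
          refine ⟨c * p ^ (l - 1) * t i ^ 2, ?_⟩
          rw [hz', hc]
          have : (p : ℤ) ^ l = p ^ (l - 1) * p := by
            rw [← pow_succ]; congr 1; omega
          simp only [Nat.add_sub_cancel]
          rw [pow_succ]
          have h6 : ((p : ℤ) ^ l * t i) ^ 2 = p ^ l * p * p ^ (l - 1) * t i ^ 2 := by
            calc ((p : ℤ) ^ l * t i) ^ 2 = p ^ l * p ^ l * t i ^ 2 := by ring
              _ = p ^ l * (p ^ (l - 1) * p) * t i ^ 2 := by rw [← this]
              _ = _ := by ring
          rw [h6]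
          push_cast
          ring
        choose c hc using h2
        rw [← Finset.sum_sub_distrib, Finset.sum_congr rfl (fun i _ => hc i),
          Finset.sum_add_distrib, ← Finset.mul_sum, ← Finset.mul_sum, ← Finset.mul_sum] at h1
        have h3 : (p : ℤ) ^ (l + 1) ∣ p ^ l * ((((j : ℕ) + 1 : ℕ) : ℤ) * ∑ i, (t i * z i ^ (j : ℕ))) :=
          (dvd_add_left (Dvd.intro _ rfl)).1 h1
        rw [pow_succ] at h3
        have hpl : (p : ℤ) ^ l ≠ 0 := by
          have := hp.pos; positivity
        have h4 := (mul_dvd_mul_iff_left hpl).1 h3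
        have hp' : Prime (p : ℤ) := Nat.prime_iff_prime_int.1 hp
        rcases hp'.dvd_or_dvd h4 with h5 | h5
        · have h6 : p ∣ (j : ℕ) + 1 := by exact_mod_cast h5
          have := Nat.le_of_dvd (by omega) h6
          have := j.2
          omega
        · have := (ZMod.intCast_zmod_eq_zero_iff_dvd _ _).2 h5
          push_cast at this
          exact this
      have ht0 : (fun i => (t i : ZMod p)) = 0 := by
        refine Matrix.eq_zero_of_forall_pow_sum_mul_pow_eq_zero (f := fun i => (z i : ZMod p)) ?_ hlin
        intro i j hij
        apply hinj
        have : ((z i - z j : ℤ) : ZMod p) = 0 := by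
          push_cast; exact sub_eq_zero.2 hij
        exact (ZMod.intCast_zmod_eq_zero_iff_dvd _ _).1 this
      intro i
      have : (p : ℤ) ∣ t i := (ZMod.intCast_zmod_eq_zero_iff_dvd _ _).1 (congrFun ht0 i)
      rw [ht i, pow_succ]
      exact mul_dvd_mul_left _ this
  intro i
  rcases Nat.eq_zero_or_pos m with rfl | hm
  · simp
  · exact key m hm le_rfl i

lemma pigeon {τ : Type*} {k : ℕ} (S : Finset τ) (Ψ : Fin k → τ → ℤ) (p : ℕ) (hp : 0 < p)
    (u : Fin k → ℕ) (w n : ℕ) (hu : ∀ j, u j ≤ w)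
    (hS : ∀ t ∈ S, ∀ t' ∈ S, ∀ j, (p : ℤ) ^ u j ∣ Ψ j t - Ψ j t')
    (hn : ∀ S' ⊆ S, (∀ t ∈ S', ∀ t' ∈ S', ∀ j, (p : ℤ) ^ w ∣ Ψ j t - Ψ j t') → S'.card ≤ n) :
    S.card ≤ n * p ^ (∑ j, (w - u j)) := by
  classical
  rcases S.eq_empty_or_nonempty with rfl | ⟨t0, ht0⟩
  · simp
  let F : τ → (Fin k → ℕ) := fun t j =>
    (((Ψ j t - Ψ j t0) / (p : ℤ) ^ u j) % (p : ℤ) ^ (w - u j)).toNat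
  have hpos : ∀ l : ℕ, (0 : ℤ) < (p : ℤ) ^ l := fun l => by positivity
  have hmaps : ∀ t ∈ S, F t ∈ Fintype.piFinset (fun j => Finset.range (p ^ (w - u j))) := by
    intro t _
    rw [Fintype.mem_piFinset]
    intro j
    rw [Finset.mem_range]
    have h1 := Int.emod_lt_of_pos ((Ψ j t - Ψ j t0) / (p : ℤ) ^ u j) (hpos (w - u j))
    have h2 := Int.emod_nonneg ((Ψ j t - Ψ j t0) / (p : ℤ) ^ u j) (hpos (w - u j)).ne'
    zify
    simp only [F]
    rw [Int.toNat_of_nonneg h2]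
    exact h1
  have := Finset.card_le_mul_card_image_of_maps_to hmaps n ?_
  · rw [Fintype.card_piFinset] at this
    simpa [Finset.prod_pow_eq_pow_sum] using this
  · intro f _
    apply hn _ (Finset.filter_subset _ _)
    intro t ht t' ht' j
    rw [Finset.mem_filter] at ht ht'
    have hF : F t j = F t' j := by rw [ht.2, ht'.2]
    have h2 := Int.emod_nonneg ((Ψ j t - Ψ j t0) / (p : ℤ) ^ u j) (hpos (w - u j)).ne'
    have h2' := Int.emod_nonneg ((Ψ j t' - Ψ j t0) / (p : ℤ) ^ u j) (hpos (w - u j)).ne'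
    simp only [F] at hF
    have hF' : ((Ψ j t - Ψ j t0) / (p : ℤ) ^ u j) % (p : ℤ) ^ (w - u j) =
        ((Ψ j t' - Ψ j t0) / (p : ℤ) ^ u j) % (p : ℤ) ^ (w - u j) := by
      have := congrArg (fun n : ℕ => (n : ℤ)) hF
      simp only [Int.toNat_of_nonneg h2, Int.toNat_of_nonneg h2'] at this
      exact this
    obtain ⟨c, hc⟩ := hS t ht.1 t0 ht0 j
    obtain ⟨c', hc'⟩ := hS t' ht'.1 t0 ht0 j
    rw [hc, hc', Int.mul_ediv_cancel_left _ (hpos _).ne', Int.mul_ediv_cancel_left _ (hpos _).ne'] at hF'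
    have hd : (p : ℤ) ^ (w - u j) ∣ c - c' := Int.ModEq.dvd (Int.ModEq.symm hF')
    have : Ψ j t - Ψ j t' = p ^ u j * (c - c') := by linarith
    rw [this, show w = u j + (w - u j) by have := hu j; omega, pow_add]
    simpa using mul_dvd_mul_left _ hd

lemma count_sys {k p a b : ℕ} (hp : p.Prime) (hk : k < p) (hab : a ≤ b) (ha : a + 1 ≤ k * b)
    (η : ℤ) (ξ : Fin k → ℕ) (hξ : ∀ i j, ξ i ≡ ξ j [MOD p ^ a])
    (hinj : ∀ i j, ξ i ≡ ξ j [MOD p ^ (a + 1)] → i = j)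
    (S : Finset (Fin k → ℕ))
    (hS1 : ∀ ρ ∈ S, ∀ i, ρ i < p ^ (k * b) ∧ ρ i ≡ ξ i [MOD p ^ (a + 1)])
    (hS2 : ∀ ρ ∈ S, ∀ ρ' ∈ S, ∀ j, 1 ≤ j → j ≤ k →
      (p : ℤ) ^ (j * b) ∣ ∑ i, ((ρ i : ℤ) - η) ^ j - ∑ i, ((ρ' i : ℤ) - η) ^ j) :
    S.card ≤ p ^ ((∑ j ∈ Finset.range k, j) * (a + b)) := by
  classical
  have hp0 := hp.pos
  -- first lifting
  have step1 := pigeon S (fun (j : Fin k) ρ => ∑ i, ((ρ i : ℤ) - η) ^ ((j : ℕ) + 1)) p hp0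
    (fun j => ((j : ℕ) + 1) * b) (k * b) (p ^ ((∑ j ∈ Finset.range k, j) * a))
    (fun j => Nat.mul_le_mul_right _ (by have := j.2; omega))
    (fun ρ hρ ρ' hρ' j => hS2 ρ hρ ρ' hρ' _ (by omega) (by have := j.2; omega)) ?_
  · have e1 : ∑ j : Fin k, (k * b - ((j : ℕ) + 1) * b) = (∑ j ∈ Finset.range k, j) * b := by
      rw [Fin.sum_univ_eq_sum_range (fun j => k * b - (j + 1) * b), ← Finset.sum_range_reflect,
        Finset.sum_mul]
      refine Finset.sum_congr rfl fun j hj => ?_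
      have := Finset.mem_range.1 hj
      rw [← Nat.sub_mul]
      congr 1
      omega
    rw [e1, ← pow_add, ← mul_add] at step1
    exact step1
  intro S' hS' hS'2
  have hmod : ∀ ρ ∈ S', ∀ i i' , ∀ ρ' ∈ S', ρ i % p ^ a = ρ' i' % p ^ a := by
    intro ρ hρ i i' ρ' hρ'
    have h1 := ((hS1 ρ (hS' hρ) i).2).of_dvd (pow_dvd_pow p (Nat.le_succ a))
    have h2 := ((hS1 ρ' (hS' hρ') i').2).of_dvd (pow_dvd_pow p (Nat.le_succ a))
    exact (h1.trans (hξ i i')).trans h2.symm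
  rcases Nat.eq_zero_or_pos k with rfl | hkpos
  · have : S'.card ≤ 1 := Finset.card_le_one.2 fun x _ y _ => Subsingleton.elim x y
    simpa using this
  have step2 := pigeon S' (fun (j : Fin k) ρ => ∑ i, (((ρ i / p ^ a : ℕ) : ℤ)) ^ ((j : ℕ) + 1)) p hp0
    (fun j => k * b - ((j : ℕ) + 1) * a) (k * b - a) 1
    (fun j => by
      have : a ≤ ((j : ℕ) + 1) * a := Nat.le_mul_of_pos_left _ (by omega)
      omega) ?_ ?_
  · have e1 : ∑ j : Fin k, (k * b - a - (k * b - ((j : ℕ) + 1) * a)) = (∑ j ∈ Finset.range k, j) * a := by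
      rw [Fin.sum_univ_eq_sum_range (fun j => k * b - a - (k * b - (j + 1) * a)), Finset.sum_mul]
      refine Finset.sum_congr rfl fun j hj => ?_
      have h1 := Finset.mem_range.1 hj
      have h2 : (j + 1) * a ≤ k * b := Nat.mul_le_mul (by omega) hab
      have h3 : (j + 1) * a = j * a + a := by ring
      omega
    rw [e1, one_mul] at step2
    exact step2
  · intro ρ hρ ρ' hρ' j
    set c : ℕ := ρ ⟨0, hkpos⟩ % p ^ a with hc
    have hz : ∀ ρ'' ∈ S', ∀ i, ((ρ'' i : ℕ) : ℤ) - η + (η - c) = p ^ a * ((ρ'' i / p ^ a : ℕ) : ℤ) := by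
      intro ρ'' h'' i
      have h1 : ρ'' i % p ^ a = c := hmod ρ'' h'' i _ ρ hρ
      have h2 := Nat.div_add_mod (ρ'' i) (p ^ a)
      rw [h1] at h2
      zify at h2 ⊢
      linarith
    have h1 := shift_dvd (fun i => (ρ i : ℤ) - η) (fun i => (ρ' i : ℤ) - η) ((p : ℤ) ^ (k * b)) (η - c) k
      (fun l hl hlk => by
        have := hS'2 ρ hρ ρ' hρ' ⟨l - 1, by omega⟩
        simpa [Nat.sub_add_cancel hl] using this) (j + 1) (by have := j.2; omega)
    simp only [hz ρ hρ, hz ρ' hρ', mul_pow, ← Finset.mul_sum, ← mul_sub] at h1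
    have hle : ((j : ℕ) + 1) * a ≤ k * b := Nat.mul_le_mul (by have := j.2; omega) hab
    rw [show k * b = a * ((j : ℕ) + 1) + (k * b - ((j : ℕ) + 1) * a) by
      rw [mul_comm a]; omega, pow_add, ← pow_mul] at h1
    have := (mul_dvd_mul_iff_left (a := (p : ℤ) ^ (a * ((j : ℕ) + 1))) (by positivity)).1 h1
    exact this
  · intro S'' hS'' hS''2
    refine Finset.card_le_one.2 fun ρ hρ ρ' hρ' => ?_
    have hdm : ∀ i, ρ' i % p ^ a = ρ i % p ^ a := fun i => hmod _ (hS'' hρ') i i _ (hS'' hρ)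
    have hun := pow_sum_unique hp hk (fun i => ((ρ i / p ^ a : ℕ) : ℤ))
      (fun i => ((ρ' i / p ^ a : ℕ) : ℤ)) ?_ ?_ (k * b - a) ?_
    · funext i
      have h1 := hun i
      have h2 : (p : ℤ) ^ (k * b) ∣ (ρ' i : ℤ) - ρ i := by
        have e1 := Nat.div_add_mod (ρ i) (p ^ a)
        have e2 := Nat.div_add_mod (ρ' i) (p ^ a)
        rw [hdm i] at e2
        have : (ρ' i : ℤ) - ρ i = p ^ a * (((ρ' i / p ^ a : ℕ) : ℤ) - ((ρ i / p ^ a : ℕ) : ℤ)) := by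
          zify at e1 e2 ⊢
          linarith
        rw [this, show k * b = a + (k * b - a) by omega, pow_add]
        simpa using mul_dvd_mul_left _ h1
      have h3 : ρ i ≡ ρ' i [MOD p ^ (k * b)] := by
        rw [Nat.modEq_iff_dvd]; exact_mod_cast h2
      exact Nat.ModEq.eq_of_lt_of_lt h3 (hS1 _ (hS' (hS'' hρ)) i).1 (hS1 _ (hS' (hS'' hρ')) i).1
    · intro i
      have h1 : ρ i ≡ ρ' i [MOD p ^ (a + 1)] :=
        ((hS1 _ (hS' (hS'' hρ)) i).2).trans ((hS1 _ (hS' (hS'' hρ')) i).2).symm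
      have h2 := (Nat.modEq_iff_dvd.1 h1)
      have e1 := Nat.div_add_mod (ρ i) (p ^ a)
      have e2 := Nat.div_add_mod (ρ' i) (p ^ a)
      rw [hdm i] at e2
      have : (ρ' i : ℤ) - ρ i = p ^ a * (((ρ' i / p ^ a : ℕ) : ℤ) - ((ρ i / p ^ a : ℕ) : ℤ)) := by
        zify at e1 e2 ⊢
        linarith
      rw [this] at h2
      push_cast [pow_succ] at h2
      exact (mul_dvd_mul_iff_left (a := (p : ℤ) ^ a) (by positivity)).1 (by push_cast; exact h2)
    · intro i j hij
      apply hinj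
      have h1 := (hS1 _ (hS' (hS'' hρ)) i).2
      have h2 := (hS1 _ (hS' (hS'' hρ)) j).2
      refine h1.symm.trans (Nat.ModEq.trans ?_ h2)
      have e1 := Nat.div_add_mod (ρ i) (p ^ a)
      have e2 := Nat.div_add_mod (ρ j) (p ^ a)
      rw [hmod _ (hS'' hρ) j i _ (hS'' hρ)] at e2
      have : (ρ i : ℤ) - ρ j = p ^ a * (((ρ i / p ^ a : ℕ) : ℤ) - ((ρ j / p ^ a : ℕ) : ℤ)) := by
        zify at e1 e2 ⊢
        linarith
      apply Nat.ModEq.symm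
      rw [Nat.modEq_iff_dvd]
      push_cast [pow_succ]
      rw [this]
      exact mul_dvd_mul_left _ hij
    · intro j hj hjk
      have := hS''2 ρ' hρ' ρ hρ ⟨j - 1, by omega⟩
      simpa [Nat.sub_add_cancel hj] using this

end VMV

namespace VMV
open Finset

/-- Characters of `(ℤ/N)^k`. -/
noncomputable def E {N k : ℕ} [NeZero N] (α n : Fin k → ZMod N) : ℂ :=
  ZMod.stdAddChar (∑ j, α j * n j)

section
variable {N k : ℕ} [NeZero N]

lemma E_add (α n m : Fin k → ZMod N) : E α (n + m) = E α n * E α m := by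
  simp only [E, Pi.add_apply, mul_add, Finset.sum_add_distrib, AddChar.map_add_eq_mul]

lemma E_sum {ι : Type*} (S : Finset ι) (α : Fin k → ZMod N) (n : ι → Fin k → ZMod N) :
    E α (∑ i ∈ S, n i) = ∏ i ∈ S, E α (n i) := by
  classical
  induction S using Finset.induction_on with
  | empty => simp [E]
  | insert a s ha ih => rw [Finset.sum_insert ha, Finset.prod_insert ha, E_add, ih]

lemma E_neg (α n : Fin k → ZMod N) : E α (-n) = (starRingEnd ℂ) (E α n) := by
  simp only [E, Pi.neg_apply, mul_neg, Finset.sum_neg_distrib]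
  rw [AddChar.map_neg_eq_conj]

lemma E_norm (α n : Fin k → ZMod N) : ‖E α n‖ = 1 := by
  simp [E]

lemma E_orth (n : Fin k → ZMod N) :
    ∑ α : Fin k → ZMod N, E α n = if n = 0 then (N : ℂ) ^ k else 0 := by
  classical
  have h1 : ∀ α : Fin k → ZMod N, E α n = ∏ j, ZMod.stdAddChar (α j * n j) := by
    intro α
    have : ∀ S : Finset (Fin k), (ZMod.stdAddChar (∑ j ∈ S, α j * n j) : ℂ) =
        ∏ j ∈ S, ZMod.stdAddChar (α j * n j) := by
      intro S
      induction S using Finset.induction_on with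
      | empty => simp
      | insert a s ha ih =>
        rw [Finset.sum_insert ha, Finset.prod_insert ha, AddChar.map_add_eq_mul, ih]
    exact this _
  simp only [h1]
  have h2 := Finset.prod_univ_sum (fun _ : Fin k => (Finset.univ : Finset (ZMod N)))
    (fun j x => (ZMod.stdAddChar (x * n j) : ℂ))
  rw [Fintype.piFinset_univ] at h2
  rw [← h2]
  simp only [AddChar.sum_mulShift _ (ZMod.isPrimitive_stdAddChar N)]
  split_ifs with h
  · subst h; simp
  · obtain ⟨j, hj⟩ : ∃ j, n j ≠ 0 := by
      by_contra hcon
      push Not at hcon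
      exact h (funext hcon)
    exact Finset.prod_eq_zero (Finset.mem_univ j) (by simp [hj])

lemma second_moment {τ : Type*} [DecidableEq τ] (T : Finset τ) (n : τ → Fin k → ZMod N) :
    ∑ α : Fin k → ZMod N, ‖∑ t ∈ T, E α (n t)‖ ^ 2 =
      (N : ℝ) ^ k * (((T ×ˢ T).filter (fun z => n z.1 = n z.2)).card : ℝ) := by
  have h : ((∑ α : Fin k → ZMod N, ‖∑ t ∈ T, E α (n t)‖ ^ 2 : ℝ) : ℂ) =
      (((N : ℝ) ^ k * (((T ×ˢ T).filter (fun z => n z.1 = n z.2)).card : ℝ) : ℝ) : ℂ) := by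
    push_cast
    have h1 : ∀ α : Fin k → ZMod N, ((‖∑ t ∈ T, E α (n t)‖ : ℂ)) ^ 2 =
        ∑ z ∈ T ×ˢ T, E α (n z.1 - n z.2) := by
      intro α
      rw [← Complex.mul_conj', map_sum, Finset.sum_mul_sum, ← Finset.sum_product']
      refine Finset.sum_congr rfl fun z _ => ?_
      rw [sub_eq_add_neg, E_add, E_neg]
    simp only [h1]
    rw [Finset.sum_comm]
    simp only [E_orth, sub_eq_zero]
    rw [← Finset.sum_filter]
    simp [mul_comm]
  exact_mod_cast h

lemma orth4 {τ τ' υ : Type*} (T : Finset τ) (T' : Finset τ') (V : Finset υ)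
    (n : τ → Fin k → ZMod N) (n' : τ' → Fin k → ZMod N) (m : υ → Fin k → ZMod N)
    (h : ∀ t ∈ T, ∀ t' ∈ T', ∀ v ∈ V, ∀ v' ∈ V, n t + m v ≠ n' t' + m v') :
    ∑ α : Fin k → ZMod N, (∑ t ∈ T, E α (n t)) * (starRingEnd ℂ) (∑ t ∈ T', E α (n' t)) *
      ((‖∑ v ∈ V, E α (m v)‖ : ℝ) : ℂ) ^ 2 = 0 := by
  have h1 : ∀ α : Fin k → ZMod N, (∑ t ∈ T, E α (n t)) * (starRingEnd ℂ) (∑ t ∈ T', E α (n' t)) *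
      ((‖∑ v ∈ V, E α (m v)‖ : ℝ) : ℂ) ^ 2 =
      ∑ t ∈ T, ∑ t' ∈ T', ∑ v ∈ V, ∑ v' ∈ V, E α (n t + m v - (n' t' + m v')) := by
    intro α
    rw [← Complex.mul_conj', map_sum, map_sum, Finset.sum_mul_sum, Finset.sum_mul_sum,
      Finset.sum_mul]
    refine Finset.sum_congr rfl fun t _ => ?_
    rw [Finset.sum_mul]
    refine Finset.sum_congr rfl fun t' _ => ?_
    rw [Finset.mul_sum]
    refine Finset.sum_congr rfl fun v _ => ?_
    rw [Finset.mul_sum]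
    refine Finset.sum_congr rfl fun v' _ => ?_
    rw [sub_eq_add_neg, E_add, E_add, E_neg, E_add, map_mul]
    ring
  simp only [h1]
  rw [Finset.sum_comm]
  refine Finset.sum_eq_zero fun t ht => ?_
  rw [Finset.sum_comm]
  refine Finset.sum_eq_zero fun t' ht' => ?_
  rw [Finset.sum_comm]
  refine Finset.sum_eq_zero fun v hv => ?_
  rw [Finset.sum_comm]
  refine Finset.sum_eq_zero fun v' hv' => ?_
  rw [E_orth, if_neg]
  exact sub_ne_zero.2 (h t ht t' ht' v hv v' hv')

def gam (N k : ℕ) (x : ℕ) : Fin k → ZMod N := fun j => (x : ZMod N) ^ ((j : ℕ) + 1)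

noncomputable def f (A : Finset ℕ) (α : Fin k → ZMod N) : ℂ := ∑ x ∈ A, E α (gam N k x)

lemma prod_f {ι : Type*} [Fintype ι] [DecidableEq ι] (A : ι → Finset ℕ) (α : Fin k → ZMod N) :
    ∏ i, f (A i) α = ∑ t ∈ Fintype.piFinset A, E α (∑ i, gam N k (t i)) := by
  simp only [f, Finset.prod_univ_sum, E_sum]

/-- equality mod `N` is equality of integers when `N` is large -/
lemma gam_eq {ι : Type*} [Fintype ι] (X : ℕ) (hN : Fintype.card ι * X ^ k < N)
    (x y : ι → ℕ) (hx : ∀ i, x i < X) (hy : ∀ i, y i < X)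
    (h : ∑ i, gam N k (x i) = ∑ i, gam N k (y i)) :
    ∀ j, 1 ≤ j → j ≤ k → ∑ i, (x i : ℤ) ^ j = ∑ i, (y i : ℤ) ^ j := by
  intro j hj hjk
  have h1 := congrFun h ⟨j - 1, by omega⟩
  simp only [Finset.sum_apply, gam, Nat.sub_add_cancel hj] at h1
  have hb : ∀ x : ι → ℕ, (∀ i, x i < X) → ∑ i, x i ^ j < N := by
    intro x hx
    refine lt_of_le_of_lt ?_ hN
    calc ∑ i, x i ^ j ≤ ∑ _i : ι, X ^ k := Finset.sum_le_sum fun i _ => by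
          calc x i ^ j ≤ X ^ j := Nat.pow_le_pow_left (hx i).le _
            _ ≤ X ^ k := Nat.pow_le_pow_right (by have := hx i; omega) hjk
      _ = _ := by simp
  have h2 : ((∑ i, x i ^ j : ℕ) : ZMod N) = ((∑ i, y i ^ j : ℕ) : ZMod N) := by
    push_cast; exact h1
  rw [ZMod.natCast_eq_natCast_iff] at h2
  have := Nat.ModEq.eq_of_lt_of_lt h2 (hb x hx) (hb y hy)
  exact_mod_cast this

/-- average over `(ℤ/N)^k` -/
noncomputable def av (g : (Fin k → ZMod N) → ℝ) : ℝ := (∑ α, g α) / (N : ℝ) ^ k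

lemma Npos : (0 : ℝ) < (N : ℝ) ^ k := by
  have : 0 < N := Nat.pos_of_ne_zero (NeZero.ne N)
  positivity

lemma av_mono {g h : (Fin k → ZMod N) → ℝ} (hgh : ∀ α, g α ≤ h α) : av g ≤ av h := by
  unfold av
  exact div_le_div_of_nonneg_right (Finset.sum_le_sum fun α _ => hgh α) Npos.le

lemma av_nonneg {g : (Fin k → ZMod N) → ℝ} (h : ∀ α, 0 ≤ g α) : 0 ≤ av g :=
  div_nonneg (Finset.sum_nonneg fun α _ => h α) Npos.le

lemma av_add (g h : (Fin k → ZMod N) → ℝ) : av (fun α => g α + h α) = av g + av h := by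
  simp only [av, Finset.sum_add_distrib, add_div]

lemma av_mul (c : ℝ) (g : (Fin k → ZMod N) → ℝ) : av (fun α => c * g α) = c * av g := by
  simp only [av, ← Finset.mul_sum, mul_div_assoc]

lemma av_sum {ι : Type*} (S : Finset ι) (g : ι → (Fin k → ZMod N) → ℝ) :
    av (fun α => ∑ i ∈ S, g i α) = ∑ i ∈ S, av (g i) := by
  simp only [av]
  rw [Finset.sum_comm, Finset.sum_div]

lemma av_sum_le {ι : Type*} (S : Finset ι) (g : ι → (Fin k → ZMod N) → ℝ) (B : ℝ)
    (h : ∀ i ∈ S, av (g i) ≤ B) : av (fun α => ∑ i ∈ S, g i α) ≤ S.card * B := by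
  rw [av_sum, ← nsmul_eq_mul]
  exact Finset.sum_le_card_nsmul _ _ _ h

/-- Hölder's inequality, with exponents `θ` and `1-θ`. -/
lemma av_holder (g h : (Fin k → ZMod N) → ℝ) (hg : ∀ α, 0 ≤ g α) (hh : ∀ α, 0 ≤ h α)
    (θ : ℝ) (h0 : 0 < θ) (h1 : θ < 1) :
    av (fun α => g α ^ θ * h α ^ (1 - θ)) ≤ av g ^ θ * av h ^ (1 - θ) := by
  have hpq : (1 / θ).HolderConjugate (1 / (1 - θ)) := by
    rw [Real.holderConjugate_iff]
    refine ⟨by rw [lt_div_iff₀ h0]; linarith, by simp⟩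
  have := Real.inner_le_Lp_mul_Lq_of_nonneg (Finset.univ : Finset (Fin k → ZMod N))
    (f := fun α => g α ^ θ) (g := fun α => h α ^ (1 - θ)) hpq
    (fun α _ => Real.rpow_nonneg (hg α) _) (fun α _ => Real.rpow_nonneg (hh α) _)
  have h1' : (1 - θ) ≠ 0 := by linarith
  simp only [one_div, inv_inv] at this
  have e1 : ∀ α, (g α ^ θ) ^ θ⁻¹ = g α := fun α => by
    rw [← Real.rpow_mul (hg α), mul_inv_cancel₀ h0.ne', Real.rpow_one]
  have e2 : ∀ α, (h α ^ (1 - θ)) ^ (1 - θ)⁻¹ = h α := fun α => by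
    rw [← Real.rpow_mul (hh α), mul_inv_cancel₀ h1', Real.rpow_one]
  simp only [e1, e2] at this
  unfold av
  have hN := Npos (N := N) (k := k)
  rw [Real.div_rpow (Finset.sum_nonneg fun α _ => hg α) hN.le,
    Real.div_rpow (Finset.sum_nonneg fun α _ => hh α) hN.le, div_mul_div_comm,
    ← Real.rpow_add hN]
  simp only [add_sub_cancel, Real.rpow_one]
  exact div_le_div_of_nonneg_right this hN.le

end
end VMV

namespace VMV
open Finset

/-- residue class mod `p^a` inside `[0,p^M)` -/
def Cls (p M a ξ : ℕ) : Finset ℕ := (range (p ^ M)).filter (fun x => x ≡ ξ [MOD p ^ a])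

lemma mem_Cls {p M a ξ x : ℕ} : x ∈ Cls p M a ξ ↔ x < p ^ M ∧ x ≡ ξ [MOD p ^ a] := by
  simp [Cls]

lemma card_Cls {p M a ξ : ℕ} (hp : 0 < p) (h : a ≤ M) : (Cls p M a ξ).card ≤ p ^ (M - a) := by
  have hpa : 0 < p ^ a := by positivity
  calc (Cls p M a ξ).card ≤ (range (p ^ (M - a))).card := by
        refine Finset.card_le_card_of_injOn (fun x : ℕ => x / p ^ a) ?_ ?_
        · intro x hx
          have := (mem_Cls.1 hx).1
          simp only [coe_range, Set.mem_Iio]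
          rw [Nat.div_lt_iff_lt_mul hpa, ← pow_add, Nat.sub_add_cancel h]
          exact this
        · intro x hx y hy hxy
          have h1 := (mem_Cls.1 hx).2
          have h2 := (mem_Cls.1 hy).2
          have h3 : x % p ^ a = y % p ^ a := h1.trans h2.symm
          simp only at hxy
          rw [← Nat.div_add_mod x (p ^ a), ← Nat.div_add_mod y (p ^ a), h3, hxy]
    _ = _ := by simp

lemma biUnion_Cls {p M a b ξ : ℕ} (hp : 0 < p) (hab : a ≤ b) :
    (Cls p b a ξ).biUnion (fun ρ => Cls p M b ρ) = Cls p M a ξ := by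
  ext x
  simp only [mem_biUnion, mem_Cls]
  constructor
  · rintro ⟨ρ, ⟨_, h1⟩, h2, h3⟩
    exact ⟨h2, (h3.of_dvd (pow_dvd_pow p hab)).trans h1⟩
  · rintro ⟨h1, h2⟩
    refine ⟨x % p ^ b, ⟨Nat.mod_lt _ (by positivity), ?_⟩, h1, ?_⟩
    · exact ((Nat.mod_modEq x (p ^ b)).of_dvd (pow_dvd_pow p hab)).trans h2
    · exact (Nat.mod_modEq x (p ^ b)).symm

section
variable {N k : ℕ} [NeZero N]

/-- exponential sum over a class -/
noncomputable def F (p M a ξ : ℕ) (α : Fin k → ZMod N) : ℂ := f (Cls p M a ξ) α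

lemma F_split {p M a b ξ : ℕ} (hp : 0 < p) (hab : a ≤ b) (α : Fin k → ZMod N) :
    F p M a ξ α = ∑ ρ ∈ Cls p b a ξ, F p M b ρ α := by
  unfold F f
  rw [← biUnion_Cls (M := M) hp hab, Finset.sum_biUnion]
  intro x hx y hy hxy
  simp only [Function.onFun]
  rw [Finset.disjoint_left]
  intro z hz hz'
  apply hxy
  have h1 := (mem_Cls.1 hz).2
  have h2 := (mem_Cls.1 hz').2
  exact Nat.ModEq.eq_of_lt_of_lt (h1.symm.trans h2) (mem_Cls.1 hx).1 (mem_Cls.1 hy).1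

noncomputable def G (p M a : ℕ) (ξ : Fin k → ℕ) (α : Fin k → ZMod N) : ℂ :=
  ∏ i, F p M (a + 1) (ξ i) α

/-- `k`-tuples congruent mod `p^a` and distinct mod `p^(a+1)` -/
def Trans (p a : ℕ) (ξ : Fin k → ℕ) : Prop :=
  (∀ i j, ξ i ≡ ξ j [MOD p ^ a]) ∧ ∀ i j, ξ i ≡ ξ j [MOD p ^ (a + 1)] → i = j

lemma av_F {p M a ξ r : ℕ} (hp : 0 < p) (ha : a ≤ M) (hN : r * (p ^ M) ^ k < N) :
    av (fun α : Fin k → ZMod N => ‖F p M a ξ α‖ ^ (2 * r)) ≤ J r k (p ^ (M - a)) := by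
  have h1 : ∀ α : Fin k → ZMod N, ‖F p M a ξ α‖ ^ (2 * r) =
      ‖∑ t ∈ Fintype.piFinset (fun _ : Fin r => Cls p M a ξ), E α (∑ i, gam N k (t i))‖ ^ 2 := by
    intro α
    rw [← prod_f]
    simp [F, ← pow_mul, mul_comm]
  simp only [h1]
  unfold av
  rw [second_moment, mul_div_cancel_left₀ _ Npos.ne']
  norm_cast
  have hpa : 0 < p ^ a := by positivity
  have key : ∀ x ∈ Cls p M a ξ, ξ % p ^ a ≤ x ∧ p ^ a ∣ x - ξ % p ^ a ∧
      (x - ξ % p ^ a) / p ^ a < p ^ (M - a) := by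
    intro x hx
    obtain ⟨h1, h2⟩ := mem_Cls.1 hx
    have h3 : x % p ^ a = ξ % p ^ a := h2
    rw [← h3]
    refine ⟨Nat.mod_le _ _, Nat.dvd_sub_mod x, ?_⟩
    rw [Nat.div_lt_iff_lt_mul hpa, ← pow_add, Nat.sub_add_cancel ha]
    exact lt_of_le_of_lt (Nat.sub_le _ _) h1
  refine card_le_J _ (p ^ a) (ξ % p ^ a) hpa ?_ ?_ ?_
  · intro z hz i
    simp only [mem_filter, mem_product, Fintype.mem_piFinset] at hz
    exact key _ (hz.1.1 i)
  · intro z hz i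
    simp only [mem_filter, mem_product, Fintype.mem_piFinset] at hz
    exact key _ (hz.1.2 i)
  · intro z hz
    simp only [mem_filter, mem_product, Fintype.mem_piFinset] at hz
    exact gam_eq (p ^ M) (by simpa using hN) _ _ (fun i => (mem_Cls.1 (hz.1.1 i)).1)
      (fun i => (mem_Cls.1 (hz.1.2 i)).1) hz.2

lemma prod_le_sum_pow (hk : 0 < k) (y : Fin k → ℝ) (hy : ∀ i, 0 ≤ y i) :
    ∏ i, y i ≤ ∑ i, y i ^ k := by
  haveI : Nonempty (Fin k) := ⟨⟨0, hk⟩⟩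
  obtain ⟨i, _, hi⟩ := Finset.exists_max_image (univ : Finset (Fin k)) y univ_nonempty
  calc ∏ j, y j ≤ ∏ _j : Fin k, y i := Finset.prod_le_prod (fun j _ => hy j) hi
    _ = y i ^ k := by simp
    _ ≤ _ := Finset.single_le_sum (f := fun i => y i ^ k) (fun j _ => pow_nonneg (hy j) _) (mem_univ i)

lemma av_G {p M a : ℕ} {ξ : Fin k → ℕ} (hk : 0 < k) (hp : 0 < p) (ha : a + 1 ≤ M)
    (hN : (k * (k + 1)) * (p ^ M) ^ k < N) :
    av (fun α : Fin k → ZMod N => ‖G p M a ξ α‖ ^ (2 * (k + 1))) ≤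
      k * J (k * (k + 1)) k (p ^ (M - (a + 1))) := by
  have h1 : ∀ α : Fin k → ZMod N, ‖G p M a ξ α‖ ^ (2 * (k + 1)) ≤
      ∑ i, ‖F p M (a + 1) (ξ i) α‖ ^ (2 * (k * (k + 1))) := by
    intro α
    unfold G
    rw [norm_prod, ← Finset.prod_pow]
    refine (prod_le_sum_pow hk _ fun i => by positivity).trans (le_of_eq ?_)
    refine Finset.sum_congr rfl fun i _ => ?_
    rw [← pow_mul]; ring_nf
  refine (av_mono h1).trans ?_
  have := av_sum_le (univ : Finset (Fin k)) (fun i (α : Fin k → ZMod N) =>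
    ‖F p M (a + 1) (ξ i) α‖ ^ (2 * (k * (k + 1)))) _ (fun i _ => av_F hp ha hN)
  simpa using this

/-- Broad–narrow decomposition. -/
lemma broad_narrow (k p n : ℕ) (hk : 0 < k) (hp : 0 < p) (hn : 0 < n) (S : Finset ℕ)
    (hS : S.card ≤ p) (z : ℕ → ℂ) :
    ‖∑ ζ ∈ S, z ζ‖ ^ (k * n) ≤ (2 * k : ℝ) ^ (k * n) * ∑ ζ ∈ S, ‖z ζ‖ ^ (k * n) +
      (2 * p : ℝ) ^ (k * n) * ∑ ζ ∈ (Fintype.piFinset (fun _ : Fin k => S)).filter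
        (fun ζ => ∀ i j, ζ i = ζ j → i = j), (∏ i, ‖z (ζ i)‖) ^ n := by
  classical
  set A := ‖∑ ζ ∈ S, z ζ‖ with hA
  have hp' : (0 : ℝ) < p := by exact_mod_cast hp
  have hk' : (0 : ℝ) < k := by exact_mod_cast hk
  have hA0 : 0 ≤ A := norm_nonneg _
  set T := S.filter (fun ζ => A ≤ 2 * p * ‖z ζ‖) with hT
  have n1 : 0 ≤ ∑ ζ ∈ S, ‖z ζ‖ ^ (k * n) := by positivity
  have n2 : 0 ≤ ∑ ζ ∈ (Fintype.piFinset (fun _ : Fin k => S)).filter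
        (fun ζ => ∀ i j, ζ i = ζ j → i = j), (∏ i, ‖z (ζ i)‖) ^ n := by positivity
  by_cases hc : k ≤ T.card
  · have : ∃ ζ : Fin k → ℕ, Function.Injective ζ ∧ ∀ i, ζ i ∈ T := by
      obtain ⟨U, hU, hUc⟩ := Finset.exists_subset_card_eq hc
      exact ⟨fun i => (U.equivFin.symm (Fin.cast hUc.symm i) : U).1,
        fun i j hij => by simpa [Fin.ext_iff] using hij,
        fun i => hU (Subtype.property _)⟩
    obtain ⟨ζ, hζ, hζT⟩ := this
    have h1 : A ^ (k * n) ≤ (2 * p : ℝ) ^ (k * n) * (∏ i, ‖z (ζ i)‖) ^ n := by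
      rw [pow_mul, pow_mul, ← mul_pow]
      refine pow_le_pow_left₀ (by positivity) ?_ _
      calc A ^ k = ∏ _i : Fin k, A := by simp
        _ ≤ ∏ i, (2 * p * ‖z (ζ i)‖) := Finset.prod_le_prod (fun _ _ => hA0)
            fun i _ => (mem_filter.1 (hζT i)).2
        _ = _ := by rw [Finset.prod_mul_distrib]; simp
    have h2 : (∏ i, ‖z (ζ i)‖) ^ n ≤ ∑ ζ ∈ (Fintype.piFinset (fun _ : Fin k => S)).filter
        (fun ζ => ∀ i j, ζ i = ζ j → i = j), (∏ i, ‖z (ζ i)‖) ^ n := by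
      refine Finset.single_le_sum (f := fun ζ : Fin k → ℕ => (∏ i, ‖z (ζ i)‖) ^ n)
        (fun _ _ => by positivity) ?_
      simp only [mem_filter, Fintype.mem_piFinset]
      exact ⟨fun i => (mem_filter.1 (hζT i)).1, fun i j h => hζ h⟩
    calc A ^ (k * n) ≤ _ := h1
      _ ≤ (2 * p : ℝ) ^ (k * n) * _ := mul_le_mul_of_nonneg_left h2 (by positivity)
      _ ≤ _ := le_add_of_nonneg_left (by positivity)
  · push Not at hc
    have h1 : A ≤ 2 * ∑ ζ ∈ T, ‖z ζ‖ := by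
      have e1 : A ≤ ∑ ζ ∈ T, ‖z ζ‖ + ∑ ζ ∈ S.filter (fun ζ => ¬ A ≤ 2 * p * ‖z ζ‖), ‖z ζ‖ := by
        rw [hT, Finset.sum_filter_add_sum_filter_not]
        exact norm_sum_le _ _
      have e2 : ∑ ζ ∈ S.filter (fun ζ => ¬ A ≤ 2 * p * ‖z ζ‖), ‖z ζ‖ ≤ A / 2 := by
        calc _ ≤ (S.filter (fun ζ => ¬ A ≤ 2 * p * ‖z ζ‖)).card • (A / (2 * p)) := by
              refine Finset.sum_le_card_nsmul _ _ _ fun ζ hζ => ?_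
              have := (mem_filter.1 hζ).2
              push Not at this
              rw [le_div_iff₀ (by positivity)]
              linarith
          _ ≤ p * (A / (2 * p)) := by
              rw [nsmul_eq_mul]
              refine mul_le_mul_of_nonneg_right ?_ (by positivity)
              exact_mod_cast (Finset.card_filter_le _ _).trans hS
          _ = A / 2 := by field_simp
      linarith
    have h2 : A ^ (k * n) ≤ (2 * k : ℝ) ^ (k * n) * ∑ ζ ∈ S, ‖z ζ‖ ^ (k * n) := by
      rcases T.eq_empty_or_nonempty with he | hne
      · rw [he] at h1
        have : A = 0 := le_antisymm (by simpa using h1) hA0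
        rw [this, zero_pow (by positivity)]
        positivity
      · obtain ⟨ζ, hζ, hmax⟩ := Finset.exists_max_image T (fun ζ => ‖z ζ‖) hne
        have h3 : A ≤ 2 * k * ‖z ζ‖ := by
          have : ∑ ζ ∈ T, ‖z ζ‖ ≤ k * ‖z ζ‖ := by
            refine (Finset.sum_le_card_nsmul _ _ _ hmax).trans ?_
            rw [nsmul_eq_mul]
            refine mul_le_mul_of_nonneg_right ?_ (by positivity)
            exact_mod_cast hc.le
          linarith
        calc A ^ (k * n) ≤ (2 * k * ‖z ζ‖) ^ (k * n) := pow_le_pow_left₀ hA0 h3 _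
          _ = (2 * k : ℝ) ^ (k * n) * ‖z ζ‖ ^ (k * n) := mul_pow _ _ _
          _ ≤ _ := mul_le_mul_of_nonneg_left (Finset.single_le_sum
              (f := fun ζ => ‖z ζ‖ ^ (k * n)) (fun _ _ => by positivity) (mem_filter.1 hζ).1) (by positivity)
    exact h2.trans (le_add_of_nonneg_right (by positivity))

/-- Schur test. -/
lemma schur {σ : Type*} [DecidableEq σ] (R : Finset σ) (g : σ → (Fin k → ZMod N) → ℂ)
    (W : (Fin k → ZMod N) → ℝ) (hW : ∀ α, 0 ≤ W α) (rel : σ → σ → Prop) [DecidableRel rel]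
    (hsymm : ∀ x y, rel x y → rel y x)
    (h0 : ∀ ρ ∈ R, ∀ ρ' ∈ R, ¬ rel ρ ρ' →
      ∑ α, g ρ α * (starRingEnd ℂ) (g ρ' α) * (W α : ℂ) = 0)
    (B : ℕ) (hB : ∀ ρ ∈ R, (R.filter (rel ρ)).card ≤ B) :
    av (fun α => ‖∑ ρ ∈ R, g ρ α‖ ^ 2 * W α) ≤
      B * ∑ ρ ∈ R, av (fun α => ‖g ρ α‖ ^ 2 * W α) := by
  set I : σ → ℝ := fun ρ => ∑ α, ‖g ρ α‖ ^ 2 * W α with hI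
  have hI0 : ∀ ρ, 0 ≤ I ρ := fun ρ => Finset.sum_nonneg fun α _ => mul_nonneg (by positivity) (hW α)
  have main : ∑ α, ‖∑ ρ ∈ R, g ρ α‖ ^ 2 * W α ≤ B * ∑ ρ ∈ R, I ρ := by
    have e1 : ((∑ α, ‖∑ ρ ∈ R, g ρ α‖ ^ 2 * W α : ℝ) : ℂ) =
        ∑ ρ ∈ R, ∑ ρ' ∈ R.filter (rel ρ), ∑ α, g ρ α * (starRingEnd ℂ) (g ρ' α) * (W α : ℂ) := by
      have a1 : ((∑ α, ‖∑ ρ ∈ R, g ρ α‖ ^ 2 * W α : ℝ) : ℂ) =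
        ∑ ρ ∈ R, ∑ ρ' ∈ R, ∑ α, g ρ α * (starRingEnd ℂ) (g ρ' α) * (W α : ℂ) := by
        push_cast
        have : ∀ α, ((‖∑ ρ ∈ R, g ρ α‖ : ℝ) : ℂ) ^ 2 * (W α : ℂ) =
            ∑ ρ ∈ R, ∑ ρ' ∈ R, g ρ α * (starRingEnd ℂ) (g ρ' α) * (W α : ℂ) := by
          intro α
          rw [← Complex.mul_conj', map_sum, Finset.sum_mul_sum, Finset.sum_mul]
          refine Finset.sum_congr rfl fun ρ _ => ?_
          rw [Finset.sum_mul]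
        simp only [this]
        rw [Finset.sum_comm]
        refine Finset.sum_congr rfl fun ρ _ => ?_
        rw [Finset.sum_comm]
      rw [a1]
      refine Finset.sum_congr rfl fun ρ hρ => ?_
      rw [Finset.sum_filter]
      refine Finset.sum_congr rfl fun ρ' hρ' => ?_
      split_ifs with h
      · rfl
      · exact h0 ρ hρ ρ' hρ' h
    have nn : 0 ≤ ∑ α, ‖∑ ρ ∈ R, g ρ α‖ ^ 2 * W α :=
      Finset.sum_nonneg fun α _ => mul_nonneg (by positivity) (hW α)
    have e2 : ∑ α, ‖∑ ρ ∈ R, g ρ α‖ ^ 2 * W α =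
        ‖((∑ α, ‖∑ ρ ∈ R, g ρ α‖ ^ 2 * W α : ℝ) : ℂ)‖ := by
      rw [Complex.norm_real, Real.norm_of_nonneg nn]
    rw [e2, e1]
    have e3 : ∀ ρ ρ', ‖∑ α, g ρ α * (starRingEnd ℂ) (g ρ' α) * (W α : ℂ)‖ ≤
        (I ρ + I ρ') / 2 := by
      intro ρ ρ'
      refine (norm_sum_le _ _).trans ?_
      rw [hI, ← Finset.sum_add_distrib, Finset.sum_div]
      refine Finset.sum_le_sum fun α _ => ?_
      rw [norm_mul, norm_mul, RCLike.norm_conj, Complex.norm_real, Real.norm_of_nonneg (hW α)]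
      nlinarith [mul_nonneg (sq_nonneg (‖g ρ α‖ - ‖g ρ' α‖)) (hW α)]
    calc _ ≤ ∑ ρ ∈ R, ∑ ρ' ∈ R.filter (rel ρ), (I ρ + I ρ') / 2 := by
          refine (norm_sum_le _ _).trans (Finset.sum_le_sum fun ρ _ => ?_)
          exact (norm_sum_le _ _).trans (Finset.sum_le_sum fun ρ' _ => e3 ρ ρ')
      _ = (∑ ρ ∈ R, ∑ ρ' ∈ R.filter (rel ρ), I ρ + ∑ ρ ∈ R, ∑ ρ' ∈ R.filter (rel ρ), I ρ') / 2 := by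
          rw [← Finset.sum_add_distrib, Finset.sum_div]
          refine Finset.sum_congr rfl fun ρ _ => ?_
          rw [← Finset.sum_add_distrib, Finset.sum_div]
      _ = (∑ ρ ∈ R, ∑ ρ' ∈ R.filter (rel ρ), I ρ + ∑ ρ ∈ R, ∑ ρ' ∈ R.filter (rel ρ), I ρ) / 2 := by
          congr 2
          simp only [Finset.sum_filter]
          rw [Finset.sum_comm]
          refine Finset.sum_congr rfl fun ρ _ => Finset.sum_congr rfl fun ρ' _ => ?_
          have : rel ρ ρ' ↔ rel ρ' ρ := ⟨hsymm _ _, hsymm _ _⟩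
          simp [this]
      _ = ∑ ρ ∈ R, ∑ ρ' ∈ R.filter (rel ρ), I ρ := by ring
      _ ≤ ∑ ρ ∈ R, B * I ρ := by
          refine Finset.sum_le_sum fun ρ hρ => ?_
          rw [Finset.sum_const, nsmul_eq_mul]
          exact mul_le_mul_of_nonneg_right (by exact_mod_cast hB ρ hρ) (hI0 ρ)
      _ = _ := by rw [Finset.mul_sum]
  unfold av
  rw [← Finset.sum_div, ← mul_div_assoc]
  exact div_le_div_of_nonneg_right main Npos.le

end
end VMV

namespace VMV
open Finset

section
variable {N k : ℕ} [NeZero N]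

/-- congruence relation on tuples -/
def Rel (p b : ℕ) (η : ℤ) (ρ ρ' : Fin k → ℕ) : Prop :=
  ∀ j, 1 ≤ j → j ≤ k → (p : ℤ) ^ (j * b) ∣ ∑ i, ((ρ i : ℤ) - η) ^ j - ∑ i, ((ρ' i : ℤ) - η) ^ j

lemma Rel.symm {p b : ℕ} {η : ℤ} {ρ ρ' : Fin k → ℕ} (h : Rel p b η ρ ρ') : Rel p b η ρ' ρ := by
  intro j h1 h2
  rw [← dvd_neg, neg_sub]; exact h j h1 h2

lemma Rel.trans {p b : ℕ} {η : ℤ} {ρ ρ' ρ'' : Fin k → ℕ} (h : Rel p b η ρ ρ')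
    (h' : Rel p b η ρ' ρ'') : Rel p b η ρ ρ'' := by
  intro j h1 h2
  have := dvd_add (h j h1 h2) (h' j h1 h2)
  simpa using this

lemma dvd_pow_sub {p b j : ℕ} {x y η : ℤ} (h : (p : ℤ) ^ (j * b) ∣ x - y) :
    (p : ℤ) ^ (j * b) ∣ (x - η) ^ j - (y - η) ^ j := by
  refine dvd_trans h ?_
  have := sub_dvd_pow_sub_pow (x - η) (y - η) j
  simpa using this

lemma stepA_raw {p M a b : ℕ} (hp : p.Prime) (hk2 : 2 ≤ k) (hkp : k < p) (hb : 1 ≤ b)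
    (hab : k * a ≤ b) (hbM : k * b ≤ M) (hN : (k * (k + 1)) * (p ^ M) ^ k < N)
    {ξ η : Fin k → ℕ} (hξ : Trans p a ξ) (hη : Trans p b η) :
    av (fun α : Fin k → ZMod N => ‖G p M a ξ α‖ ^ 2 * ‖G p M b η α‖ ^ (2 * k)) ≤
      (p ^ ((∑ j ∈ range k, j) * (a + b)) : ℕ) *
      ∑ ρ ∈ Fintype.piFinset (fun i => Cls p (k * b) (a + 1) (ξ i)),
        av (fun α : Fin k → ZMod N => ‖∏ i, F p M (k * b) (ρ i) α‖ ^ 2 * ‖G p M b η α‖ ^ (2 * k)) := by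
  classical
  have ha1 : a + 1 ≤ k * b := by nlinarith
  have hab' : a ≤ b := by nlinarith
  obtain ⟨η0, hη0⟩ : ∃ η0 : ℤ, η0 = ((η ⟨0, by omega⟩ : ℕ) : ℤ) := ⟨_, rfl⟩
  have hG : ∀ α : Fin k → ZMod N, G p M a ξ α =
      ∑ ρ ∈ Fintype.piFinset (fun i => Cls p (k * b) (a + 1) (ξ i)),
        ∏ i, F p M (k * b) (ρ i) α := by
    intro α
    unfold G
    rw [← Finset.prod_univ_sum (fun i => Cls p (k * b) (a + 1) (ξ i))
      (fun _ x => F p M (k * b) x α)]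
    exact Finset.prod_congr rfl fun i _ => F_split hp.pos ha1 α
  simp only [hG]
  refine schur _ (fun (ρ : Fin k → ℕ) (α : Fin k → ZMod N) => ∏ i, F p M (k * b) (ρ i) α)
    (fun α => ‖G p M b η α‖ ^ (2 * k)) (fun α => by positivity) (Rel p b η0)
    (fun _ _ => Rel.symm) ?_ _ ?_
  · intro ρ hρ ρ' hρ' hrel
    have hW : ∀ α : Fin k → ZMod N, (((‖G p M b η α‖ ^ (2 * k) : ℝ)) : ℂ) =
        ((‖∑ v ∈ Fintype.piFinset (fun z : Fin k × Fin k => Cls p M (b + 1) (η z.2)),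
          E α (∑ i, gam N k (v i))‖ : ℝ) : ℂ) ^ 2 := by
      intro α
      rw [← prod_f, Fintype.prod_prod_type]
      have : ∏ i : Fin k, ∏ y : Fin k, f (Cls p M (b + 1) (η (i, y).2)) α = (G p M b η α) ^ k := by
        simp [G, F]
      rw [this, norm_pow]
      push_cast
      rw [← pow_mul, mul_comm]
    simp only [hW]
    simp only [F, prod_f]
    refine orth4 _ _ _ _ _ _ ?_
    intro t ht t' ht' v hv v' hv' heq
    apply hrel
    simp only [Fintype.mem_piFinset, mem_Cls] at ht ht' hv hv'
    have h1 := gam_eq (N := N) (k := k) (ι := Fin k ⊕ (Fin k × Fin k)) (p ^ M)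
      (by simp only [Fintype.card_sum, Fintype.card_prod, Fintype.card_fin]
          convert hN using 2; ring)
      (Sum.elim t v) (Sum.elim t' v')
      (by rintro (i | i); exacts [(ht i).1, (hv i).1])
      (by rintro (i | i); exacts [(ht' i).1, (hv' i).1])
      (by simpa [Fintype.sum_sum_type] using heq)
    intro j hj1 hjk
    have h2 := shift_dvd (ι := Fin k ⊕ (Fin k × Fin k)) (fun i => ((Sum.elim t v i : ℕ) : ℤ))
      (fun i => ((Sum.elim t' v' i : ℕ) : ℤ)) 0 (-η0) k
      (fun j h h' => by rw [h1 j h h']; simp) j hjk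
    have h3 := sub_eq_zero.1 (zero_dvd_iff.1 h2)
    rw [Fintype.sum_sum_type, Fintype.sum_sum_type] at h3
    simp only [Sum.elim_inl, Sum.elim_inr, ← sub_eq_add_neg] at h3
    have hv0 : ∀ w : Fin k × Fin k → ℕ,
        (∀ a : Fin k × Fin k, w a < p ^ M ∧ w a ≡ η a.2 [MOD p ^ (b + 1)]) →
        (p : ℤ) ^ (j * b) ∣ ∑ i, ((w i : ℤ) - η0) ^ j := by
      intro w hw
      refine Finset.dvd_sum fun i _ => ?_
      rw [mul_comm j b, pow_mul]
      refine pow_dvd_pow_of_dvd ?_ j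
      have e1 : w i ≡ η ⟨0, by omega⟩ [MOD p ^ b] :=
        ((hw i).2.of_dvd (pow_dvd_pow p (by omega))).trans (hη.1 _ _)
      have := (Nat.modEq_iff_dvd.1 e1.symm)
      push_cast at this
      rw [hη0]
      exact this
    have ht0 : ∀ (w ρ : Fin k → ℕ),
        (∀ a : Fin k, w a < p ^ M ∧ w a ≡ ρ a [MOD p ^ (k * b)]) →
        (p : ℤ) ^ (j * b) ∣ ∑ i, ((w i : ℤ) - η0) ^ j - ∑ i, ((ρ i : ℤ) - η0) ^ j := by
      intro w ρ hw
      rw [← Finset.sum_sub_distrib]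
      refine Finset.dvd_sum fun i _ => dvd_pow_sub ?_
      have e1 : w i ≡ ρ i [MOD p ^ (j * b)] :=
        (hw i).2.of_dvd (pow_dvd_pow p (Nat.mul_le_mul_right b hjk))
      have := (Nat.modEq_iff_dvd.1 e1.symm)
      push_cast at this
      exact this
    have d1 := hv0 v hv
    have d2 := hv0 v' hv'
    have d3 := ht0 t ρ ht
    have d4 := ht0 t' ρ' ht'
    have : ∑ i, ((ρ i : ℤ) - η0) ^ j - ∑ i, ((ρ' i : ℤ) - η0) ^ j =
       (∑ i, ((t' i : ℤ) - η0) ^ j - ∑ i, ((ρ' i : ℤ) - η0) ^ j) -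
        (∑ i, ((t i : ℤ) - η0) ^ j - ∑ i, ((ρ i : ℤ) - η0) ^ j) +
        (∑ i, ((v' i : ℤ) - η0) ^ j - ∑ i, ((v i : ℤ) - η0) ^ j) := by linarith
    rw [this]
    exact dvd_add (dvd_sub d4 d3) (dvd_sub d2 d1)
  · intro ρ hρ
    refine count_sys hp hkp hab' ha1 η0 ξ hξ.1 hξ.2 _ ?_ ?_
    · intro ρ' hρ' i
      have := Fintype.mem_piFinset.1 (mem_filter.1 hρ').1 i
      exact mem_Cls.1 this
    · intro ρ1 h1 ρ2 h2
      exact (Rel.symm (mem_filter.1 h1).2).trans (mem_filter.1 h2).2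

/-- `K_{a,b} ≤ k p^… max_ρ …` -/
lemma stepA {p M a b : ℕ} (hp : p.Prime) (hk2 : 2 ≤ k) (hkp : k < p) (hb : 1 ≤ b)
    (hab : k * a ≤ b) (hbM : k * b ≤ M) (hN : (k * (k + 1)) * (p ^ M) ^ k < N)
    {ξ η : Fin k → ℕ} (hξ : Trans p a ξ) (hη : Trans p b η) (R : ℝ) (hR0 : 0 ≤ R)
    (hR : ∀ ρ, av (fun α : Fin k → ZMod N => ‖F p M (k * b) ρ α‖ ^ (2 * k) *
      ‖G p M b η α‖ ^ (2 * k)) ≤ R) :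
    av (fun α : Fin k → ZMod N => ‖G p M a ξ α‖ ^ 2 * ‖G p M b η α‖ ^ (2 * k)) ≤
      (p : ℝ) ^ ((∑ j ∈ range k, j) * (a + b) + k * (k * b - a - 1)) * (k * R) := by
  have ha1 : a + 1 ≤ k * b := by nlinarith
  refine (stepA_raw hp hk2 hkp hb hab hbM hN hξ hη).trans ?_
  have h1 : ∀ ρ ∈ Fintype.piFinset (fun i => Cls p (k * b) (a + 1) (ξ i)),
      av (fun α : Fin k → ZMod N => ‖∏ i, F p M (k * b) (ρ i) α‖ ^ 2 * ‖G p M b η α‖ ^ (2 * k))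
        ≤ k * R := by
    intro ρ _
    have h1 : ∀ α : Fin k → ZMod N,
        ‖∏ i, F p M (k * b) (ρ i) α‖ ^ 2 * ‖G p M b η α‖ ^ (2 * k) ≤
        ∑ i, ‖F p M (k * b) (ρ i) α‖ ^ (2 * k) * ‖G p M b η α‖ ^ (2 * k) := by
      intro α
      rw [← Finset.sum_mul]
      refine mul_le_mul_of_nonneg_right ?_ (by positivity)
      rw [norm_prod, ← Finset.prod_pow]
      refine (prod_le_sum_pow (by omega) _ fun i => by positivity).trans (le_of_eq ?_)
      refine Finset.sum_congr rfl fun i _ => ?_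
      rw [← pow_mul]
    refine (av_mono h1).trans ?_
    have := av_sum_le (univ : Finset (Fin k)) (fun i (α : Fin k → ZMod N) =>
      ‖F p M (k * b) (ρ i) α‖ ^ (2 * k) * ‖G p M b η α‖ ^ (2 * k)) R (fun i _ => hR (ρ i))
    simpa using this
  have h2 := Finset.sum_le_card_nsmul _ _ _ h1
  rw [nsmul_eq_mul] at h2
  have h3 : ((Fintype.piFinset (fun i => Cls p (k * b) (a + 1) (ξ i))).card : ℝ) ≤
      (p : ℝ) ^ (k * (k * b - a - 1)) := by
    have : (Fintype.piFinset (fun i => Cls p (k * b) (a + 1) (ξ i))).card ≤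
        p ^ (k * (k * b - a - 1)) := by
      rw [Fintype.card_piFinset]
      calc _ ≤ ∏ _i : Fin k, p ^ (k * b - (a + 1)) :=
            Finset.prod_le_prod' fun i _ => card_Cls hp.pos ha1
        _ = _ := by
            rw [Finset.prod_const, ← pow_mul, Finset.card_univ, Fintype.card_fin, mul_comm,
              Nat.sub_sub]
    exact_mod_cast this
  rw [pow_add, mul_assoc]
  push_cast
  refine mul_le_mul_of_nonneg_left ?_ (by positivity)
  exact h2.trans (mul_le_mul_of_nonneg_right h3 (by positivity))

/-- Hölder step B -/
lemma stepB (hk : 2 ≤ k) (u v : (Fin k → ZMod N) → ℂ) :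
    av (fun α => ‖u α‖ ^ (2 * k) * ‖v α‖ ^ (2 * k)) ≤
      (av (fun α => ‖v α‖ ^ 2 * ‖u α‖ ^ (2 * k ^ 2))) ^ (1 / (k : ℝ)) *
      (av (fun α => ‖v α‖ ^ (2 * (k + 1)))) ^ (1 - 1 / (k : ℝ)) := by
  have hk' : (2 : ℝ) ≤ k := by exact_mod_cast hk
  refine le_trans (le_of_eq ?_) (av_holder _ _ (fun α => by positivity) (fun α => by positivity)
    (1 / (k : ℝ)) (by positivity) (by rw [div_lt_one (by linarith)]; linarith))
  congr 1
  funext α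
  rw [Real.mul_rpow (by positivity) (by positivity), ← Real.rpow_natCast ‖v α‖ 2,
    ← Real.rpow_natCast ‖u α‖ (2 * k ^ 2), ← Real.rpow_natCast ‖v α‖ (2 * (k + 1)),
    ← Real.rpow_mul (norm_nonneg _), ← Real.rpow_mul (norm_nonneg _),
    ← Real.rpow_mul (norm_nonneg _), mul_comm (‖v α‖ ^ _), mul_assoc,
    ← Real.rpow_add_of_nonneg (norm_nonneg _) (by positivity), ← Real.rpow_natCast,
    ← Real.rpow_natCast]
  · congr 2
    · push_cast; field_simp
    · push_cast; field_simp; ring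
  · have : (1 : ℝ) / k ≤ 1 := by rw [div_le_one (by linarith)]; linarith
    push_cast
    have : 0 ≤ 1 - (1 : ℝ) / k := by linarith
    positivity

/-- Hölder step D -/
lemma stepD (hk : 2 ≤ k) (u v : (Fin k → ZMod N) → ℂ) :
    av (fun α => ‖v α‖ ^ 2 * ‖u α‖ ^ (2 * k ^ 2)) ≤
      (av (fun α => ‖v α‖ ^ (2 * (k + 1)))) ^ (1 / ((k : ℝ) + 1)) *
      (av (fun α => ‖u α‖ ^ (2 * (k * (k + 1))))) ^ (1 - 1 / ((k : ℝ) + 1)) := by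
  have hk' : (2 : ℝ) ≤ k := by exact_mod_cast hk
  refine le_trans (le_of_eq ?_) (av_holder _ _ (fun α => by positivity) (fun α => by positivity)
    (1 / ((k : ℝ) + 1)) (by positivity) (by rw [div_lt_one (by linarith)]; linarith))
  congr 1
  funext α
  rw [← Real.rpow_natCast ‖v α‖ (2 * (k + 1)),
    ← Real.rpow_natCast ‖u α‖ (2 * (k * (k + 1))), 
    ← Real.rpow_mul (norm_nonneg _), ← Real.rpow_mul (norm_nonneg _), ← Real.rpow_natCast,
    ← Real.rpow_natCast]
  congr 2
  · push_cast; field_simp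
  · push_cast; field_simp; ring

end
end VMV

namespace VMV
open Finset

/-- power bound for the mean value at the critical moment `k(k+1)` -/
def Bd (k : ℕ) (lam A : ℝ) : Prop := ∀ X : ℕ, 1 ≤ X → (J (k * (k + 1)) k X : ℝ) ≤ A * (X : ℝ) ^ lam

lemma mix {c P x y θ : ℝ} (hc : 0 ≤ c) (hP : 0 < P) :
    (c * P ^ x) ^ θ * (c * P ^ y) ^ (1 - θ) = c * P ^ (θ * x + (1 - θ) * y) := by
  rw [Real.mul_rpow hc (by positivity), Real.mul_rpow hc (by positivity), ← Real.rpow_mul hP.le,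
    ← Real.rpow_mul hP.le]
  have : c ^ θ * c ^ (1 - θ) = c := by
    rcases hc.eq_or_lt with rfl | hc
    · rcases eq_or_ne θ 0 with rfl | h
      · simp
      · rw [Real.zero_rpow h]; simp
    · rw [← Real.rpow_add hc]; simp
  calc _ = (c ^ θ * c ^ (1 - θ)) * (P ^ (x * θ) * P ^ (y * (1 - θ))) := by ring
    _ = _ := by rw [this, ← Real.rpow_add hP]; ring_nf

lemma mix_le {c P x y θ u v : ℝ} (hc : 0 ≤ c) (hP : 0 < P) (hu0 : 0 ≤ u) (hv0 : 0 ≤ v)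
    (hu : u ≤ c * P ^ x) (hv : v ≤ c * P ^ y) (h0 : 0 ≤ θ) (h1 : θ ≤ 1) :
    u ^ θ * v ^ (1 - θ) ≤ c * P ^ (θ * x + (1 - θ) * y) := by
  rw [← mix hc hP]
  exact mul_le_mul (Real.rpow_le_rpow hu0 hu h0) (Real.rpow_le_rpow hv0 hv (by linarith))
    (by positivity) (by positivity)

lemma Bd.pow {k : ℕ} {lam A : ℝ} (h : Bd k lam A) {p M e : ℕ} (hp : 0 < p) (he : e ≤ M) :
    (J (k * (k + 1)) k (p ^ (M - e)) : ℝ) ≤ A * (p : ℝ) ^ (lam * (M - e)) := by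
  have := h (p ^ (M - e)) (Nat.one_le_pow _ _ hp)
  refine this.trans (le_of_eq ?_)
  push_cast
  rw [← Real.rpow_natCast, ← Real.rpow_mul (by positivity), Nat.cast_sub he, mul_comm lam]

section
variable {N k : ℕ} [NeZero N]

noncomputable def LL (p M a : ℕ) (ξ : Fin k → ℕ) (b η : ℕ) : ℝ :=
  av (fun α : Fin k → ZMod N => ‖G p M a ξ α‖ ^ 2 * ‖F p M b η α‖ ^ (2 * k ^ 2))

noncomputable def KK (p M a : ℕ) (ξ : Fin k → ℕ) (b : ℕ) (η : Fin k → ℕ) : ℝ :=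
  av (fun α : Fin k → ZMod N => ‖G p M a ξ α‖ ^ 2 * ‖G p M b η α‖ ^ (2 * k))

lemma LL_nonneg {p M a : ℕ} {ξ : Fin k → ℕ} {b η : ℕ} : 0 ≤ LL (N := N) p M a ξ b η :=
  av_nonneg fun α => by positivity

lemma trans_of_mem {p b η : ℕ} {ζ : Fin k → ℕ}
    (h : ζ ∈ (Fintype.piFinset (fun _ : Fin k => Cls p (b + 1) b η)).filter
        (fun ζ => ∀ i j, ζ i = ζ j → i = j)) : Trans p b ζ := by
  simp only [mem_filter, Fintype.mem_piFinset, mem_Cls] at h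
  refine ⟨fun i j => (h.1 i).2.trans (h.1 j).2.symm, fun i j hij => h.2 i j ?_⟩
  exact Nat.ModEq.eq_of_lt_of_lt hij (h.1 i).1 (h.1 j).1

lemma recursion {p M a b : ℕ} (hp : 0 < p) (hk : 0 < k) (ξ : Fin k → ℕ) (R : ℝ) (hR : 0 ≤ R)
    (hK : ∀ ζ : Fin k → ℕ, Trans p b ζ →
      (p : ℝ) ^ (2 * k ^ 2 + k) * KK (N := N) p M a ξ b ζ ≤ R)
    (R' : ℝ) (hR' : 0 ≤ R')
    (hL : ∀ η, (p : ℝ) * LL (N := N) p M a ξ (b + 1) η ≤ R') (η : ℕ) :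
    LL (N := N) p M a ξ b η ≤ (2 * k : ℝ) ^ (2 * k ^ 2) * (R' + R) := by
  have hp' : (0 : ℝ) < p := by exact_mod_cast hp
  have hcard : (Cls p (b + 1) b η).card ≤ p := by
    have := card_Cls (p := p) (M := b + 1) (a := b) (ξ := η) hp (by omega)
    simpa using this
  set T := (Fintype.piFinset (fun _ : Fin k => Cls p (b + 1) b η)).filter
        (fun ζ => ∀ i j, ζ i = ζ j → i = j) with hT
  have hTc : T.card ≤ p ^ k := by
    refine (Finset.card_filter_le _ _).trans ?_
    rw [Fintype.card_piFinset]
    simpa using Nat.pow_le_pow_left hcard k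
  have h1 : ∀ α : Fin k → ZMod N, ‖G p M a ξ α‖ ^ 2 * ‖F p M b η α‖ ^ (2 * k ^ 2) ≤
      (2 * k : ℝ) ^ (2 * k ^ 2) * ∑ ζ ∈ Cls p (b + 1) b η,
        (‖G p M a ξ α‖ ^ 2 * ‖F p M (b + 1) ζ α‖ ^ (2 * k ^ 2)) +
      (2 * p : ℝ) ^ (2 * k ^ 2) * ∑ ζ ∈ T, (‖G p M a ξ α‖ ^ 2 * ‖G p M b ζ α‖ ^ (2 * k)) := by
    intro α
    have := broad_narrow k p (2 * k) hk hp (by omega) (Cls p (b + 1) b η) hcard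
      (fun ζ => F p M (b + 1) ζ α)
    rw [← F_split hp (by omega)] at this
    have e : k * (2 * k) = 2 * k ^ 2 := by ring
    rw [e] at this
    rw [← Finset.mul_sum, ← Finset.mul_sum]
    have h2 := mul_le_mul_of_nonneg_left this (sq_nonneg ‖G p M a ξ α‖)
    refine h2.trans (le_of_eq ?_)
    simp only [G, norm_prod, hT]
    ring
  have h2 := av_mono h1
  rw [av_add, av_mul, av_mul] at h2
  have h3 := av_sum_le (Cls p (b + 1) b η) (fun ζ (α : Fin k → ZMod N) =>
    ‖G p M a ξ α‖ ^ 2 * ‖F p M (b + 1) ζ α‖ ^ (2 * k ^ 2)) (R' / p) (fun ζ _ => by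
      have := hL ζ
      rw [le_div_iff₀ hp', mul_comm]; exact this)
  have h4 := av_sum_le T (fun ζ (α : Fin k → ZMod N) =>
    ‖G p M a ξ α‖ ^ 2 * ‖G p M b ζ α‖ ^ (2 * k)) (R / (p : ℝ) ^ (2 * k ^ 2 + k)) (fun ζ hζ => by
      have := hK ζ (trans_of_mem hζ)
      rw [le_div_iff₀ (by positivity), mul_comm]; exact this)
  have h3' : av (fun α : Fin k → ZMod N => ∑ ζ ∈ Cls p (b + 1) b η,
      ‖G p M a ξ α‖ ^ 2 * ‖F p M (b + 1) ζ α‖ ^ (2 * k ^ 2)) ≤ R' := by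
    refine h3.trans ?_
    calc ((Cls p (b + 1) b η).card : ℝ) * (R' / p) ≤ p * (R' / p) :=
          mul_le_mul_of_nonneg_right (by exact_mod_cast hcard) (by positivity)
      _ = R' := by field_simp
  have h4' : av (fun α : Fin k → ZMod N => ∑ ζ ∈ T,
      ‖G p M a ξ α‖ ^ 2 * ‖G p M b ζ α‖ ^ (2 * k)) ≤ R / (p : ℝ) ^ (2 * k ^ 2) := by
    refine h4.trans ?_
    calc (T.card : ℝ) * (R / (p : ℝ) ^ (2 * k ^ 2 + k)) ≤ (p : ℝ) ^ k * (R / (p : ℝ) ^ (2 * k ^ 2 + k)) :=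
          mul_le_mul_of_nonneg_right (by exact_mod_cast hTc) (by positivity)
      _ = _ := by rw [pow_add]; field_simp
  calc LL (N := N) p M a ξ b η ≤ _ := h2
    _ ≤ (2 * k : ℝ) ^ (2 * k ^ 2) * R' + (2 * p : ℝ) ^ (2 * k ^ 2) * (R / (p : ℝ) ^ (2 * k ^ 2)) :=
        add_le_add (mul_le_mul_of_nonneg_left h3' (by positivity))
          (mul_le_mul_of_nonneg_left h4' (by positivity))
    _ = (2 * k : ℝ) ^ (2 * k ^ 2) * R' + (2 : ℝ) ^ (2 * k ^ 2) * R := by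
        rw [mul_pow 2 (p : ℝ)]; field_simp
    _ ≤ _ := by
        rw [mul_add]
        have hk1 : (1 : ℝ) ≤ k := by exact_mod_cast hk
        have : (2 : ℝ) ^ (2 * k ^ 2) ≤ (2 * k : ℝ) ^ (2 * k ^ 2) :=
          pow_le_pow_left₀ (by norm_num) (by linarith) _
        have := mul_le_mul_of_nonneg_right this hR
        linarith

lemma iterate {p M a : ℕ} (hp : 0 < p) (hk : 0 < k) (ξ : Fin k → ℕ) (H : ℕ) : ∀ (b : ℕ) (R : ℝ), 0 ≤ R →
    (∀ h < H, ∀ ζ : Fin k → ℕ, Trans p (b + h) ζ →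
      (p : ℝ) ^ h * ((p : ℝ) ^ (2 * k ^ 2 + k) * KK (N := N) p M a ξ (b + h) ζ) ≤ R) →
    (∀ η, (p : ℝ) ^ H * LL (N := N) p M a ξ (b + H) η ≤ R) → ∀ η,
    LL (N := N) p M a ξ b η ≤ (2 * (2 * k : ℝ) ^ (2 * k ^ 2)) ^ H * R := by
  have hp' : (0 : ℝ) < p := by exact_mod_cast hp
  have hC1 : (1 : ℝ) ≤ 2 * (2 * k : ℝ) ^ (2 * k ^ 2) := by
    have hk1 : (1 : ℝ) ≤ k := by exact_mod_cast hk
    have : (1 : ℝ) ≤ (2 * k : ℝ) ^ (2 * k ^ 2) := one_le_pow₀ (by linarith)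
    linarith
  induction H with
  | zero =>
    intro b R hR _ h η
    simpa using h η
  | succ H ih =>
    intro b R hR hK hL η
    have h1 := ih (b + 1) (R / p) (by positivity)
      (fun h hh ζ hζ => by
        have := hK (h + 1) (by omega) ζ (by rwa [show b + (h + 1) = b + 1 + h by ring])
        rw [show b + (h + 1) = b + 1 + h by ring] at this
        rw [le_div_iff₀ hp']
        calc _ = _ := ?_
          _ ≤ R := this
        ring)
      (fun η => by
        have := hL η
        rw [show b + (H + 1) = b + 1 + H by ring] at this
        rw [le_div_iff₀ hp']
        calc _ = _ := ?_
          _ ≤ R := this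
        ring)
    have h2 := recursion (N := N) (M := M) (a := a) (b := b) hp hk ξ R hR
      (fun ζ hζ => by simpa using hK 0 (by omega) ζ (by simpa using hζ))
      ((2 * (2 * k : ℝ) ^ (2 * k ^ 2)) ^ H * R) (by positivity)
      (fun η => by
        have := mul_le_mul_of_nonneg_left (h1 η) hp'.le
        refine this.trans (le_of_eq ?_)
        field_simp) η
    refine h2.trans ?_
    have h3 : (1 : ℝ) ≤ (2 * (2 * k : ℝ) ^ (2 * k ^ 2)) ^ H := one_le_pow₀ hC1
    have h4 := mul_le_mul_of_nonneg_right h3 hR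
    have h5 : (0 : ℝ) ≤ (2 * k : ℝ) ^ (2 * k ^ 2) := by positivity
    generalize (2 * k : ℝ) ^ (2 * k ^ 2) = c at *
    rw [pow_succ]
    have h6 := mul_le_mul_of_nonneg_left h4 h5
    linarith

end

/-- the inductive claim -/
def PP (k : ℕ) (lam g : ℝ) (D : ℕ) : Prop := ∀ M : ℕ, ∃ C : ℝ, 0 ≤ C ∧ ∀ p : ℕ, p.Prime → k < p →
  ∀ (N : ℕ) [NeZero N], (k * (k + 1)) * (p ^ M) ^ k < N → ∀ a b : ℕ, 1 ≤ b → k * a ≤ b → D * b ≤ M →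
  ∀ ξ : Fin k → ℕ, Trans p a ξ → ∀ η : ℕ, LL (N := N) p M a ξ b η ≤
    C * (p : ℝ) ^ (lam * M - 2 * k * a - (2 * (k : ℝ) ^ 2 - k * (k + 1) / 2) * b - g * b
      + 2 * (2 * (k : ℝ) ^ 2 + k))

lemma PP_zero {k : ℕ} {lam A : ℝ} (hk : 2 ≤ k) (hA : 0 ≤ A) (hJ : Bd k lam A)
    (hlam : 3 / 2 * (k : ℝ) * (k + 1) ≤ lam) : PP k lam 0 1 := by
  intro M
  refine ⟨k * A, by positivity, ?_⟩
  intro p hp hkp N _ hN a b hb hab hbM ξ hξ η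
  have hk' : (2 : ℝ) ≤ k := by exact_mod_cast hk
  have hp0 : (0 : ℝ) < p := by exact_mod_cast hp.pos
  have hp1 : (1 : ℝ) ≤ p := by exact_mod_cast hp.one_le
  have ha1 : a + 1 ≤ M := by nlinarith
  have hab' : a ≤ b := by nlinarith
  have h1 : av (fun α : Fin k → ZMod N => ‖G p M a ξ α‖ ^ (2 * (k + 1))) ≤
      (k * A) * (p : ℝ) ^ (lam * (M - (a + 1))) := by
    refine (av_G (by omega) hp.pos ha1 hN).trans ?_
    rw [mul_assoc]
    have := hJ.pow hp.pos ha1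
    push_cast at this
    exact mul_le_mul_of_nonneg_left this (by positivity)
  have h2 : av (fun α : Fin k → ZMod N => ‖F p M b η α‖ ^ (2 * (k * (k + 1)))) ≤
      (k * A) * (p : ℝ) ^ (lam * (M - b)) := by
    refine (av_F hp.pos (by omega) hN).trans ?_
    refine (hJ.pow hp.pos (by omega)).trans ?_
    refine mul_le_mul_of_nonneg_right ?_ (by positivity)
    nlinarith
  have h3 := stepD (N := N) hk (F p M b η) (G p M a ξ)
  refine h3.trans ((mix_le (by positivity) hp0 (av_nonneg fun _ => by positivity)
    (av_nonneg fun _ => by positivity) h1 h2 (by positivity)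
    (by rw [div_le_one (by linarith)]; linarith)).trans ?_)
  refine mul_le_mul_of_nonneg_left (Real.rpow_le_rpow_of_exponent_le hp1 ?_) (by positivity)
  have hab'' : (a : ℝ) ≤ b := by exact_mod_cast hab'
  have ha0 : (0 : ℝ) ≤ a := by positivity
  have e1 : 1 / ((k : ℝ) + 1) * (lam * (M - (a + 1))) + (1 - 1 / ((k : ℝ) + 1)) * (lam * (M - b)) =
      lam * M - (lam / (k + 1)) * (a + 1) - k * (lam / (k + 1)) * b := by
    field_simp; ring
  rw [e1]
  have e2 : 3 / 2 * (k : ℝ) ≤ lam / (k + 1) := by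
    rw [le_div_iff₀ (by linarith)]; exact hlam
  have e3 := mul_le_mul_of_nonneg_right e2 (show (0 : ℝ) ≤ a + 1 + k * b by positivity)
  nlinarith [mul_le_mul_of_nonneg_left hab'' (show (0 : ℝ) ≤ k by linarith)]

lemma sum_range_real (k : ℕ) : (((∑ j ∈ range k, j : ℕ)) : ℝ) = k * (k - 1) / 2 := by
  induction k with
  | zero => simp
  | succ n ih => rw [Finset.sum_range_succ]; push_cast at ih ⊢; rw [ih]; ring

lemma expo1 {p k a b' h : ℕ} {x c : ℝ} (hp0 : (0 : ℝ) < p) (ha1 : a + 1 ≤ k * b') :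
    (p : ℝ) ^ h * ((p : ℝ) ^ (2 * k ^ 2 + k) *
      ((p : ℝ) ^ ((∑ j ∈ range k, j) * (a + b') + k * (k * b' - a - 1)) * (k * (c * (p : ℝ) ^ x)))) =
    (k * c) * (p : ℝ) ^ (h + (2 * (k : ℝ) ^ 2 + k) + ((k * (k - 1) / 2) * (a + b') +
      k * (k * b' - a - 1)) + x) := by
  rw [Real.rpow_add hp0, Real.rpow_add hp0, Real.rpow_add hp0, ← Real.rpow_natCast _ h,
    ← Real.rpow_natCast _ (2 * k ^ 2 + k),
    ← Real.rpow_natCast _ ((∑ j ∈ range k, j) * (a + b') + k * (k * b' - a - 1))]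
  have h2 : (((∑ j ∈ range k, j) * (a + b') + k * (k * b' - a - 1) : ℕ) : ℝ) =
      (k * (k - 1) / 2) * (a + b') + k * (k * b' - a - 1) := by
    rw [Nat.sub_sub, Nat.cast_add, Nat.cast_mul, sum_range_real k, Nat.cast_mul, Nat.cast_sub ha1]
    push_cast
    ring
  rw [h2]
  have h3 : ((2 * k ^ 2 + k : ℕ) : ℝ) = 2 * (k : ℝ) ^ 2 + k := by push_cast; ring
  rw [h3]
  ring

lemma expo2 {k a b' h lam η0 g M : ℝ} (hk' : 2 ≤ k) (hη0 : 0 ≤ η0) (hg : 0 ≤ g)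
    (hlam : 3 / 2 * k * (k + 1) + η0 ≤ lam) (hkb : k * a ≤ b') (hh0 : 0 ≤ h) (hb0 : 0 ≤ b') :
    h + (2 * k ^ 2 + k) + ((k * (k - 1) / 2) * (a + b') + k * (k * b' - a - 1)) +
      (1 / k * (lam * M - 2 * k * b' - (2 * k ^ 2 - k * (k + 1) / 2) * (k * b') - g * (k * b')
      + 2 * (2 * k ^ 2 + k)) + (1 - 1 / k) * (lam * (M - (b' + 1)))) ≤
    lam * M - 2 * k * a - (2 * k ^ 2 - k * (k + 1) / 2) * (b' - h) -
      (g + η0 * (1 - 1 / k)) * (b' - h) + 2 * (2 * k ^ 2 + k) := by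
  have hk1 : (0 : ℝ) ≤ 1 - 1 / k := by
    rw [sub_nonneg, div_le_one (by linarith)]; linarith
  have hk0 : k ≠ 0 := by linarith
  have e2 : (1 / k * (lam * M - 2 * k * b' - (2 * k ^ 2 - k * (k + 1) / 2) * (k * b') - g * (k * b')
      + 2 * (2 * k ^ 2 + k)) + (1 - 1 / k) * (lam * (M - (b' + 1)))) =
      lam * M - 2 * b' - (2 * k ^ 2 - k * (k + 1) / 2) * b' - g * b'
          + (4 * k + 2) - ((1 - 1 / k) * lam) * (b' + 1) := by
    field_simp; ring
  have e4 : (3 / 2 * (k ^ 2 - 1) + η0 * (1 - 1 / k)) ≤ (1 - 1 / k) * lam := by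
    calc _ = (1 - 1 / k) * (3 / 2 * k * (k + 1) + η0) := by field_simp; ring
      _ ≤ _ := mul_le_mul_of_nonneg_left hlam hk1
  have e5 := mul_le_mul_of_nonneg_right e4 (show (0 : ℝ) ≤ b' + 1 by positivity)
  have e6 := mul_le_mul_of_nonneg_left hkb (show (0 : ℝ) ≤ (k + 1) / 2 by positivity)
  have e7 : 0 ≤ (2 * k ^ 2 - k * (k + 1) / 2 - 1) * h :=
    mul_nonneg (by nlinarith) hh0
  have e9 : 0 ≤ η0 * (1 - 1 / k) := mul_nonneg hη0 hk1
  have e8 : 0 ≤ (g + η0 * (1 - 1 / k)) * h := mul_nonneg (by linarith) hh0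
  rw [e2]
  generalize η0 * (1 - 1 / k) = w at *
  generalize (1 - 1 / k) * lam = y at *
  nlinarith

set_option maxHeartbeats 1000000 in
lemma PP_step {k : ℕ} {lam A η0 g : ℝ} {D Gn : ℕ} (hk : 2 ≤ k) (hA : 0 ≤ A) (hJ : Bd k lam A)
    (hη0 : 0 ≤ η0) (hg : 0 ≤ g) (hD : 1 ≤ D)
    (hlam : 3 / 2 * (k : ℝ) * (k + 1) + η0 ≤ lam) (hG : g + η0 * (1 - 1 / k) ≤ Gn)
    (h : PP k lam g D) : PP k lam (g + η0 * (1 - 1 / k)) (D * k * (1 + Gn)) := by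
  intro M
  obtain ⟨C1, hC1, hP⟩ := h M
  obtain ⟨C2, hC2, hP0⟩ := PP_zero hk hA hJ (by linarith) M
  have hk' : (2 : ℝ) ≤ k := by exact_mod_cast hk
  set c := max C1 (k * A) with hc
  have hc0 : 0 ≤ c := le_max_of_le_left hC1
  set Q := max (k * c) C2 with hQ
  have hQ0 : 0 ≤ Q := le_max_of_le_right hC2
  set C0 := (2 * (2 * k : ℝ) ^ (2 * k ^ 2)) with hC0
  have hC01 : 1 ≤ C0 := by
    have : (1 : ℝ) ≤ (2 * k : ℝ) ^ (2 * k ^ 2) := one_le_pow₀ (by linarith)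
    linarith
  refine ⟨C0 ^ (Gn * M) * Q, by positivity, ?_⟩
  intro p hp hkp N _ hN a b hb hab hbM ξ hξ η
  have hp0 : (0 : ℝ) < p := by exact_mod_cast hp.pos
  have hp1 : (1 : ℝ) ≤ p := by exact_mod_cast hp.one_le
  have hk1 : (0 : ℝ) ≤ 1 - 1 / k := by
    rw [sub_nonneg, div_le_one (by linarith)]; linarith
  set g' := g + η0 * (1 - 1 / k) with hg'
  have hg'0 : 0 ≤ g' := by positivity
  have hDk : 1 ≤ D * k := Nat.one_le_iff_ne_zero.2 (by positivity)
  have hbig : D * k * (b + Gn * b) ≤ M := by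
    calc D * k * (b + Gn * b) = D * k * (1 + Gn) * b := by ring
      _ ≤ M := hbM
  have hbM' : b + Gn * b ≤ M := le_trans (Nat.le_mul_of_pos_left _ hDk) hbig
  have habR : (k : ℝ) * a ≤ b := by exact_mod_cast hab
  set T := lam * M - 2 * k * a - (2 * (k : ℝ) ^ 2 - k * (k + 1) / 2) * b - g' * b
      + 2 * (2 * (k : ℝ) ^ 2 + k) with hT
  have hit := iterate (N := N) (M := M) (a := a) hp.pos (by omega) ξ (Gn * b) b (Q * (p : ℝ) ^ T)
    (by positivity) ?_ ?_ η
  · refine hit.trans ?_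
    rw [mul_assoc]
    refine mul_le_mul_of_nonneg_right ?_ (by positivity)
    refine pow_le_pow_right₀ hC01 ?_
    refine Nat.mul_le_mul_left _ ?_
    nlinarith
  · intro h hh ζ hζ
    set b' := b + h with hb'
    have hb'1 : 1 ≤ b' := by omega
    have hb'2 : D * k * b' ≤ M := le_trans (Nat.mul_le_mul_left _ (by omega)) hbig
    have hkb' : k * b' ≤ M := by
      calc k * b' ≤ D * k * b' := by
            refine Nat.mul_le_mul_right _ ?_
            nlinarith
        _ ≤ M := hb'2
    have hb'M : b' + 1 ≤ M := by nlinarith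
    have hA1 := stepA (N := N) hp hk hkp hb'1 (by omega : k * a ≤ b') hkb' hN hξ hζ
      (c * (p : ℝ) ^ (1 / (k : ℝ) * (lam * M - 2 * k * b' - (2 * (k : ℝ) ^ 2 - k * (k + 1) / 2) * ((k : ℝ) * b') - g * ((k : ℝ) * b')
      + 2 * (2 * (k : ℝ) ^ 2 + k)) + (1 - 1 / (k : ℝ)) * (lam * (M - (b' + 1))))) (by positivity) ?_
    · change _ * (_ * KK (N := N) p M a ξ b' ζ) ≤ _
      have hA2 := mul_le_mul_of_nonneg_left (mul_le_mul_of_nonneg_left hA1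
        (show (0 : ℝ) ≤ (p : ℝ) ^ (2 * k ^ 2 + k) by positivity)) (show (0 : ℝ) ≤ (p : ℝ) ^ h by positivity)
      refine hA2.trans ?_
      have ha1 : a + 1 ≤ k * b' := by nlinarith
      set x := 1 / (k : ℝ) * (lam * M - 2 * k * b' - (2 * (k : ℝ) ^ 2 - k * (k + 1) / 2) * ((k : ℝ) * b') - g * ((k : ℝ) * b')
      + 2 * (2 * (k : ℝ) ^ 2 + k)) + (1 - 1 / (k : ℝ)) * (lam * (M - (b' + 1))) with hx
      rw [expo1 hp0 ha1]
      refine mul_le_mul (le_max_left _ _) (Real.rpow_le_rpow_of_exponent_le hp1 ?_)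
        (by positivity) hQ0
      have hh0 : (0 : ℝ) ≤ h := by positivity
      have hbb : (b : ℝ) = b' - h := by rw [hb']; push_cast; ring
      have hkb : (k : ℝ) * a ≤ b' := by rw [hb']; push_cast; linarith
      rw [hT, hbb, hx]
      exact expo2 hk' hη0 hg hlam hkb hh0 (by positivity)
    · intro ρ
      refine (stepB hk (F p M (k * b') ρ) (G p M b' ζ)).trans ?_
      refine mix_le hc0 hp0 (av_nonneg fun _ => by positivity) (av_nonneg fun _ => by positivity)
        ?_ ?_ (by positivity) (by linarith)
      · have := hP p hp hkp N hN b' (k * b') (by nlinarith) le_rfl (by rw [← mul_assoc]; exact hb'2) ζ hζ ρ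
        refine this.trans ?_
        push_cast
        exact mul_le_mul_of_nonneg_right (le_max_left _ _) (by positivity)
      · refine (av_G (by omega) hp.pos hb'M hN).trans ?_
        have := mul_le_mul_of_nonneg_left (hJ.pow hp.pos hb'M) (show (0 : ℝ) ≤ k by positivity)
        refine this.trans ?_
        rw [← mul_assoc]
        push_cast
        exact mul_le_mul_of_nonneg_right (le_max_right _ _) (by positivity)
  · intro η'
    have := hP0 p hp hkp N hN a (b + Gn * b) (by omega) (by omega) (by omega) ξ hξ η'
    have h2 := mul_le_mul_of_nonneg_left this (show (0 : ℝ) ≤ (p : ℝ) ^ (Gn * b) by positivity)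
    refine h2.trans ?_
    rw [mul_left_comm, ← Real.rpow_natCast, ← Real.rpow_add hp0]
    refine mul_le_mul (le_max_right _ _) (Real.rpow_le_rpow_of_exponent_le hp1 ?_)
        (by positivity) hQ0
    push_cast
    have hb0 : (0 : ℝ) ≤ b := by positivity
    have e1 := mul_le_mul_of_nonneg_right hG hb0
    have e2 : 0 ≤ (2 * (k : ℝ) ^ 2 - k * (k + 1) / 2 - 2) * (Gn * b) :=
        mul_nonneg (by nlinarith) (by positivity)
    rw [hT]
    nlinarith

end VMV

namespace VMV
open Finset

section
variable {N k : ℕ} [NeZero N]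

lemma J_le_av {p M r : ℕ} :
    (J r k (p ^ M) : ℝ) ≤ av (fun α : Fin k → ZMod N => ‖F p M 0 0 α‖ ^ (2 * r)) := by
  classical
  have h1 : ∀ α : Fin k → ZMod N, ‖F p M 0 0 α‖ ^ (2 * r) =
      ‖∑ t ∈ Fintype.piFinset (fun _ : Fin r => Cls p M 0 0), E α (∑ i, gam N k (t i))‖ ^ 2 := by
    intro α
    rw [← prod_f]
    simp [F, ← pow_mul, mul_comm]
  simp only [h1]
  unfold av
  rw [second_moment, mul_div_cancel_left₀ _ Npos.ne']
  norm_cast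
  unfold J
  refine Finset.card_le_card_of_injOn
    (fun z : (Fin r → Fin (p ^ M)) × (Fin r → Fin (p ^ M)) =>
      ((fun i => (z.1 i : ℕ) : Fin r → ℕ), (fun i => (z.2 i : ℕ) : Fin r → ℕ))) ?_ ?_
  · intro z hz
    simp only [coe_filter, mem_univ, true_and, Set.mem_ofPred_eq] at hz
    simp only [coe_filter, mem_product, Fintype.mem_piFinset, Set.mem_ofPred_eq, mem_Cls]
    refine ⟨⟨fun i => ⟨(z.1 i).2, ?_⟩, fun i => ⟨(z.2 i).2, ?_⟩⟩, ?_⟩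
    · simp [Nat.modEq_one]
    · simp [Nat.modEq_one]
    · funext j
      have := hz ((j : ℕ) + 1) (by omega) (by have := j.2; omega)
      have h2 := congrArg (Int.cast : ℤ → ZMod N) this
      simp only [Finset.sum_apply, gam]
      push_cast at h2
      exact h2
  · intro z _ w _ hzw
    simp only [Prod.mk.injEq] at hzw
    apply Prod.ext
    · funext i; exact Fin.ext (congrFun hzw.1 i)
    · funext i; exact Fin.ext (congrFun hzw.2 i)

lemma final_step {p M : ℕ} (hp : 0 < p) (hk : 0 < k) (hM : 1 ≤ M)
    (hN : (k * (k + 1)) * (p ^ M) ^ k < N) (B : ℝ) (hB0 : 0 ≤ B)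
    (hB : ∀ ξ : Fin k → ℕ, Trans p 0 ξ → ∀ η, LL (N := N) p M 0 ξ 1 η ≤ B) :
    (J (k * (k + 1)) k (p ^ M) : ℝ) ≤
      (2 * k : ℝ) ^ (2 * (k * (k + 1))) * (p * J (k * (k + 1)) k (p ^ (M - 1))) +
      (2 * p : ℝ) ^ (2 * (k * (k + 1))) * ((p : ℝ) ^ k * (k * B)) := by
  refine (J_le_av (N := N)).trans ?_
  have hcard : (Cls p 1 0 0).card ≤ p := by
    have := card_Cls (p := p) (M := 1) (a := 0) (ξ := 0) hp (by omega)
    simpa using this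
  set T := (Fintype.piFinset (fun _ : Fin k => Cls p 1 0 0)).filter
        (fun ζ => ∀ i j, ζ i = ζ j → i = j) with hT
  have hTc : T.card ≤ p ^ k := by
    refine (Finset.card_filter_le _ _).trans ?_
    rw [Fintype.card_piFinset]
    simpa using Nat.pow_le_pow_left hcard k
  have h1 : ∀ α : Fin k → ZMod N, ‖F p M 0 0 α‖ ^ (2 * (k * (k + 1))) ≤
      (2 * k : ℝ) ^ (2 * (k * (k + 1))) * ∑ ζ ∈ Cls p 1 0 0, ‖F p M 1 ζ α‖ ^ (2 * (k * (k + 1))) +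
      (2 * p : ℝ) ^ (2 * (k * (k + 1))) * ∑ ζ ∈ T, ∑ i,
        ‖G p M 0 ζ α‖ ^ 2 * ‖F p M 1 (ζ i) α‖ ^ (2 * k ^ 2) := by
    intro α
    have := broad_narrow k p (2 * (k + 1)) hk hp (by omega) (Cls p 1 0 0) hcard
      (fun ζ => F p M 1 ζ α)
    rw [← F_split hp (by omega)] at this
    have e : k * (2 * (k + 1)) = 2 * (k * (k + 1)) := by ring
    rw [e] at this
    refine this.trans ?_
    refine add_le_add le_rfl (mul_le_mul_of_nonneg_left (Finset.sum_le_sum fun ζ _ => ?_) (by positivity))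
    rw [← Finset.mul_sum]
    have e2 : (∏ i, ‖F p M 1 (ζ i) α‖) = ‖G p M 0 ζ α‖ := by simp [G, norm_prod]
    rw [e2, show 2 * (k + 1) = 2 + 2 * k by ring, pow_add]
    refine mul_le_mul_of_nonneg_left ?_ (by positivity)
    rw [← e2, ← Finset.prod_pow]
    refine (prod_le_sum_pow hk _ fun i => by positivity).trans (le_of_eq ?_)
    refine Finset.sum_congr rfl fun i _ => ?_
    rw [← pow_mul]; ring_nf
  have h2 := av_mono h1
  rw [av_add, av_mul, av_mul] at h2
  refine h2.trans ?_
  refine add_le_add (mul_le_mul_of_nonneg_left ?_ (by positivity)) (mul_le_mul_of_nonneg_left ?_ (by positivity))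
  · refine (av_sum_le _ _ _ fun ζ _ => av_F hp hM hN).trans ?_
    exact mul_le_mul_of_nonneg_right (by exact_mod_cast hcard) (by positivity)
  · have h3 := av_sum_le T (fun ζ (α : Fin k → ZMod N) => ∑ i,
        ‖G p M 0 ζ α‖ ^ 2 * ‖F p M 1 (ζ i) α‖ ^ (2 * k ^ 2)) (k * B) (fun ζ hζ => by
      have := av_sum_le (univ : Finset (Fin k)) (fun i (α : Fin k → ZMod N) =>
        ‖G p M 0 ζ α‖ ^ 2 * ‖F p M 1 (ζ i) α‖ ^ (2 * k ^ 2)) B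
        (fun i _ => hB ζ (trans_of_mem hζ) (ζ i))
      simpa using this)
    refine h3.trans ?_
    exact mul_le_mul_of_nonneg_right (by exact_mod_cast hTc) (by positivity)

end

lemma PP_exists {k : ℕ} (hk : 2 ≤ k) {η0 : ℝ} (hη0 : 0 ≤ η0) (n : ℕ) :
    ∃ D : ℕ, 1 ≤ D ∧ ∀ lam A : ℝ, 0 ≤ A → Bd k lam A → 3 / 2 * (k : ℝ) * (k + 1) + η0 ≤ lam →
      PP k lam (n * (η0 * (1 - 1 / k))) D := by
  have hk' : (2 : ℝ) ≤ k := by exact_mod_cast hk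
  have hk1 : (0 : ℝ) ≤ 1 - 1 / k := by
    rw [sub_nonneg, div_le_one (by linarith)]; linarith
  induction n with
  | zero =>
    refine ⟨1, le_rfl, fun lam A hA hJ hlam => ?_⟩
    have := PP_zero hk hA hJ (by linarith)
    simpa using this
  | succ n ih =>
    obtain ⟨D, hD, h⟩ := ih
    obtain ⟨Gn, hG⟩ := exists_nat_ge ((n : ℝ) * (η0 * (1 - 1 / k)) + η0 * (1 - 1 / k))
    refine ⟨D * k * (1 + Gn), Nat.one_le_iff_ne_zero.2 (by positivity), fun lam A hA hJ hlam => ?_⟩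
    have := PP_step hk hA hJ hη0 (by positivity) hD hlam hG (h lam A hA hJ hlam)
    convert this using 1
    push_cast; ring

lemma improve {k : ℕ} (hk : 2 ≤ k) {η0 : ℝ} (hη0 : 0 < η0) :
    ∃ M : ℕ, 1 ≤ M ∧ ∀ lam : ℝ, 3 / 2 * (k : ℝ) * (k + 1) + η0 ≤ lam →
      (∃ A, 0 ≤ A ∧ Bd k lam A) → ∃ A, 0 ≤ A ∧ Bd k (lam - 1 / M) A := by
  have hk' : (2 : ℝ) ≤ k := by exact_mod_cast hk
  have hk1 : (0 : ℝ) < 1 - 1 / k := by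
    rw [sub_pos, div_lt_one (by linarith)]; linarith
  obtain ⟨n, hn⟩ := exists_nat_ge
    ((2 * (k * (k + 1)) + k + 2 * (2 * (k : ℝ) ^ 2 + k) + 1) / (η0 * (1 - 1 / k)))
  rw [div_le_iff₀ (by positivity)] at hn
  obtain ⟨M, hM, hPP⟩ := PP_exists hk hη0.le n
  refine ⟨M, hM, ?_⟩
  rintro lam hlam ⟨A, hA, hJ⟩
  obtain ⟨C, hC, hP⟩ := hPP lam A hA hJ hlam M
  set g := (n : ℝ) * (η0 * (1 - 1 / k)) with hg
  have hlam2 : 2 ≤ lam := by nlinarith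
  have hMR : (1 : ℝ) ≤ M := by exact_mod_cast hM
  -- bound at prime powers
  set C' := (2 * k : ℝ) ^ (2 * (k * (k + 1))) * A + 2 ^ (2 * (k * (k + 1))) * (k * C) with hC'
  have hC'0 : 0 ≤ C' := by positivity
  have main : ∀ p : ℕ, p.Prime → k < p →
      (J (k * (k + 1)) k (p ^ M) : ℝ) ≤ C' * (p : ℝ) ^ (lam * M - 1) := by
    intro p hp hkp
    have hp0 : (0 : ℝ) < p := by exact_mod_cast hp.pos
    have hp1 : (1 : ℝ) ≤ p := by exact_mod_cast hp.one_le
    set N := (k * (k + 1)) * (p ^ M) ^ k + 1 with hN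
    haveI : NeZero N := ⟨by omega⟩
    have h1 := final_step (N := N) (k := k) hp.pos (by omega) hM (by omega)
      (C * (p : ℝ) ^ (lam * (M : ℝ) - 2 * k * ((0 : ℕ) : ℝ) - (2 * (k : ℝ) ^ 2 - k * (k + 1) / 2) * ((1 : ℕ) : ℝ)
        - g * ((1 : ℕ) : ℝ) + 2 * (2 * (k : ℝ) ^ 2 + k))) (by positivity)
      (fun ξ hξ η => hP p hp hkp N (by omega) 0 1 le_rfl (by omega) (by omega) ξ hξ η)
    refine h1.trans ?_
    have e0 : C' * (p : ℝ) ^ (lam * M - 1) = (2 * k : ℝ) ^ (2 * (k * (k + 1))) *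
        (A * (p : ℝ) ^ (lam * M - 1)) +
        2 ^ (2 * (k * (k + 1))) * ((k * C) * (p : ℝ) ^ (lam * M - 1)) := by rw [hC']; ring
    rw [e0]
    refine add_le_add (mul_le_mul_of_nonneg_left ?_ (by positivity)) ?_
    · have h2 := hJ.pow hp.pos hM
      calc (p : ℝ) * (J (k * (k + 1)) k (p ^ (M - 1)) : ℝ) ≤ p * (A * (p : ℝ) ^ (lam * (M - (1 : ℕ)))) :=
            mul_le_mul_of_nonneg_left h2 hp0.le
        _ = A * (p : ℝ) ^ (1 + lam * (M - (1 : ℕ))) := by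
            rw [Real.rpow_add hp0, Real.rpow_one]; ring
        _ ≤ _ := by
            refine mul_le_mul_of_nonneg_left (Real.rpow_le_rpow_of_exponent_le hp1 ?_) hA
            push_cast; nlinarith
    · set x := lam * (M : ℝ) - 2 * k * ((0 : ℕ) : ℝ) - (2 * (k : ℝ) ^ 2 - k * (k + 1) / 2) * ((1 : ℕ) : ℝ) - g * ((1 : ℕ) : ℝ)
        + 2 * (2 * (k : ℝ) ^ 2 + k) with hx
      have e1 : (2 * p : ℝ) ^ (2 * (k * (k + 1))) * ((p : ℝ) ^ k * (k * (C * (p : ℝ) ^ x))) =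
          2 ^ (2 * (k * (k + 1))) * ((k * C) * (p : ℝ) ^ ((2 * (k * (k + 1)) : ℝ) + k + x)) := by
        clear_value x
        rw [Real.rpow_add hp0 _ x, Real.rpow_add hp0 _ (k : ℝ), mul_pow,
          Real.rpow_natCast, show (2 * ((k : ℝ) * (k + 1))) = ((2 * (k * (k + 1)) : ℕ) : ℝ) by push_cast; ring,
          Real.rpow_natCast]
        ring
      rw [e1]
      refine mul_le_mul_of_nonneg_left (mul_le_mul_of_nonneg_left
        (Real.rpow_le_rpow_of_exponent_le hp1 ?_) (by positivity)) (by positivity)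
      rw [hx]; push_cast
      nlinarith
  refine ⟨C' * (4 * k : ℝ) ^ (lam * M - 1), by positivity, ?_⟩
  intro X hX
  have hXR : (1 : ℝ) ≤ X := by exact_mod_cast hX
  set y := (X : ℝ) ^ (1 / (M : ℝ)) with hy
  have hy1 : 1 ≤ y := Real.one_le_rpow hXR (by positivity)
  set m := ⌈y⌉₊ with hm
  have hm1 : 1 ≤ m := Nat.one_le_ceil_iff.2 (by linarith)
  have hkm : k * m ≠ 0 := by positivity
  obtain ⟨p, hp, hp1, hp2⟩ := Nat.exists_prime_lt_and_le_two_mul (k * m) hkm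
  have hkp : k < p := lt_of_le_of_lt (Nat.le_mul_of_pos_right _ hm1) hp1
  have hyp : y ≤ p := by
    calc y ≤ m := Nat.le_ceil _
      _ ≤ p := by
        have : m ≤ p := (Nat.le_mul_of_pos_left _ (by omega)).trans hp1.le
        exact_mod_cast this
  have hXp : X ≤ p ^ M := by
    have : (X : ℝ) ≤ (p : ℝ) ^ M := by
      calc (X : ℝ) = y ^ M := by
            rw [hy, ← Real.rpow_natCast, ← Real.rpow_mul (by positivity), one_div,
              inv_mul_cancel₀ (by positivity), Real.rpow_one]
        _ ≤ _ := pow_le_pow_left₀ (by positivity) hyp _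
    exact_mod_cast this
  have hpy : (p : ℝ) ≤ 4 * k * y := by
    have e1 : (m : ℝ) ≤ 2 * y := by
      have := Nat.ceil_lt_add_one (show 0 ≤ y by linarith)
      rw [← hm] at this; linarith
    have e2 : (p : ℝ) ≤ 2 * (k * m) := by exact_mod_cast hp2
    nlinarith
  have h1 : (J (k * (k + 1)) k X : ℝ) ≤ J (k * (k + 1)) k (p ^ M) := by exact_mod_cast J_mono hXp
  have hexp : 0 ≤ lam * M - 1 := by nlinarith
  refine h1.trans ((main p hp hkp).trans ?_)
  rw [mul_assoc]
  refine mul_le_mul_of_nonneg_left ?_ hC'0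
  calc (p : ℝ) ^ (lam * M - 1) ≤ (4 * k * y) ^ (lam * M - 1) :=
        Real.rpow_le_rpow (by positivity) hpy hexp
    _ = (4 * k : ℝ) ^ (lam * M - 1) * (X : ℝ) ^ (lam - 1 / M) := by
        rw [Real.mul_rpow (by positivity) (by positivity), hy, ← Real.rpow_mul (by positivity)]
        congr 2
        field_simp

/-- Part 1: the mean value estimate with `ε`-loss at the moment `k(k+1)`. -/
theorem part_one {k : ℕ} (hk : 2 ≤ k) {ε : ℝ} (hε : 0 < ε) :
    ∃ A, 0 ≤ A ∧ Bd k (3 / 2 * (k : ℝ) * (k + 1) + ε) A := by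
  obtain ⟨M, hM, himp⟩ := improve hk hε
  have hMR : (1 : ℝ) ≤ M := by exact_mod_cast hM
  set t := 3 / 2 * (k : ℝ) * (k + 1) + ε with ht
  have mono : ∀ l l' : ℝ, l ≤ l' → (∃ A, 0 ≤ A ∧ Bd k l A) → ∃ A, 0 ≤ A ∧ Bd k l' A := by
    rintro l l' hl ⟨A, hA, h⟩
    refine ⟨A, hA, fun X hX => (h X hX).trans (mul_le_mul_of_nonneg_left ?_ hA)⟩
    exact Real.rpow_le_rpow_of_exponent_le (by exact_mod_cast hX) hl
  have start : ∃ A, 0 ≤ A ∧ Bd k (2 * (k * (k + 1) : ℕ) : ℝ) A := by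
    refine ⟨1, zero_le_one, fun X hX => ?_⟩
    have : J (k * (k + 1)) k X ≤ X ^ (2 * (k * (k + 1))) := by
      unfold J
      refine (Finset.card_le_univ _).trans (le_of_eq ?_)
      simp [two_mul, pow_add]
    rw [one_mul]
    calc ((J (k * (k + 1)) k X : ℕ) : ℝ) ≤ ((X ^ (2 * (k * (k + 1))) : ℕ) : ℝ) := by exact_mod_cast this
      _ = _ := by rw [Nat.cast_pow, ← Real.rpow_natCast]; push_cast; rfl
  have step : ∀ n : ℕ, ∃ A, 0 ≤ A ∧ Bd k (max t (2 * (k * (k + 1) : ℕ) - n / M)) A := by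
    intro n
    induction n with
    | zero => exact mono _ _ (by simp) start
    | succ n ih =>
      have := himp _ (le_max_left _ _) ih
      refine mono _ _ ?_ this
      rcases le_total t (2 * ((k * (k + 1) : ℕ) : ℝ) - n / M) with h | h
      · rw [max_eq_right h]
        refine le_max_of_le_right ?_
        push_cast
        rw [add_div]; linarith
      · rw [max_eq_left h]
        refine le_max_of_le_left ?_
        have : (0 : ℝ) ≤ 1 / M := by positivity
        linarith
  obtain ⟨n, hn⟩ := exists_nat_ge ((2 * ((k * (k + 1) : ℕ) : ℝ) - t) * M)
  have := step n
  rwa [max_eq_left] at this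
  rw [sub_le_comm, le_div_iff₀ (by linarith)]
  exact hn

end VMV

namespace VMV
open Finset

/-- Spacing lemma: many `h < N` with `hθ` close to an integer give a good rational
approximation to `θ`. -/
lemma spacing {N A : ℕ} (hA : 1 ≤ A) (hN : 200 * A ^ 2 ≤ N) (θ ε : ℝ) (hε : 0 ≤ ε)
    (hεA : ε * N ≤ A) (H : Finset ℕ) (hH : ∀ h ∈ H, h < N) (hcard : N ≤ A * H.card)
    (c : ℕ → ℤ) (hc : ∀ h ∈ H, |(h : ℝ) * θ - c h| ≤ ε) :
    ∃ d : ℕ, 1 ≤ d ∧ d ≤ 2 * A ∧ ∃ b : ℤ, |(d : ℝ) * θ - b| ≤ 800 * A ^ 3 * ε / N := by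
  have hA2 : A ≤ A ^ 2 := by nlinarith
  have hAR : (1 : ℝ) ≤ A := by exact_mod_cast hA
  have hNR : 200 * (A : ℝ) ^ 2 ≤ N := by exact_mod_cast hN
  have hN0 : (0 : ℝ) < N := by nlinarith
  have diff : ∀ h ∈ H, ∀ h' ∈ H, |((h : ℝ) - h') * θ - ((c h : ℝ) - c h')| ≤ 2 * ε := by
    intro h hh h' hh'
    have h1 := abs_le.1 (hc h hh)
    have h2 := abs_le.1 (hc h' hh')
    rw [abs_le]
    constructor <;> linarith [h1.1, h1.2, h2.1, h2.2]
  -- close pair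
  obtain ⟨d, hd1, hd2, b, hdb⟩ : ∃ d : ℕ, 1 ≤ d ∧ d ≤ 2 * A ∧ ∃ b : ℤ, |(d : ℝ) * θ - b| ≤ 2 * ε := by
    have hlt : (range (N / (2 * A) + 1)).card < H.card := by
      rw [card_range]
      by_contra hcon
      push Not at hcon
      have h1 : A * H.card ≤ A * (N / (2 * A) + 1) := Nat.mul_le_mul_left _ hcon
      have h2 : 2 * A * (N / (2 * A)) ≤ N := Nat.mul_div_le _ _
      nlinarith
    obtain ⟨x, hx, y, hy, hxy, hxy'⟩ := Finset.exists_ne_map_eq_of_card_lt_of_maps_to hlt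
      (f := fun h => h / (2 * A)) (fun h hh => by
        simp only [coe_range, Set.mem_Iio]
        have := Nat.div_le_div_right (c := 2 * A) (hH h hh).le
        omega)
    have key : ∀ x ∈ H, ∀ y ∈ H, y < x → x / (2 * A) = y / (2 * A) →
        ∃ d : ℕ, 1 ≤ d ∧ d ≤ 2 * A ∧ ∃ b : ℤ, |(d : ℝ) * θ - b| ≤ 2 * ε := by
      intro x hx y hy hlt heq
      refine ⟨x - y, by omega, ?_, c x - c y, ?_⟩
      · have h1 := Nat.div_add_mod x (2 * A)
        have h2 := Nat.div_add_mod y (2 * A)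
        have h3 := Nat.mod_lt x (show 2 * A > 0 by omega)
        rw [heq] at h1
        omega
      · have := diff x hx y hy
        push_cast [hlt.le]
        exact this
    rcases lt_or_gt_of_ne hxy with h | h
    · exact key y hy x hx h hxy'.symm
    · exact key x hx y hy h hxy'
  set L := N / (16 * A) with hL
  have hL1 : 16 * A * L ≤ N := Nat.mul_div_le _ _
  have hL2 : N < 16 * A * (L + 1) := by
    have := Nat.lt_mul_div_succ N (show 0 < 16 * A by omega)
    exact this
  have hLA : 1 ≤ L := by
    by_contra hcon
    have : L = 0 := Nat.lt_one_iff.1 (not_le.1 hcon)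
    rw [this] at hL2
    nlinarith
  set W := N / L + 1 with hW
  have hW1 : W ≤ 33 * A := by
    have h1 : N / L ≤ 32 * A := by
      apply Nat.div_le_of_le_mul
      nlinarith
    omega
  set m := N / (33 * A ^ 2) with hm
  have hm1 : 33 * A ^ 2 * m ≤ N := Nat.mul_div_le _ _
  have hm2 : N < 33 * A ^ 2 * (m + 1) := Nat.lt_mul_div_succ N (by positivity)
  have hWm : W * m ≤ H.card := by
    have : A * (W * m) ≤ A * H.card := by
      calc A * (W * m) ≤ A * (33 * A * m) := Nat.mul_le_mul_left _ (Nat.mul_le_mul_right _ hW1)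
        _ = 33 * A ^ 2 * m := by ring
        _ ≤ N := hm1
        _ ≤ _ := hcard
    exact Nat.le_of_mul_le_mul_left this (by omega)
  have hm5 : 5 ≤ m := by
    by_contra hcon
    have : m + 1 ≤ 5 := by omega
    nlinarith
  obtain ⟨y, _, hy⟩ := Finset.exists_le_card_fiber_of_mul_le_card_of_maps_to (s := H)
    (t := range W) (f := fun h => h / L) (n := m) (fun h hh => by
        simp only [mem_range]
        have := Nat.div_le_div_right (c := L) (hH h hh).le
        omega) ⟨0, by simp [hW]⟩ (by rw [card_range]; exact hWm)
  set H' := H.filter (fun h => h / L = y) with hH'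
  have hne : H'.Nonempty := by
    rw [← Finset.card_pos]; omega
  set u := H'.max' hne with hu
  set v := H'.min' hne with hv
  have hu' : u ∈ H' := Finset.max'_mem _ _
  have hv' : v ∈ H' := Finset.min'_mem _ _
  have huv : m ≤ u + 1 - v := by
    calc m ≤ H'.card := hy
      _ ≤ (Finset.Icc v u).card := Finset.card_le_card fun x hx =>
          Finset.mem_Icc.2 ⟨Finset.min'_le _ _ hx, Finset.le_max' _ _ hx⟩
      _ = _ := Nat.card_Icc _ _
  have huH := (Finset.mem_filter.1 hu')
  have hvH := (Finset.mem_filter.1 hv')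
  have huL : u < v + L := by
    have h1 := Nat.div_add_mod u L
    have h2 := Nat.div_add_mod v L
    have h3 := Nat.mod_lt u hLA
    rw [huH.2] at h1
    rw [hvH.2] at h2
    omega
  have hD := diff u huH.1 v hvH.1
  set Δ : ℝ := (u : ℝ) - v with hΔ
  set g : ℤ := c u - c v with hg
  have hD' : |Δ * θ - g| ≤ 2 * ε := by rw [hg]; push_cast; exact hD
  have hΔL : Δ ≤ L := by
    have : (u : ℝ) ≤ v + L := by exact_mod_cast huL.le
    linarith
  have hvu : v ≤ u := Finset.min'_le_max' _ _
  have hΔm : (m : ℝ) - 1 ≤ Δ := by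
    have : m + v ≤ u + 1 := by omega
    have : (m : ℝ) + v ≤ u + 1 := by exact_mod_cast this
    linarith
  have hm5R : (5 : ℝ) ≤ m := by exact_mod_cast hm5
  have hΔpos : 0 < Δ := by linarith
  have hΔN : (N : ℝ) ≤ 200 * A ^ 2 * Δ := by
    have h1 : (N : ℝ) ≤ 33 * A ^ 2 * (m + 1) := by exact_mod_cast hm2.le
    have h2 : (m : ℝ) + 1 ≤ 2 * Δ := by linarith
    nlinarith [sq_nonneg (A : ℝ)]
  have hdR : (d : ℝ) ≤ 2 * A := by exact_mod_cast hd2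
  have hd0 : (1 : ℝ) ≤ d := by exact_mod_cast hd1
  -- d * g = Δ * b
  have heq : (d : ℤ) * g = ((u : ℤ) - v) * b := by
    have h1 : |((d : ℝ) * g - Δ * b)| < 1 := by
      have e1 : (d : ℝ) * g - Δ * b = Δ * (d * θ - b) - d * (Δ * θ - g) := by ring
      rw [e1]
      calc _ ≤ |Δ * (d * θ - b)| + |d * (Δ * θ - g)| := abs_sub _ _
        _ ≤ L * (2 * ε) + (2 * A) * (2 * ε) := by
            rw [abs_mul, abs_mul, abs_of_pos hΔpos, abs_of_nonneg (by linarith : (0 : ℝ) ≤ d)]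
            refine add_le_add (mul_le_mul hΔL hdb (abs_nonneg _) (by positivity))
              (mul_le_mul hdR hD' (abs_nonneg _) (by positivity))
        _ < 1 := by
            have h1 : 16 * (A : ℝ) * L ≤ N := by exact_mod_cast hL1
            have h2 : ε * (16 * (A : ℝ) * L) ≤ A :=
              (mul_le_mul_of_nonneg_left h1 hε).trans hεA
            have h3 : ε * (200 * (A : ℝ) ^ 2) ≤ A :=
              (mul_le_mul_of_nonneg_left hNR hε).trans hεA
            have h4 : 16 * (ε * L) ≤ 1 := by
              by_contra hcon
              push Not at hcon
              nlinarith
            have h5 : 200 * (ε * A) ≤ 1 := by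
              by_contra hcon
              push Not at hcon
              nlinarith
            linarith
    have h2 : |((d : ℤ) * g - ((u : ℤ) - v) * b)| < 1 := by
      have : ((|((d : ℤ) * g - ((u : ℤ) - v) * b)| : ℤ) : ℝ) < 1 := by
        push_cast; exact h1
      exact_mod_cast this
    have := Int.abs_lt_one_iff.1 h2
    linarith
  have heqR : (d : ℝ) * g = Δ * b := by
    have h := congrArg (Int.cast : ℤ → ℝ) heq
    push_cast at h
    exact h
  refine ⟨d, hd1, hd2, b, ?_⟩
  have h1 : Δ * |(d : ℝ) * θ - b| ≤ 2 * A * (2 * ε) := by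
    calc Δ * |(d : ℝ) * θ - b| = |Δ * (d * θ - b)| := by rw [abs_mul, abs_of_pos hΔpos]
      _ = |d * (Δ * θ - g)| := by congr 1; linarith
      _ = d * |Δ * θ - g| := by rw [abs_mul, abs_of_nonneg (by linarith : (0 : ℝ) ≤ d)]
      _ ≤ _ := mul_le_mul hdR hD' (abs_nonneg _) (by positivity)
  rw [le_div_iff₀ hN0]
  calc |(d : ℝ) * θ - b| * N ≤ |(d : ℝ) * θ - b| * (200 * A ^ 2 * Δ) :=
        mul_le_mul_of_nonneg_left hΔN (abs_nonneg _)
    _ = 200 * A ^ 2 * (Δ * |(d : ℝ) * θ - b|) := by ring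
    _ ≤ 200 * A ^ 2 * (2 * A * (2 * ε)) := mul_le_mul_of_nonneg_left h1 (by positivity)
    _ = _ := by ring

/-! ### the exponential -/

lemma e_add (x y : ℝ) : e (x + y) = e x * e y := by
  unfold e; rw [← Complex.exp_add]; congr 1; push_cast; ring

lemma norm_e (x : ℝ) : ‖e x‖ = 1 := by
  unfold e
  rw [show (2 * Real.pi * Complex.I * x : ℂ) = ((2 * Real.pi * x : ℝ) : ℂ) * Complex.I by push_cast; ring]
  exact Complex.norm_exp_ofReal_mul_I _

lemma e_zero : e 0 = 1 := by simp [e]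

lemma e_int (n : ℤ) : e n = 1 := by
  unfold e
  rw [Complex.exp_eq_one_iff]
  exact ⟨n, by push_cast; ring⟩

lemma e_add_int (x : ℝ) (n : ℤ) : e (x + n) = e x := by rw [e_add, e_int, mul_one]

lemma e_neg (x : ℝ) : e (-x) = (starRingEnd ℂ) (e x) := by
  unfold e
  rw [← Complex.exp_conj]
  congr 1
  simp [Complex.conj_ofNat]

lemma e_sub (x y : ℝ) : e (x - y) = e x * (starRingEnd ℂ) (e y) := by
  rw [sub_eq_add_neg, e_add, e_neg]

lemma norm_e_sub_one (x : ℝ) : ‖e x - 1‖ = 2 * |Real.sin (Real.pi * x)| := by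
  unfold e
  rw [show (2 * Real.pi * Complex.I * x : ℂ) = Complex.I * ((2 * Real.pi * x : ℝ) : ℂ) by push_cast; ring,
    Complex.norm_exp_I_mul_ofReal_sub_one, norm_mul, Real.norm_eq_abs, Real.norm_eq_abs]
  norm_num
  congr 1; ring

lemma norm_e_sub (x y : ℝ) : ‖e x - e y‖ ≤ 2 * Real.pi * |x - y| := by
  have h1 : e x - e y = e y * (e (x - y) - 1) := by
    rw [mul_sub, ← e_add]; simp
  rw [h1, norm_mul, norm_e, one_mul, norm_e_sub_one]
  have := Real.abs_sin_le_abs (x := Real.pi * (x - y))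
  rw [abs_mul, abs_of_pos Real.pi_pos] at this
  linarith

lemma e_sub_one_ge (x : ℝ) (hx : |x| ≤ 1 / 2) : 4 * |x| ≤ ‖e x - 1‖ := by
  rw [norm_e_sub_one]
  have h1 : |Real.sin (Real.pi * x)| = Real.sin (Real.pi * |x|) := by
    rcases abs_cases x with ⟨h, h'⟩ | ⟨h, h'⟩
    · rw [h]
      refine abs_of_nonneg (Real.sin_nonneg_of_nonneg_of_le_pi (by positivity) ?_)
      rw [h] at hx; nlinarith [Real.pi_pos]
    · rw [h, mul_neg, Real.sin_neg]
      refine abs_of_nonpos ?_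
      have := Real.sin_nonneg_of_nonneg_of_le_pi (x := Real.pi * (-x))
        (by nlinarith [Real.pi_pos]) (by rw [h] at hx; nlinarith [Real.pi_pos])
      rw [mul_neg, Real.sin_neg] at this; linarith
  rw [h1]
  have h2 := Real.mul_le_sin (x := Real.pi * |x|) (by positivity) (by nlinarith [Real.pi_pos])
  have h3 : 2 / Real.pi * (Real.pi * |x|) = 2 * |x| := by field_simp
  linarith

/-- Weyl–van der Corput differencing -/
lemma weyl_diff (φ : ℕ → ℝ) (N : ℕ) :
    ‖∑ n ∈ range N, e (φ n)‖ ^ 2 ≤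
      2 * ∑ h ∈ range N, ‖∑ n ∈ range (N - h), e (φ (n + h) - φ n)‖ := by
  have h1 : ∀ N : ℕ, ‖∑ n ∈ range N, e (φ n)‖ ^ 2 ≤
      2 * (∑ n ∈ range N, e (φ n) * (starRingEnd ℂ) (∑ m ∈ range (n + 1), e (φ m))).re := by
    intro N
    induction N with
    | zero => simp
    | succ N ih =>
      rw [Finset.sum_range_succ (fun n => e (φ n) * _), Complex.add_re, mul_add]
      rw [Finset.sum_range_succ (fun m => e (φ m)) N]
      set S := ∑ n ∈ range N, e (φ n)
      set z := e (φ N) with hz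
      have hz1 : ‖z‖ = 1 := norm_e _
      have e1 : ‖S + z‖ ^ 2 = ‖S‖ ^ 2 + 2 * (z * (starRingEnd ℂ) S).re + ‖z‖ ^ 2 := by
        simp only [← Complex.normSq_eq_norm_sq, Complex.normSq_apply, Complex.add_re, Complex.add_im,
          Complex.mul_re, Complex.conj_re, Complex.conj_im]
        ring
      have e2 : (z * (starRingEnd ℂ) (S + z)).re = (z * (starRingEnd ℂ) S).re + ‖z‖ ^ 2 := by
        simp only [← Complex.normSq_eq_norm_sq, Complex.normSq_apply, Complex.add_re, Complex.add_im,
          Complex.mul_re, Complex.conj_re, Complex.conj_im]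
        ring
      rw [e1, e2, hz1]
      linarith
  refine (h1 N).trans ?_
  have h2 : ∑ n ∈ range N, e (φ n) * (starRingEnd ℂ) (∑ m ∈ range (n + 1), e (φ m)) =
      ∑ h ∈ range N, ∑ n ∈ range (N - h), e (φ (n + h) - φ n) := by
    rw [← Finset.sum_range_diag_flip N (fun h n => e (φ (n + h) - φ n))]
    refine Finset.sum_congr rfl fun n _ => ?_
    rw [map_sum, Finset.mul_sum, ← Finset.sum_range_reflect]
    refine Finset.sum_congr rfl fun h hh => ?_
    have : h ≤ n := by have := mem_range.1 hh; omega
    rw [e_sub, show n + 1 - 1 - h = n - h by omega, show n - h + h = n by omega]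
  rw [h2]
  have h3 := (Complex.re_le_norm (∑ h ∈ range N, ∑ n ∈ range (N - h), e (φ (n + h) - φ n))).trans
    (norm_sum_le _ _)
  linarith

end VMV

namespace VMV
open Finset

/-- Phases whose `k`-th differences are constant. -/
def Ph : ℕ → ℝ → (ℕ → ℝ) → Prop
  | 0, c, φ => ∀ n, φ n = c
  | k + 1, c, φ => ∀ h : ℕ, Ph k (h * c) (fun n => φ (n + h) - φ n)

lemma norm_sum_e_le (φ : ℕ → ℝ) (s : Finset ℕ) : ‖∑ n ∈ s, e (φ n)‖ ≤ s.card := by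
  refine (norm_sum_le _ _).trans ?_
  simp [norm_e]

/-- The conclusion about the top coefficient. -/
def Lead (k C : ℕ) : Prop :=
  ∀ T N : ℕ, 2 ≤ T → 1 ≤ N → ∀ (c : ℝ) (φ : ℕ → ℝ), Ph k c φ →
    (N : ℝ) ≤ T * ‖∑ n ∈ range N, e (φ n)‖ →
    ∃ q : ℕ, 1 ≤ q ∧ q ≤ T ^ C ∧ ∃ a : ℤ, |(q : ℝ) * c - a| * (N : ℝ) ^ k ≤ (T : ℝ) ^ C

lemma lead_one : Lead 1 1 := by
  intro T N hT hN c φ hφ hS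
  have h1 : ∀ n : ℕ, φ n = φ 0 + n * c := by
    intro n
    have := hφ n 0
    simp only [zero_add] at this
    linarith
  refine ⟨1, le_rfl, by simp; omega, round c, ?_⟩
  have hx := abs_sub_round c
  have hge := e_sub_one_ge (c - round c) hx
  have he : e (c - round c) = e c := by
    have := e_add_int (c - round c) (round c)
    rw [← this]; congr 1; ring
  rw [he] at hge
  have hs : ∑ n ∈ range N, e (φ n) = e (φ 0) * ∑ n ∈ range N, (e c) ^ n := by
    rw [Finset.mul_sum]
    refine Finset.sum_congr rfl fun n _ => ?_
    rw [h1 n, e_add]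
    congr 1
    clear * -
    induction n with
    | zero => simp [e_zero]
    | succ n ih => rw [pow_succ, ← ih, ← e_add]; congr 1; push_cast; ring
  have hg : ‖∑ n ∈ range N, (e c) ^ n‖ * ‖e c - 1‖ ≤ 2 := by
    rw [← norm_mul, geom_sum_mul]
    refine (norm_sub_le _ _).trans ?_
    simp [norm_e]; norm_num
  rw [hs, norm_mul, norm_e, one_mul] at hS
  set S := ‖∑ n ∈ range N, (e c) ^ n‖
  have hS0 : 0 ≤ S := norm_nonneg _
  have hT0 : (0 : ℝ) ≤ T := Nat.cast_nonneg _
  simp only [Nat.cast_one, one_mul, pow_one]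
  have h2 : 4 * |c - round c| * S ≤ 2 := by
    refine le_trans ?_ hg
    rw [mul_comm S]
    exact mul_le_mul_of_nonneg_right hge hS0
  calc |c - round c| * N ≤ |c - round c| * (T * S) := mul_le_mul_of_nonneg_left hS (abs_nonneg _)
    _ = T * (4 * |c - round c| * S) / 4 := by ring
    _ ≤ T * 2 / 4 := by gcongr
    _ ≤ T := by linarith

lemma lead_step {k C : ℕ} (hk : 1 ≤ k) (hL : Lead k C) :
    Lead (k + 1) ((8 + 8 * (C + k + 1)) * (k + 1) + (10 + 16 * (C + k + 1))) := by
  intro T N hT hN c φ hφ hS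
  set D := C + k + 1 with hD
  set C' := (8 + 8 * D) * (k + 1) + (10 + 16 * D) with hC'
  have hTR : (2 : ℝ) ≤ T := by exact_mod_cast hT
  have hT1 : (1 : ℝ) ≤ T := by linarith
  have hN0 : (0 : ℝ) < N := by exact_mod_cast hN
  have hN1 : (1 : ℝ) ≤ N := by exact_mod_cast hN
  set T' := 4 * T ^ 2 with hT'
  have hT'2 : 2 ≤ T' := by nlinarith
  have hT'le : T' ≤ T ^ 4 := by
    calc T' = 4 * T ^ 2 := rfl
      _ ≤ T ^ 2 * T ^ 2 := by gcongr; nlinarith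
      _ = T ^ 4 := by ring
  set A := T' ^ D with hA
  have hA1 : 1 ≤ A := Nat.one_le_pow _ _ (by omega)
  have hAT : A ≤ T ^ (4 * D) := by
    rw [hA, pow_mul]; exact Nat.pow_le_pow_left hT'le _
  have hATR : (A : ℝ) ≤ (T : ℝ) ^ (4 * D) := by exact_mod_cast hAT
  have hAR1 : (1 : ℝ) ≤ A := by exact_mod_cast hA1
  by_cases hbig : 200 * A ^ 2 ≤ N
  swap
  · push Not at hbig
    refine ⟨1, le_rfl, Nat.one_le_pow _ _ (by omega), round c, ?_⟩
    have hx := abs_sub_round c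
    have hNle : (N : ℝ) ≤ (T : ℝ) ^ (8 + 8 * D) := by
      have h1 : (N : ℝ) ≤ 200 * (A : ℝ) ^ 2 := by exact_mod_cast hbig.le
      have h2 : (200 : ℝ) ≤ (T : ℝ) ^ 8 := by
        calc (200 : ℝ) ≤ 2 ^ 8 := by norm_num
          _ ≤ _ := by gcongr
      calc (N : ℝ) ≤ 200 * (A : ℝ) ^ 2 := h1
        _ ≤ (T : ℝ) ^ 8 * ((T : ℝ) ^ (4 * D)) ^ 2 := by gcongr
        _ = _ := by rw [← pow_mul, ← pow_add]; congr 1; ring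
    calc |((1 : ℕ) : ℝ) * c - round c| * (N : ℝ) ^ (k + 1) ≤ 1 * ((T : ℝ) ^ (8 + 8 * D)) ^ (k + 1) := by
          gcongr
          simp only [Nat.cast_one, one_mul]; linarith
      _ = (T : ℝ) ^ ((8 + 8 * D) * (k + 1)) := by rw [one_mul, ← pow_mul]
      _ ≤ _ := pow_le_pow_right₀ hT1 (by omega)
  -- the set of good differences
  set Sh : ℕ → ℝ := fun h => ‖∑ n ∈ range (N - h), e (φ (n + h) - φ n)‖ with hSh
  have hSh_le : ∀ h, Sh h ≤ ((N - h : ℕ) : ℝ) := fun h => by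
    have := norm_sum_e_le (fun n => φ (n + h) - φ n) (range (N - h))
    simpa using this
  have hSh_leN : ∀ h, Sh h ≤ N := fun h => (hSh_le h).trans (by exact_mod_cast Nat.sub_le _ _)
  classical
  set H0 := (range N).filter (fun h => (N : ℝ) ≤ T' * Sh h) with hH0
  have hT'0 : (0 : ℝ) < T' := by exact_mod_cast (by omega : 0 < T')
  have hT'R : (T' : ℝ) = 4 * (T : ℝ) ^ 2 := by rw [hT']; push_cast; ring
  have hH0card : N ≤ T' * H0.card := by
    have h1 := weyl_diff φ N
    have h2 : ∑ h ∈ range N, Sh h ≤ H0.card * N + N * (N / T') := by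
      rw [← Finset.sum_filter_add_sum_filter_not (range N) (fun h => (N : ℝ) ≤ T' * Sh h)]
      refine add_le_add ?_ ?_
      · refine (Finset.sum_le_card_nsmul _ _ _ (fun h _ => hSh_leN h)).trans ?_
        rw [nsmul_eq_mul]
      · refine (Finset.sum_le_card_nsmul _ _ ((N : ℝ) / T') (fun h hh => ?_)).trans ?_
        · have := (mem_filter.1 hh).2
          rw [le_div_iff₀ hT'0]; push Not at this; linarith
        · rw [nsmul_eq_mul]
          refine mul_le_mul_of_nonneg_right ?_ (by positivity)
          exact_mod_cast (card_filter_le _ _).trans (card_range N).le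
    have h3 : (N : ℝ) ^ 2 ≤ T ^ 2 * (2 * (H0.card * N + N * (N / T'))) := by
      calc (N : ℝ) ^ 2 ≤ (T * ‖∑ n ∈ range N, e (φ n)‖) ^ 2 := by gcongr
        _ = T ^ 2 * ‖∑ n ∈ range N, e (φ n)‖ ^ 2 := by ring
        _ ≤ _ := by
          refine mul_le_mul_of_nonneg_left (h1.trans ?_) (by positivity)
          linarith
    have h4 : (T : ℝ) ^ 2 * (2 * (H0.card * N + N * (N / T'))) = 2 * T ^ 2 * H0.card * N + N ^ 2 / 2 := by
      rw [hT'R]; field_simp; ring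
    rw [h4] at h3
    have h5 : (N : ℝ) * N ≤ (T' * H0.card) * N := by rw [hT'R]; nlinarith
    have h6 := le_of_mul_le_mul_right h5 hN0
    exact_mod_cast h6
  -- apply the inductive hypothesis
  have hex : ∀ h, h ∈ H0 → ∃ q : ℕ, (1 ≤ q ∧ q ≤ T' ^ C) ∧ ∃ a : ℤ,
      |(q : ℝ) * (h * c) - a| * (N : ℝ) ^ k ≤ (A : ℝ) := by
    intro h hh
    obtain ⟨hh1, hh2⟩ := mem_filter.1 hh
    have hhN := mem_range.1 hh1
    have hle : ((N - h : ℕ) : ℝ) ≤ T' * Sh h := le_trans (by exact_mod_cast Nat.sub_le _ _) hh2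
    obtain ⟨q, hq1, hq2, a, ha⟩ := hL T' (N - h) hT'2 (by omega) (h * c) _ (hφ h) hle
    refine ⟨q, ⟨hq1, hq2⟩, a, ?_⟩
    have h7 : (N : ℝ) ≤ T' * ((N - h : ℕ) : ℝ) :=
      hh2.trans (mul_le_mul_of_nonneg_left (hSh_le h) hT'0.le)
    have hT'1 : (1 : ℝ) ≤ T' := by exact_mod_cast (by omega : 1 ≤ T')
    calc |(q : ℝ) * (h * c) - a| * (N : ℝ) ^ k ≤ |(q : ℝ) * (h * c) - a| * (T' * ((N - h : ℕ) : ℝ)) ^ k := by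
          gcongr
      _ = (|(q : ℝ) * (h * c) - a| * ((N - h : ℕ) : ℝ) ^ k) * (T' : ℝ) ^ k := by rw [mul_pow]; ring
      _ ≤ (T' : ℝ) ^ C * (T' : ℝ) ^ k := by gcongr
      _ = (T' : ℝ) ^ (C + k) := by rw [pow_add]
      _ ≤ (T' : ℝ) ^ D := pow_le_pow_right₀ hT'1 (by omega)
      _ = A := by rw [hA]; push_cast; rfl
  choose! qf hqf af haf using hex
  obtain ⟨q, hq, hpig⟩ : ∃ q ∈ Icc 1 (T' ^ C), H0.card ≤ (T' ^ C) * (H0.filter (fun h => qf h = q)).card := by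
    by_contra hcon
    push Not at hcon
    have hne : (Icc 1 (T' ^ C)).Nonempty := ⟨1, by simp; exact Nat.one_le_pow _ _ (by omega)⟩
    have h1 := Finset.card_eq_sum_card_fiberwise (f := qf) (s := H0) (t := Icc 1 (T' ^ C))
      (fun h hh => by simpa using hqf h hh)
    have h2 : ∑ q ∈ Icc 1 (T' ^ C), (T' ^ C) * (H0.filter (fun h => qf h = q)).card
        < ∑ q ∈ Icc 1 (T' ^ C), H0.card := Finset.sum_lt_sum_of_nonempty hne hcon
    rw [← Finset.mul_sum, ← h1, Finset.sum_const, smul_eq_mul, Nat.card_Icc] at h2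
    simp at h2
  obtain ⟨hq1, hq2⟩ := mem_Icc.1 hq
  set H := H0.filter (fun h => qf h = q) with hH
  have hε : (0 : ℝ) ≤ A / (N : ℝ) ^ k := by positivity
  have hcardH : N ≤ A * H.card := by
    calc N ≤ T' * H0.card := hH0card
      _ ≤ T' * (T' ^ C * H.card) := by gcongr
      _ = T' ^ (C + 1) * H.card := by ring
      _ ≤ A * H.card := by
        gcongr
        exact Nat.pow_le_pow_right (by omega) (by omega)
  obtain ⟨d, hd1, hd2, b, hb⟩ := spacing hA1 hbig (q * c) (A / (N : ℝ) ^ k) hε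
    (by
      rw [div_mul_eq_mul_div, div_le_iff₀ (by positivity)]
      refine mul_le_mul_of_nonneg_left ?_ (by positivity)
      calc (N : ℝ) = (N : ℝ) ^ 1 := (pow_one _).symm
        _ ≤ _ := pow_le_pow_right₀ hN1 hk) H
    (fun h hh => mem_range.1 (mem_filter.1 (mem_filter.1 hh).1).1) hcardH af
    (fun h hh => by
      obtain ⟨hh0, hhq⟩ := mem_filter.1 hh
      have := haf h hh0
      rw [hhq] at this
      rw [le_div_iff₀ (by positivity)]
      rw [show (h : ℝ) * (q * c) = q * (h * c) by ring]
      exact this)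
  refine ⟨d * q, Nat.mul_pos hd1 hq1, ?_, b, ?_⟩
  · calc d * q ≤ (2 * A) * T' ^ C := Nat.mul_le_mul hd2 hq2
      _ ≤ (2 * A) * A := by gcongr; exact Nat.pow_le_pow_right (by omega) (by omega)
      _ ≤ (T * T ^ (4 * D)) * T ^ (4 * D) := by gcongr
      _ = T ^ (1 + 4 * D + 4 * D) := by rw [pow_add, pow_add, pow_one]
      _ ≤ T ^ C' := Nat.pow_le_pow_right (by omega) (by rw [hC']; nlinarith [Nat.zero_le ((8 + 8 * D) * (k + 1))])
  · have h1 : |((d * q : ℕ) : ℝ) * c - b| * (N : ℝ) ^ (k + 1) ≤ 800 * (A : ℝ) ^ 4 := by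
      calc |((d * q : ℕ) : ℝ) * c - b| * (N : ℝ) ^ (k + 1)
          = |(d : ℝ) * (q * c) - b| * (N : ℝ) ^ (k + 1) := by push_cast; rw [mul_assoc]
        _ ≤ (800 * (A : ℝ) ^ 3 * (A / (N : ℝ) ^ k) / N) * (N : ℝ) ^ (k + 1) := by gcongr
        _ = _ := by field_simp; rw [pow_succ]
    refine h1.trans ?_
    calc 800 * (A : ℝ) ^ 4 ≤ (T : ℝ) ^ 10 * ((T : ℝ) ^ (4 * D)) ^ 4 := by
          gcongr
          calc (800 : ℝ) ≤ 2 ^ 10 := by norm_num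
            _ ≤ _ := by gcongr
      _ = (T : ℝ) ^ (10 + 16 * D) := by rw [← pow_mul, ← pow_add]; congr 1; ring
      _ ≤ _ := pow_le_pow_right₀ hT1 (by omega)

lemma lead_exists (k : ℕ) (hk : 1 ≤ k) : ∃ C, Lead k C := by
  induction k, hk using Nat.le_induction with
  | base => exact ⟨1, lead_one⟩
  | succ k hk ih => obtain ⟨C, hC⟩ := ih; exact ⟨_, lead_step hk hC⟩

end VMV

namespace VMV
open Finset

lemma Ph_add : ∀ (k : ℕ) {c d : ℝ} {φ ψ : ℕ → ℝ}, Ph k c φ → Ph k d ψ →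
    Ph k (c + d) (fun n => φ n + ψ n)
  | 0, c, d, φ, ψ, h1, h2 => fun n => by beta_reduce; rw [h1 n, h2 n]
  | k + 1, c, d, φ, ψ, h1, h2 => fun h => by
    have := Ph_add k (h1 h) (h2 h)
    rw [← mul_add] at this
    convert this using 2
    ring

lemma Ph_smul : ∀ (k : ℕ) {c : ℝ} {φ : ℕ → ℝ} (t : ℝ), Ph k c φ → Ph k (t * c) (fun n => t * φ n)
  | 0, c, φ, t, h1 => fun n => by beta_reduce; rw [h1 n]
  | k + 1, c, φ, t, h1 => fun h => by
    have := Ph_smul k t (h1 h)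
    convert this using 1
    · ring
    · funext n; ring

lemma Ph_zero (k : ℕ) : Ph k 0 (fun _ => 0) := by
  induction k with
  | zero => intro n; rfl
  | succ k ih => intro h; simpa using ih

lemma Ph_sum (k : ℕ) {ι : Type*} (s : Finset ι) (c : ι → ℝ) (φ : ι → ℕ → ℝ)
    (h : ∀ i ∈ s, Ph k (c i) (φ i)) : Ph k (∑ i ∈ s, c i) (fun n => ∑ i ∈ s, φ i n) := by
  classical
  induction s using Finset.induction_on with
  | empty => simpa using Ph_zero k
  | insert a s ha ih =>
    simp only [Finset.sum_insert ha]
    exact Ph_add k (h a (mem_insert_self _ _)) (ih fun i hi => h i (mem_insert_of_mem hi))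

lemma Ph_lower : ∀ (k : ℕ) {c : ℝ} {φ : ℕ → ℝ}, Ph k c φ → Ph (k + 1) 0 φ
  | 0, c, φ, h1 => fun h n => by simp [h1 n, h1 (n + h)]
  | k + 1, c, φ, h1 => fun h => by
    have := Ph_lower k (h1 h)
    simpa using this

lemma Ph_lower_lt {k l : ℕ} (hkl : k < l) {c : ℝ} {φ : ℕ → ℝ} (h : Ph k c φ) : Ph l 0 φ := by
  induction l, hkl using Nat.le_induction with
  | base => exact Ph_lower k h
  | succ l hl ih => exact Ph_lower l ih

lemma Ph_shift : ∀ (k : ℕ) {c : ℝ} {φ : ℕ → ℝ} (m : ℕ), Ph k c φ → Ph k c (fun n => φ (n + m))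
  | 0, c, φ, m, h1 => fun n => h1 _
  | k + 1, c, φ, m, h1 => fun h => by
    have := Ph_shift k m (h1 h)
    convert this using 2
    rw [add_right_comm]

lemma Ph_dilate : ∀ (k : ℕ) {c : ℝ} {φ : ℕ → ℝ} (q : ℕ), Ph k c φ →
    Ph k ((q : ℝ) ^ k * c) (fun n => φ (q * n))
  | 0, c, φ, q, h1 => fun n => by simp [h1 (q * n)]
  | k + 1, c, φ, q, h1 => fun h => by
    have := Ph_dilate k q (h1 (q * h))
    convert this using 1
    · push_cast; ring
    · funext n; beta_reduce; rw [mul_add]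

lemma Ph_pow (k : ℕ) : Ph k (k.factorial : ℝ) (fun n => (n : ℝ) ^ k) := by
  induction k using Nat.strong_induction_on with
  | _ k ih =>
    cases k with
    | zero => intro n; simp
    | succ k =>
      intro h
      have hs := Ph_sum k (range (k + 1))
        (fun i => if i = k then ((k + 1).choose i * (h : ℝ) ^ (k + 1 - i)) * (k.factorial : ℝ) else 0)
        (fun i n => ((k + 1).choose i * (h : ℝ) ^ (k + 1 - i)) * (n : ℝ) ^ i)
        (fun i hi => by
          have hi := mem_range.1 hi
          split_ifs with hik
          · subst hik; exact Ph_smul _ _ (ih i (by omega))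
          · have := Ph_smul k ((k + 1).choose i * (h : ℝ) ^ (k + 1 - i))
              (Ph_lower_lt (l := k) (by omega) (ih i (by omega)))
            simpa using this)
      convert hs using 1
      · rw [Finset.sum_ite_eq' (range (k + 1)) k]
        simp [Nat.factorial_succ]; ring
      · funext n
        beta_reduce
        rw [Nat.cast_add, add_pow, Finset.sum_range_succ]
        simp only [Nat.sub_self, pow_zero, mul_one, Nat.choose_self, Nat.cast_one, add_sub_cancel_right]
        exact Finset.sum_congr rfl fun i _ => by ring

/-- The phase polynomial, `α i` being the coefficient of degree `i + 1`. -/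
noncomputable def Phi (k : ℕ) (α : ℕ → ℝ) (n : ℕ) : ℝ := ∑ i ∈ range k, α i * (n : ℝ) ^ (i + 1)

lemma Ph_seg (j : ℕ) (α : ℕ → ℝ) (n0 q : ℕ) :
    Ph (j + 1) ((q : ℝ) ^ (j + 1) * (α j * (j + 1).factorial)) (fun m => Phi (j + 1) α (q * m + n0)) := by
  have h1 : Ph (j + 1) (α j * (j + 1).factorial) (Phi (j + 1) α) := by
    have := Ph_sum (j + 1) (range (j + 1)) (fun i => if i = j then α j * (j + 1).factorial else 0)
      (fun i n => α i * (n : ℝ) ^ (i + 1)) (fun i hi => by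
        have hi := mem_range.1 hi
        split_ifs with hij
        · subst hij; exact Ph_smul _ _ (Ph_pow _)
        · have := Ph_smul (j + 1) (α i) (Ph_lower_lt (l := j + 1) (by omega) (Ph_pow (i + 1)))
          simpa using this)
    rw [Finset.sum_ite_eq' (range (j + 1)) j] at this
    simp only [mem_range, Nat.lt_succ_self, if_true] at this
    exact this
  exact Ph_dilate (j + 1) q (Ph_shift (j + 1) n0 h1)

lemma pow_diff_le {n s X : ℝ} (hn : 0 ≤ n) (hs : 0 ≤ s) (hnX : n ≤ X) (hsX : s ≤ X) (i : ℕ) :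
    |(n + s) ^ i - n ^ i| * X ≤ 2 ^ i * s * X ^ i := by
  have hX : 0 ≤ X := hn.trans hnX
  have key : ((n + s) ^ i - n ^ i) * X ≤ (2 ^ i - 1) * s * X ^ i := by
    induction i with
    | zero => simp
    | succ i ih =>
      have h0 : 0 ≤ ((2 : ℝ) ^ i - 1) * s * X ^ i := by
        have : (1 : ℝ) ≤ 2 ^ i := one_le_pow₀ (by norm_num)
        have : (0 : ℝ) ≤ 2 ^ i - 1 := by linarith
        positivity
      calc ((n + s) ^ (i + 1) - n ^ (i + 1)) * X
          = (n + s) * (((n + s) ^ i - n ^ i) * X) + s * n ^ i * X := by ring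
        _ ≤ (n + s) * ((2 ^ i - 1) * s * X ^ i) + s * X ^ i * X := by gcongr
        _ ≤ (2 * X) * ((2 ^ i - 1) * s * X ^ i) + s * X ^ i * X := by gcongr; linarith
        _ = _ := by ring
  rw [abs_of_nonneg (sub_nonneg.2 (pow_le_pow_left₀ hn (by linarith) i))]
  refine key.trans ?_
  gcongr
  linarith

end VMV

namespace VMV
open Finset

lemma norm_shift_le (u : ℕ → ℂ) (hu : ∀ n, ‖u n‖ ≤ 1) (X s : ℕ) :
    ‖∑ n ∈ range X, u (n + s) - ∑ n ∈ range X, u n‖ ≤ 2 * s := by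
  induction s with
  | zero => simp
  | succ s ih =>
    have h1 : ∑ n ∈ range X, u (n + (s + 1)) - ∑ n ∈ range X, u (n + s) = u (X + s) - u s := by
      have := Finset.sum_range_sub (fun n => u (n + s)) X
      rw [Finset.sum_sub_distrib] at this
      simp only [zero_add] at this
      rw [← this]
      congr 1
      exact Finset.sum_congr rfl fun n _ => by congr 1; ring
    have h2 : ‖u (X + s) - u s‖ ≤ 2 := (norm_sub_le _ _).trans (by linarith [hu (X + s), hu s])
    calc _ = ‖(∑ n ∈ range X, u (n + (s + 1)) - ∑ n ∈ range X, u (n + s)) +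
          (∑ n ∈ range X, u (n + s) - ∑ n ∈ range X, u n)‖ := by congr 1; ring
      _ ≤ 2 + 2 * s := (norm_add_le _ _).trans (by rw [h1]; linarith)
      _ = _ := by push_cast; ring

/-- A long sum is dominated by a short sum over a progression. -/
lemma exists_seg (u : ℕ → ℂ) (hu : ∀ n, ‖u n‖ ≤ 1) (X q M : ℕ) (hX : 0 < X) (hM : 0 < M) (t : ℝ)
    (h : (X : ℝ) * t + 2 * (q * M) ≤ ‖∑ n ∈ range X, u n‖) :
    ∃ n0 < X, (M : ℝ) * t ≤ ‖∑ m ∈ range M, u (q * m + n0)‖ := by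
  by_contra hcon
  push Not at hcon
  have hM' : (0 : ℝ) < M := by exact_mod_cast hM
  have h1 : ‖∑ n ∈ range X, ∑ m ∈ range M, u (q * m + n)‖ < X * (M * t) := by
    refine (norm_sum_le _ _).trans_lt ?_
    calc _ < ∑ n ∈ range X, (M : ℝ) * t :=
          Finset.sum_lt_sum_of_nonempty ⟨0, by simpa using hX⟩ (fun n hn => hcon n (mem_range.1 hn))
      _ = _ := by simp
  have h2 : ‖∑ n ∈ range X, ∑ m ∈ range M, u (q * m + n) - M * ∑ n ∈ range X, u n‖ ≤ M * (2 * (q * M)) := by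
    rw [Finset.sum_comm]
    have e1 : (M : ℂ) * ∑ n ∈ range X, u n = ∑ m ∈ range M, ∑ n ∈ range X, u n := by simp
    rw [e1, ← Finset.sum_sub_distrib]
    refine (norm_sum_le _ _).trans ?_
    calc _ ≤ ∑ m ∈ range M, (2 * (q * M) : ℝ) := by
          refine Finset.sum_le_sum fun m hm => ?_
          have := norm_shift_le u hu X (q * m)
          simp only [add_comm _ (q * m)] at this
          refine this.trans ?_
          push_cast
          have : (m : ℝ) ≤ M := by exact_mod_cast (mem_range.1 hm).le
          gcongr
      _ = _ := by simp
  have h3 : (M : ℝ) * ‖∑ n ∈ range X, u n‖ ≤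
      ‖∑ n ∈ range X, ∑ m ∈ range M, u (q * m + n)‖ + M * (2 * (q * M)) := by
    have : (M : ℝ) * ‖∑ n ∈ range X, u n‖ = ‖(M : ℂ) * ∑ n ∈ range X, u n‖ := by simp
    rw [this]
    have h4 := norm_sub_norm_le ((M : ℂ) * ∑ n ∈ range X, u n) (∑ n ∈ range X, ∑ m ∈ range M, u (q * m + n))
    rw [norm_sub_rev] at h4
    linarith
  nlinarith

lemma Phi_split (k j : ℕ) (hj : j ≤ k) (α : ℕ → ℝ) (n : ℕ) :
    Phi k α n = Phi j α n + ∑ i ∈ Ico j k, α i * (n : ℝ) ^ (i + 1) := by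
  unfold Phi
  rw [Finset.sum_range_add_sum_Ico _ hj]

/-- Coefficients of degree `> j` are well approximated. -/
def All (k j C : ℕ) : Prop :=
  ∀ T X : ℕ, 2 ≤ T → 1 ≤ X → ∀ α : ℕ → ℝ,
    (X : ℝ) ≤ T * ‖∑ n ∈ range X, e (Phi k α n)‖ →
    ∃ q : ℕ, 1 ≤ q ∧ q ≤ T ^ C ∧ ∃ a : ℕ → ℤ, ∀ i, j ≤ i → i < k →
      |(q : ℝ) * α i - a i| * (X : ℝ) ^ (i + 1) ≤ (T : ℝ) ^ C

/-- On a segment in a progression the top part of the phase is nearly constant modulo one. -/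
lemma top_const {k j X q M n0 : ℕ} (hq : 1 ≤ q) (hX : 1 ≤ X) (hn0 : n0 ≤ X) (hqM : q * M ≤ X) {B : ℝ} (hB : 0 ≤ B)
    (α : ℕ → ℝ) (a : ℕ → ℤ)
    (h : ∀ i, j ≤ i → i < k → |(q : ℝ) * α i - a i| * (X : ℝ) ^ (i + 1) ≤ B) (m : ℕ) (hm : m < M) :
    ∃ z : ℤ, |(∑ i ∈ Ico j k, α i * ((q * m + n0 : ℕ) : ℝ) ^ (i + 1)) -
      (∑ i ∈ Ico j k, α i * (n0 : ℝ) ^ (i + 1)) - z| * X ≤ k * 2 ^ k * B * M := by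
  have hqR : (1 : ℝ) ≤ q := by exact_mod_cast hq
  have hq0 : (0 : ℝ) < q := by linarith
  have hX0 : (0 : ℝ) < X := by exact_mod_cast hX
  have hdiv : ∀ i : ℕ, ∃ w : ℤ, ((q * m + n0 : ℕ) : ℝ) ^ (i + 1) - (n0 : ℝ) ^ (i + 1) = q * w := by
    intro i
    have h1 : ((q * m + n0 : ℕ) : ℤ) - (n0 : ℤ) ∣ ((q * m + n0 : ℕ) : ℤ) ^ (i + 1) - (n0 : ℤ) ^ (i + 1) :=
      sub_dvd_pow_sub_pow _ _ _
    have h2 : (q : ℤ) ∣ ((q * m + n0 : ℕ) : ℤ) - (n0 : ℤ) := ⟨m, by push_cast; ring⟩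
    obtain ⟨w, hw⟩ := h2.trans h1
    refine ⟨w, ?_⟩
    have := congrArg (Int.cast : ℤ → ℝ) hw
    push_cast at this ⊢
    exact this
  choose w hw using hdiv
  refine ⟨∑ i ∈ Ico j k, a i * w i, ?_⟩
  have hkey : (∑ i ∈ Ico j k, α i * ((q * m + n0 : ℕ) : ℝ) ^ (i + 1)) -
      (∑ i ∈ Ico j k, α i * (n0 : ℝ) ^ (i + 1)) - ((∑ i ∈ Ico j k, a i * w i : ℤ) : ℝ) =
      ∑ i ∈ Ico j k, (q * α i - a i) * w i := by
    push_cast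
    rw [← Finset.sum_sub_distrib, ← Finset.sum_sub_distrib]
    refine Finset.sum_congr rfl fun i _ => ?_
    have := hw i
    push_cast at this
    rw [← mul_sub, this]; ring
  rw [hkey]
  refine (mul_le_mul_of_nonneg_right (Finset.abs_sum_le_sum_abs _ _) hX0.le).trans ?_
  rw [Finset.sum_mul]
  have hterm : ∀ i ∈ Ico j k, |((q : ℝ) * α i - a i) * w i| * X ≤ 2 ^ k * B * M := by
    intro i hi
    obtain ⟨hi1, hi2⟩ := mem_Ico.1 hi
    have hmM : (m : ℝ) ≤ M := by exact_mod_cast hm.le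
    have hqm : (q : ℝ) * m ≤ X := by
      have : q * m ≤ X := (Nat.mul_le_mul_left q hm.le).trans hqM
      exact_mod_cast this
    have h1 := pow_diff_le (n := (n0 : ℝ)) (s := (q : ℝ) * m) (X := (X : ℝ)) (by positivity) (by positivity)
      (by exact_mod_cast hn0) hqm (i + 1)
    have h2 : |(w i : ℝ)| * X ≤ 2 ^ k * M * X ^ (i + 1) := by
      have h3 := hw i
      push_cast at h3
      rw [add_comm (n0 : ℝ), h3, abs_mul, abs_of_pos hq0] at h1
      have h4 : (q : ℝ) * (|(w i : ℝ)| * X) ≤ q * (2 ^ (i + 1) * m * X ^ (i + 1)) := by linarith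
      have h5 := le_of_mul_le_mul_left h4 hq0
      refine h5.trans ?_
      gcongr
      · norm_num
      · omega
    rw [abs_mul]
    calc |(q : ℝ) * α i - a i| * |(w i : ℝ)| * X = |(q : ℝ) * α i - a i| * (|(w i : ℝ)| * X) := by ring
      _ ≤ |(q : ℝ) * α i - a i| * (2 ^ k * M * X ^ (i + 1)) := by gcongr
      _ = 2 ^ k * M * (|(q : ℝ) * α i - a i| * X ^ (i + 1)) := by ring
      _ ≤ 2 ^ k * M * B := by
        refine mul_le_mul_of_nonneg_left (h i hi1 hi2) (by positivity)
      _ = _ := by ring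
  refine (Finset.sum_le_card_nsmul _ _ _ hterm).trans ?_
  rw [nsmul_eq_mul, Nat.card_Ico, mul_assoc, mul_assoc, mul_assoc]
  gcongr
  exact Nat.sub_le _ _

lemma all_step {k j C C' : ℕ} (hjk : j < k) (hA : All k (j + 1) C) (hL : Lead (j + 1) C') :
    All k j (2 * C' + k * k + C * k + C + (6 + 2 * k + C + 1) * k) := by
  intro T X hT hX α hS
  set g := 6 + 2 * k + C with hg
  set D := 2 * C' + k * k + C * k + C + (g + 1) * k with hD
  have hTR : (2 : ℝ) ≤ T := by exact_mod_cast hT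
  have hT1 : (1 : ℝ) ≤ T := by linarith
  have hT0 : (0 : ℝ) < T := by linarith
  have hX0 : (0 : ℝ) < X := by exact_mod_cast hX
  by_cases hXG : X < T ^ g
  · refine ⟨1, le_rfl, Nat.one_le_pow _ _ (by omega), fun i => round (α i), fun i _ hik => ?_⟩
    have hx := abs_sub_round (α i)
    have h1 : (X : ℝ) ≤ (T : ℝ) ^ g := by exact_mod_cast hXG.le
    calc |((1 : ℕ) : ℝ) * α i - round (α i)| * (X : ℝ) ^ (i + 1) ≤ 1 * ((T : ℝ) ^ g) ^ (i + 1) := by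
          gcongr
          simp only [Nat.cast_one, one_mul]; linarith
      _ = (T : ℝ) ^ (g * (i + 1)) := by rw [one_mul, ← pow_mul]
      _ ≤ _ := by
        refine pow_le_pow_right₀ hT1 ?_
        have : g * (i + 1) ≤ g * k := Nat.mul_le_mul_left _ (by omega)
        have h2 : (g + 1) * k = g * k + k := by ring
        clear_value g
        omega
  push Not at hXG
  obtain ⟨q, hq1, hq2, a, ha⟩ := hA T X hT hX α hS
  set G := T ^ g with hG
  have hG0 : 0 < G := Nat.pow_pos (by omega)
  set M := X / G with hM
  have hM1 : 0 < M := Nat.div_pos hXG hG0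
  have hMG : M * G ≤ X := Nat.div_mul_le_self _ _
  have hMG2 : X ≤ 2 * G * M := by
    have := Nat.lt_mul_div_succ X hG0
    rw [← hM] at this
    nlinarith
  have hMR : (0 : ℝ) < M := by exact_mod_cast hM1
  have hGR : (G : ℝ) = (T : ℝ) ^ g := by rw [hG]; push_cast; rfl
  have hMGR : (M : ℝ) * (T : ℝ) ^ g ≤ X := by rw [← hGR]; exact_mod_cast hMG
  have hqR : (q : ℝ) ≤ (T : ℝ) ^ C := by exact_mod_cast hq2
  have hTC : (1 : ℝ) ≤ (T : ℝ) ^ C := one_le_pow₀ hT1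
  -- the main size inequality
  have hsize : (32 : ℝ) * (2 ^ (2 * k)) * T * (T : ℝ) ^ C ≤ (T : ℝ) ^ g := by
    calc (32 : ℝ) * (2 ^ (2 * k)) * T * (T : ℝ) ^ C = 2 ^ (5 + 2 * k) * T * (T : ℝ) ^ C := by
          rw [pow_add]; norm_num
      _ ≤ (T : ℝ) ^ (5 + 2 * k) * T * (T : ℝ) ^ C := by gcongr
      _ = _ := by rw [← pow_succ, ← pow_add]; congr 1; omega
  have h2k : (1 : ℝ) ≤ 2 ^ (2 * k) := one_le_pow₀ (by norm_num)
  have hk2 : (k : ℝ) * 2 ^ k ≤ 2 ^ (2 * k) := by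
    rw [two_mul, pow_add]
    gcongr
    exact_mod_cast Nat.lt_two_pow_self.le
  have hMX : (32 : ℝ) * (2 ^ (2 * k)) * T * (T : ℝ) ^ C * M ≤ X := by
    calc _ ≤ (T : ℝ) ^ g * M := by gcongr
      _ ≤ X := by linarith
  have hqMX : 8 * T * ((q : ℝ) * M) ≤ X := by
    refine le_trans ?_ hMX
    calc 8 * T * ((q : ℝ) * M) ≤ 8 * T * ((T : ℝ) ^ C * M) := by gcongr
      _ = (8 * 1) * T * (T : ℝ) ^ C * M := by ring
      _ ≤ _ := by gcongr; norm_num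
  have hqM : q * M ≤ X := by
    have : (q : ℝ) * M ≤ X := by
      refine le_trans ?_ hqMX
      have : (0 : ℝ) ≤ q * M := by positivity
      nlinarith
    exact_mod_cast this
  obtain ⟨n0, hn0, hseg⟩ := exists_seg (fun n => e (Phi k α n)) (fun n => (norm_e _).le) X q M hX hM1
    (3 / (4 * T)) (by
      have h1 : (X : ℝ) / T ≤ ‖∑ n ∈ range X, e (Phi k α n)‖ := by
        rw [div_le_iff₀ hT0]; linarith
      refine le_trans ?_ h1
      rw [le_div_iff₀ hT0]
      have : ((X : ℝ) * (3 / (4 * T)) + 2 * (q * M)) * T = 3 / 4 * X + 2 * T * (q * M) := by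
        field_simp
      rw [this]; linarith)
  set top0 := ∑ i ∈ Ico (j + 1) k, α i * (n0 : ℝ) ^ (i + 1) with htop0
  have hterm : ∀ m ∈ range M, ‖e (Phi k α (q * m + n0)) - e top0 * e (Phi (j + 1) α (q * m + n0))‖ ≤
      1 / (4 * T) := by
    intro m hm
    obtain ⟨z, hz⟩ := top_const hq1 hX hn0.le hqM (by positivity) α a ha m (mem_range.1 hm)
    rw [Phi_split k (j + 1) (by omega), add_comm (Phi (j + 1) α _), e_add, ← sub_mul, norm_mul, norm_e, mul_one]
    rw [← e_add_int top0 z]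
    refine (norm_e_sub _ _).trans ?_
    rw [show ∀ x : ℝ, x - (top0 + z) = x - top0 - z from fun x => by ring]
    set δ := |(∑ i ∈ Ico (j + 1) k, α i * ((q * m + n0 : ℕ) : ℝ) ^ (i + 1)) - top0 - z| with hδ
    have hδ0 : 0 ≤ δ := abs_nonneg _
    have h1 : δ * X * (32 * T) ≤ X := by
      calc δ * X * (32 * T) ≤ (k * 2 ^ k * (T : ℝ) ^ C * M) * (32 * T) := by gcongr
        _ ≤ (2 ^ (2 * k) * (T : ℝ) ^ C * M) * (32 * T) := by gcongr
        _ = 32 * (2 ^ (2 * k)) * T * (T : ℝ) ^ C * M := by ring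
        _ ≤ X := hMX
    have h2 : δ * (32 * T) ≤ 1 := by
      have : (δ * (32 * T)) * X ≤ 1 * X := by linarith
      exact le_of_mul_le_mul_right this hX0
    rw [le_div_iff₀ (by positivity)]
    calc 2 * Real.pi * δ * (4 * T) ≤ 2 * 4 * δ * (4 * T) := by gcongr; exact Real.pi_le_four
      _ = δ * (32 * T) := by ring
      _ ≤ 1 := h2
  have hlow : (M : ℝ) ≤ ((2 * T : ℕ) : ℝ) * ‖∑ m ∈ range M, e (Phi (j + 1) α (q * m + n0))‖ := by
    have h1 : ‖∑ m ∈ range M, e (Phi k α (q * m + n0)) -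
        e top0 * ∑ m ∈ range M, e (Phi (j + 1) α (q * m + n0))‖ ≤ M * (1 / (4 * T)) := by
      rw [Finset.mul_sum, ← Finset.sum_sub_distrib]
      refine (norm_sum_le _ _).trans ((Finset.sum_le_card_nsmul _ _ _ hterm).trans ?_)
      simp
    have h2 := norm_sub_norm_le (∑ m ∈ range M, e (Phi k α (q * m + n0)))
      (e top0 * ∑ m ∈ range M, e (Phi (j + 1) α (q * m + n0)))
    rw [norm_mul, norm_e, one_mul] at h2
    have h3 : (M : ℝ) * (1 / (2 * T)) ≤ ‖∑ m ∈ range M, e (Phi (j + 1) α (q * m + n0))‖ := by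
      have h4 : (M : ℝ) * (1 / (2 * T)) = M * (3 / (4 * T)) - M * (1 / (4 * T)) := by
        field_simp; norm_num
      rw [h4]; linarith
    calc (M : ℝ) = ((2 * T : ℕ) : ℝ) * (M * (1 / (2 * T))) := by push_cast; field_simp
      _ ≤ _ := by gcongr
  obtain ⟨q', hq'1, hq'2, b, hb⟩ := hL (2 * T) M (by omega) hM1 _ _ (Ph_seg j α n0 q) hlow
  have h2TT : 2 * T ≤ T ^ 2 := by nlinarith
  have hq'3 : q' ≤ T ^ (2 * C') := by
    rw [pow_mul]; exact hq'2.trans (Nat.pow_le_pow_left h2TT _)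
  have hfac : (j + 1).factorial ≤ T ^ (k * k) := by
    calc (j + 1).factorial ≤ (j + 1) ^ (j + 1) := Nat.factorial_le_pow _
      _ ≤ k ^ k := (Nat.pow_le_pow_left (by omega) _).trans (Nat.pow_le_pow_right (by omega) (by omega))
      _ ≤ (2 ^ k) ^ k := Nat.pow_le_pow_left Nat.lt_two_pow_self.le _
      _ ≤ (T ^ k) ^ k := by gcongr
      _ = _ := by rw [pow_mul]
  set u := q' * (j + 1).factorial * q ^ j with hu
  have hu1 : u ≤ T ^ (2 * C' + k * k + C * j) := by
    rw [pow_add, pow_add, pow_mul T C j]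
    exact Nat.mul_le_mul (Nat.mul_le_mul hq'3 hfac) (Nat.pow_le_pow_left hq2 _)
  have hCj : C * (j + 1) ≤ C * k := Nat.mul_le_mul_left _ (by omega)
  have hCj' : C * j + C = C * (j + 1) := by ring
  refine ⟨u * q, ?_, ?_, fun i => if i = j then b else u * a i, ?_⟩
  · have := Nat.factorial_pos (j + 1)
    have : 0 < q ^ j := Nat.pow_pos hq1
    exact Nat.mul_pos (Nat.mul_pos (Nat.mul_pos hq'1 ‹_›) ‹_›) hq1
  · calc u * q ≤ T ^ (2 * C' + k * k + C * j) * T ^ C := Nat.mul_le_mul hu1 hq2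
      _ = T ^ (2 * C' + k * k + C * j + C) := by rw [← pow_add]
      _ ≤ _ := Nat.pow_le_pow_right (by omega) (by rw [hD]; omega)
  · intro i hji hik
    by_cases hij : i = j
    · subst hij
      simp only [if_true]
      have e1 : ((u * q : ℕ) : ℝ) * α i = q' * ((q : ℝ) ^ (i + 1) * (α i * (i + 1).factorial)) := by
        rw [hu]; push_cast; ring
      rw [e1]
      have hXle : (X : ℝ) ≤ (T : ℝ) ^ (g + 1) * M := by
        have h1 : (X : ℝ) ≤ 2 * (T : ℝ) ^ g * M := by
          rw [← hGR]; exact_mod_cast hMG2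
        refine h1.trans ?_
        rw [pow_succ, mul_comm (2 : ℝ)]
        gcongr
      calc |(q' : ℝ) * ((q : ℝ) ^ (i + 1) * (α i * (i + 1).factorial)) - b| * (X : ℝ) ^ (i + 1)
          ≤ |(q' : ℝ) * ((q : ℝ) ^ (i + 1) * (α i * (i + 1).factorial)) - b| *
            ((T : ℝ) ^ (g + 1) * M) ^ (i + 1) := by gcongr
        _ = (|(q' : ℝ) * ((q : ℝ) ^ (i + 1) * (α i * (i + 1).factorial)) - b| * (M : ℝ) ^ (i + 1)) *
            (T : ℝ) ^ ((g + 1) * (i + 1)) := by rw [mul_pow, pow_mul]; ring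
        _ ≤ ((2 * T : ℕ) : ℝ) ^ C' * (T : ℝ) ^ ((g + 1) * (i + 1)) := by gcongr
        _ ≤ ((T : ℝ) ^ 2) ^ C' * (T : ℝ) ^ ((g + 1) * (i + 1)) := by
          gcongr
          exact_mod_cast h2TT
        _ = (T : ℝ) ^ (2 * C' + (g + 1) * (i + 1)) := by rw [← pow_mul, ← pow_add]
        _ ≤ _ := by
          refine pow_le_pow_right₀ hT1 ?_
          have : (g + 1) * (i + 1) ≤ (g + 1) * k := Nat.mul_le_mul_left _ (by omega)
          rw [hD]; omega
    · simp only [hij, if_false]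
      have e1 : ((u * q : ℕ) : ℝ) * α i - ((u * a i : ℤ) : ℝ) = u * (q * α i - a i) := by
        push_cast; ring
      rw [e1, abs_mul, abs_of_nonneg (Nat.cast_nonneg u), mul_assoc]
      have huR : (u : ℝ) ≤ (T : ℝ) ^ (2 * C' + k * k + C * j) := by exact_mod_cast hu1
      calc (u : ℝ) * (|(q : ℝ) * α i - a i| * (X : ℝ) ^ (i + 1)) ≤
          (T : ℝ) ^ (2 * C' + k * k + C * j) * (T : ℝ) ^ C := by
            gcongr
            exact ha i (by omega) hik
        _ = (T : ℝ) ^ (2 * C' + k * k + C * j + C) := by rw [← pow_add]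
        _ ≤ _ := pow_le_pow_right₀ hT1 (by rw [hD]; omega)

/-- Weyl's inequality in inverse form. -/
theorem all_exists (k : ℕ) : ∃ C, All k 0 C := by
  have : ∀ i ≤ k, ∃ C, All k (k - i) C := by
    intro i
    induction i with
    | zero =>
      intro _
      refine ⟨0, fun T X hT hX α hS => ⟨1, le_rfl, by simp, fun _ => 0, fun i h1 h2 => ?_⟩⟩
      omega
    | succ i ih =>
      intro hi
      obtain ⟨C, hC⟩ := ih (by omega)
      obtain ⟨C', hC'⟩ := lead_exists (k - (i + 1) + 1) (by omega)
      rw [show k - i = k - (i + 1) + 1 by omega] at hC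
      exact ⟨_, all_step (by omega) hC hC'⟩
  have := this k le_rfl
  simpa using this

end VMV

namespace VMV
open Finset

noncomputable def PhiR (k : ℕ) (γ : ℕ → ℝ) (x : ℝ) : ℝ := ∑ i ∈ range k, γ i * x ^ (i + 1)

lemma PhiR_var {k : ℕ} {γ : ℕ → ℝ} {B : ℝ} (hγ : ∀ i < k, |γ i| ≤ B) (hB : 0 ≤ B) {x s : ℝ} (hx : 0 ≤ x)
    (hx1 : x ≤ 1) (hs : 0 ≤ s) (hs1 : s ≤ 1) :
    ‖e (PhiR k γ (x + s)) - e (PhiR k γ x)‖ ≤ 8 * (k * 2 ^ k * B) * s := by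
  have h1 : |PhiR k γ (x + s) - PhiR k γ x| ≤ k * 2 ^ k * B * s := by
    unfold PhiR
    rw [← Finset.sum_sub_distrib]
    refine (Finset.abs_sum_le_sum_abs _ _).trans ?_
    have : ∀ i ∈ range k, |γ i * (x + s) ^ (i + 1) - γ i * x ^ (i + 1)| ≤ B * (2 ^ k * s) := by
      intro i hi
      have hi := mem_range.1 hi
      have h := pow_diff_le hx hs hx1 hs1 (i + 1)
      simp only [mul_one, one_pow] at h
      rw [← mul_sub, abs_mul]
      refine mul_le_mul (hγ i hi) (h.trans ?_) (abs_nonneg _) hB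
      gcongr
      · norm_num
      · omega
    refine (Finset.sum_le_card_nsmul _ _ _ this).trans ?_
    rw [nsmul_eq_mul, card_range]
    exact le_of_eq (by ring)
  refine (norm_e_sub _ _).trans ?_
  calc 2 * Real.pi * |PhiR k γ (x + s) - PhiR k γ x| ≤ 2 * 4 * (k * 2 ^ k * B * s) := by
        gcongr; exact Real.pi_le_four
    _ = _ := by ring

noncomputable def W (k : ℕ) (γ : ℕ → ℝ) (N : ℕ) : ℂ := ∑ n ∈ range N, e (PhiR k γ (n / N))

lemma sum_range_mul_eq (f : ℕ → ℂ) (N M : ℕ) :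
    ∑ n ∈ range (N * M), f n = ∑ n ∈ range N, ∑ m ∈ range M, f (n * M + m) := by
  induction N with
  | zero => simp
  | succ N ih => rw [Nat.succ_mul, Finset.sum_range_add, ih, Finset.sum_range_succ]

lemma W_mul {k : ℕ} {γ : ℕ → ℝ} {B : ℝ} (hγ : ∀ i < k, |γ i| ≤ B) (hB : 0 ≤ B) {N M : ℕ} (hN : 0 < N)
    (hM : 0 < M) : ‖W k γ (N * M) - M * W k γ N‖ ≤ 8 * (k * 2 ^ k * B) * M := by
  have hN' : (0 : ℝ) < N := by exact_mod_cast hN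
  have hM' : (0 : ℝ) < M := by exact_mod_cast hM
  have hN1 : (1 : ℝ) ≤ N := by exact_mod_cast hN
  unfold W
  rw [sum_range_mul_eq, Finset.mul_sum, ← Finset.sum_sub_distrib]
  refine (norm_sum_le _ _).trans ?_
  have : ∀ n ∈ range N, ‖∑ m ∈ range M, e (PhiR k γ (((n * M + m : ℕ) : ℝ) / ((N * M : ℕ) : ℝ))) -
      M * e (PhiR k γ (n / N))‖ ≤ M * (8 * (k * 2 ^ k * B) * (1 / N)) := by
    intro n hn
    have hn : (n : ℝ) ≤ N := by exact_mod_cast (mem_range.1 hn).le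
    have e1 : (M : ℂ) * e (PhiR k γ (n / N)) = ∑ m ∈ range M, e (PhiR k γ (n / N)) := by simp
    rw [e1, ← Finset.sum_sub_distrib]
    refine (norm_sum_le _ _).trans ?_
    have h2 : ∀ m ∈ range M, ‖e (PhiR k γ (((n * M + m : ℕ) : ℝ) / ((N * M : ℕ) : ℝ))) -
        e (PhiR k γ (n / N))‖ ≤ 8 * (k * 2 ^ k * B) * (1 / N) := by
      intro m hm
      have hm : (m : ℝ) ≤ M := by exact_mod_cast (mem_range.1 hm).le
      have e2 : ((n * M + m : ℕ) : ℝ) / ((N * M : ℕ) : ℝ) = n / N + m / (N * M) := by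
        push_cast; field_simp
      have h3 : (m : ℝ) / (N * M) ≤ 1 / N := by
        rw [div_le_div_iff₀ (by positivity) hN']; nlinarith
      rw [e2]
      refine (PhiR_var hγ hB (by positivity) ((div_le_one hN').2 hn) (by positivity)
        (h3.trans ((div_le_one hN').2 hN1))).trans ?_
      gcongr
    refine (Finset.sum_le_card_nsmul _ _ _ h2).trans ?_
    simp
  refine (Finset.sum_le_card_nsmul _ _ _ this).trans ?_
  rw [nsmul_eq_mul, card_range]
  refine le_of_eq ?_
  field_simp

lemma W_compare {k : ℕ} {γ : ℕ → ℝ} {B : ℝ} (hγ : ∀ i < k, |γ i| ≤ B) (hB : 0 ≤ B) {X Y : ℕ} (hX : 0 < X)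
    (hY : 0 < Y) : ‖W k γ X / X - W k γ Y / Y‖ ≤ 8 * (k * 2 ^ k * B) * (1 / X + 1 / Y) := by
  have hX' : (0 : ℝ) < X := by exact_mod_cast hX
  have hY' : (0 : ℝ) < Y := by exact_mod_cast hY
  have hXc : (X : ℂ) ≠ 0 := by exact_mod_cast hX.ne'
  have hYc : (Y : ℂ) ≠ 0 := by exact_mod_cast hY.ne'
  have h1 := W_mul hγ hB hX hY
  have h2 := W_mul hγ hB hY hX
  rw [mul_comm Y X] at h2
  have e1 : W k γ X / X - W k γ Y / Y =
      ((W k γ (X * Y) - X * W k γ Y) - (W k γ (X * Y) - Y * W k γ X)) / (X * Y) := by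
    field_simp; ring
  rw [e1, norm_div, norm_mul, Complex.norm_natCast, Complex.norm_natCast, div_le_iff₀ (by positivity)]
  refine (norm_sub_le _ _).trans ((add_le_add h2 h1).trans (le_of_eq ?_))
  field_simp; ring

lemma Phi_period {k q : ℕ} (hq : 1 ≤ q) (a : ℕ → ℤ) (n : ℕ) :
    e (Phi k (fun i => (a i : ℝ) / q) (n + q)) = e (Phi k (fun i => (a i : ℝ) / q) n) := by
  have hq' : (q : ℝ) ≠ 0 := by exact_mod_cast (by omega : q ≠ 0)
  have hdiv : ∀ i : ℕ, ∃ w : ℤ, ((n + q : ℕ) : ℝ) ^ (i + 1) - (n : ℝ) ^ (i + 1) = q * w := by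
    intro i
    have h1 : ((n + q : ℕ) : ℤ) - (n : ℤ) ∣ ((n + q : ℕ) : ℤ) ^ (i + 1) - (n : ℤ) ^ (i + 1) :=
      sub_dvd_pow_sub_pow _ _ _
    have h2 : (q : ℤ) ∣ ((n + q : ℕ) : ℤ) - (n : ℤ) := ⟨1, by push_cast; ring⟩
    obtain ⟨w, hw⟩ := h2.trans h1
    refine ⟨w, ?_⟩
    have := congrArg (Int.cast : ℤ → ℝ) hw
    push_cast at this ⊢
    exact this
  choose w hw using hdiv
  have : Phi k (fun i => (a i : ℝ) / q) (n + q) = Phi k (fun i => (a i : ℝ) / q) n +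
      ((∑ i ∈ range k, a i * w i : ℤ) : ℝ) := by
    unfold Phi
    push_cast
    rw [← Finset.sum_add_distrib]
    refine Finset.sum_congr rfl fun i _ => ?_
    have h := hw i
    push_cast at h
    rw [show ((n : ℝ) + q) ^ (i + 1) = n ^ (i + 1) + q * w i by linarith]
    field_simp
  rw [this, e_add_int]

lemma period_sum (u : ℕ → ℂ) (q : ℕ) (hu : ∀ n, u (n + q) = u n) (n : ℕ) :
    ∑ m ∈ range q, u (n + m) = ∑ m ∈ range q, u m := by
  induction n with
  | zero => simp
  | succ n ih =>
    rw [← ih]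
    have h1 := Finset.sum_range_succ (fun m => u (n + m)) q
    have h2 := Finset.sum_range_succ' (fun m => u (n + m)) q
    rw [h1] at h2
    simp only [add_zero, hu] at h2
    have h3 := add_right_cancel h2
    rw [h3]
    exact Finset.sum_congr rfl fun m _ => by congr 1; ring

lemma major_one {k q X : ℕ} {γ : ℕ → ℝ} {B : ℝ} (hγ : ∀ i < k, |γ i| ≤ B) (hB : 0 ≤ B) (hq : 1 ≤ q)
    (hqX : q ≤ X) (u : ℕ → ℂ) (hu : ∀ n, u (n + q) = u n) (hu1 : ∀ n, ‖u n‖ = 1) :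
    ‖∑ n ∈ range X, u n * e (PhiR k γ (n / X)) - ((∑ m ∈ range q, u m) / q) * W k γ X‖ ≤
      q * (2 + 8 * (k * 2 ^ k * B)) := by
  have hX' : (0 : ℝ) < X := by exact_mod_cast (by omega : 0 < X)
  have hq' : (0 : ℝ) < q := by exact_mod_cast hq
  have hqc : (q : ℂ) ≠ 0 := by exact_mod_cast (by omega : q ≠ 0)
  set F : ℕ → ℂ := fun n => u n * e (PhiR k γ (n / X)) with hF
  set D := 8 * (k * 2 ^ k * B) with hD
  have hF1 : ∀ n, ‖F n‖ ≤ 1 := fun n => by simp [hF, hu1, norm_e]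
  have h1 : ‖∑ m ∈ range q, ∑ n ∈ range X, F (n + m) - q * ∑ n ∈ range X, F n‖ ≤ q * (2 * q) := by
    have e1 : (q : ℂ) * ∑ n ∈ range X, F n = ∑ m ∈ range q, ∑ n ∈ range X, F n := by simp
    rw [e1, ← Finset.sum_sub_distrib]
    refine (norm_sum_le _ _).trans ?_
    have : ∀ m ∈ range q, ‖∑ n ∈ range X, F (n + m) - ∑ n ∈ range X, F n‖ ≤ 2 * q := fun m hm => by
      have hm : (m : ℝ) ≤ q := by exact_mod_cast (mem_range.1 hm).le
      exact (norm_shift_le F hF1 X m).trans (by linarith)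
    refine (Finset.sum_le_card_nsmul _ _ _ this).trans ?_
    simp
  have h2 : ‖∑ m ∈ range q, ∑ n ∈ range X, F (n + m) - (∑ m ∈ range q, u m) * W k γ X‖ ≤ q * (q * D) := by
    unfold W
    rw [Finset.sum_comm, Finset.mul_sum, ← Finset.sum_sub_distrib]
    refine (norm_sum_le _ _).trans ?_
    have : ∀ n ∈ range X, ‖∑ m ∈ range q, F (n + m) - (∑ m ∈ range q, u m) * e (PhiR k γ (n / X))‖ ≤
        q * (D * (q / X)) := by
      intro n hn
      have hn : (n : ℝ) ≤ X := by exact_mod_cast (mem_range.1 hn).le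
      rw [← period_sum u q hu n, Finset.sum_mul, ← Finset.sum_sub_distrib]
      refine (norm_sum_le _ _).trans ?_
      have : ∀ m ∈ range q, ‖F (n + m) - u (n + m) * e (PhiR k γ (n / X))‖ ≤ D * (q / X) := by
        intro m hm
        have hm : (m : ℝ) ≤ q := by exact_mod_cast (mem_range.1 hm).le
        have hqX' : (q : ℝ) ≤ X := by exact_mod_cast hqX
        simp only [hF]
        rw [← mul_sub, norm_mul, hu1, one_mul, Nat.cast_add, add_div]
        have hD0 : 0 ≤ D := by positivity
        refine (PhiR_var hγ hB (by positivity) ((div_le_one hX').2 hn) (by positivity)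
          ((div_le_one hX').2 (hm.trans hqX'))).trans ?_
        gcongr
      refine (Finset.sum_le_card_nsmul _ _ _ this).trans ?_
      simp
    refine (Finset.sum_le_card_nsmul _ _ _ this).trans (le_of_eq ?_)
    rw [nsmul_eq_mul, card_range]
    field_simp
  have e2 : ∑ n ∈ range X, F n - ((∑ m ∈ range q, u m) / q) * W k γ X =
      ((∑ m ∈ range q, ∑ n ∈ range X, F (n + m) - (∑ m ∈ range q, u m) * W k γ X) -
      (∑ m ∈ range q, ∑ n ∈ range X, F (n + m) - q * ∑ n ∈ range X, F n)) / q := by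
    field_simp; ring
  rw [e2, norm_div, Complex.norm_natCast, div_le_iff₀ hq']
  refine (norm_sub_le _ _).trans ?_
  nlinarith

/-- Comparison of exponential sums of different lengths on a major arc. -/
lemma major_compare {k q X Y : ℕ} {γ : ℕ → ℝ} {B : ℝ} (hγ : ∀ i < k, |γ i| ≤ B) (hB : 0 ≤ B) (hq : 1 ≤ q)
    (hqY : q ≤ Y) (hYX : Y ≤ X) (a : ℕ → ℤ) (α α' : ℕ → ℝ)
    (hα : ∀ i < k, α i = a i / q + γ i / (X : ℝ) ^ (i + 1))
    (hα' : ∀ i < k, α' i = a i / q + γ i / (Y : ℝ) ^ (i + 1)) :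
    ‖∑ n ∈ range X, e (Phi k α n)‖ / X ≤ ‖∑ n ∈ range Y, e (Phi k α' n)‖ / Y +
      4 * q * (1 + 8 * (k * 2 ^ k * B)) / Y := by
  have hY0 : 0 < Y := by omega
  have hX0 : 0 < X := by omega
  have hX' : (0 : ℝ) < X := by exact_mod_cast hX0
  have hY' : (0 : ℝ) < Y := by exact_mod_cast hY0
  have hq' : (1 : ℝ) ≤ q := by exact_mod_cast hq
  have hq0 : (0 : ℝ) < q := by linarith
  set u : ℕ → ℂ := fun n => e (Phi k (fun i => (a i : ℝ) / q) n) with hu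
  set D := 8 * (k * 2 ^ k * B) with hD
  have hD0 : 0 ≤ D := by positivity
  set σ := (∑ m ∈ range q, u m) / q with hσ
  have hσ1 : ‖σ‖ ≤ 1 := by
    rw [hσ, norm_div, Complex.norm_natCast, div_le_one hq0]
    have := norm_sum_e_le (fun n => Phi k (fun i => (a i : ℝ) / q) n) (range q)
    simpa using this
  have key : ∀ (Z : ℕ) (ζ : ℕ → ℝ), 0 < Z → q ≤ Z →
      (∀ i < k, ζ i = a i / q + γ i / (Z : ℝ) ^ (i + 1)) →
      ‖(∑ n ∈ range Z, e (Phi k ζ n)) / Z - σ * (W k γ Z / Z)‖ ≤ q * (2 + D) / Z := by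
    intro Z ζ hZ hqZ hζ
    have hZ' : (0 : ℝ) < Z := by exact_mod_cast hZ
    have h1 := major_one hγ hB hq hqZ u (fun n => Phi_period hq a n) (fun n => norm_e _)
    have e1 : ∑ n ∈ range Z, e (Phi k ζ n) = ∑ n ∈ range Z, u n * e (PhiR k γ (n / Z)) := by
      refine Finset.sum_congr rfl fun n _ => ?_
      rw [hu, ← e_add]
      congr 1
      unfold Phi PhiR
      rw [← Finset.sum_add_distrib]
      refine Finset.sum_congr rfl fun i hi => ?_
      rw [hζ i (mem_range.1 hi), div_pow]
      field_simp
    rw [e1, show ∀ x w : ℂ, x / Z - σ * (w / Z) = (x - σ * w) / Z from fun x w => by ring, norm_div,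
      Complex.norm_natCast]
    gcongr
  have h1 := key X α hX0 (by omega) hα
  have h2 := key Y α' hY0 hqY hα'
  have h3 := W_compare hγ hB hX0 hY0
  have h4 : ‖σ * (W k γ X / X) - σ * (W k γ Y / Y)‖ ≤ D * (1 / X + 1 / Y) := by
    rw [← mul_sub, norm_mul]
    exact (mul_le_of_le_one_left (norm_nonneg _) hσ1).trans h3
  have h5 : (1 : ℝ) / X ≤ 1 / Y := one_div_le_one_div_of_le hY' (by exact_mod_cast hYX)
  have e1 : ‖∑ n ∈ range X, e (Phi k α n)‖ / X = ‖(∑ n ∈ range X, e (Phi k α n)) / X‖ := by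
    rw [norm_div, Complex.norm_natCast]
  have e2 : ‖∑ n ∈ range Y, e (Phi k α' n)‖ / Y = ‖(∑ n ∈ range Y, e (Phi k α' n)) / Y‖ := by
    rw [norm_div, Complex.norm_natCast]
  rw [e1, e2]
  set P := (∑ n ∈ range X, e (Phi k α n)) / (X : ℂ)
  set Q := (∑ n ∈ range Y, e (Phi k α' n)) / (Y : ℂ)
  have h6 : ‖P‖ ≤ ‖Q‖ + (‖P - σ * (W k γ X / X)‖ + ‖σ * (W k γ X / X) - σ * (W k γ Y / Y)‖ +
      ‖Q - σ * (W k γ Y / Y)‖) := by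
    have : P = Q + ((P - σ * (W k γ X / X)) + (σ * (W k γ X / X) - σ * (W k γ Y / Y)) -
      (Q - σ * (W k γ Y / Y))) := by ring
    calc ‖P‖ = _ := congrArg norm this
      _ ≤ _ := (norm_add_le _ _).trans (by
        gcongr
        exact (norm_sub_le _ _).trans (by gcongr; exact norm_add_le _ _))
  refine h6.trans ?_
  have h7 : q * (2 + D) / X ≤ q * (2 + D) * (1 / Y) := by
    rw [div_eq_mul_one_div]; gcongr
  have h8 : D * (1 / X + 1 / Y) ≤ D * (1 / Y + 1 / Y) := by gcongr
  have h9 : 0 ≤ (1 : ℝ) / Y := by positivity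
  rw [div_eq_mul_one_div ((q : ℝ) * (2 + D))] at h2
  rw [div_eq_mul_one_div (4 * q * (1 + D))]
  have h10 : D * (1 / Y + 1 / Y) ≤ q * (2 * D) * (1 / Y) := by
    have : 0 ≤ D * (1 / Y : ℝ) := by positivity
    nlinarith
  nlinarith

end VMV

namespace VMV
open Finset MeasureTheory

/-- The exponential sum. -/
noncomputable def FF (k X : ℕ) (α : Fin k → ℝ) : ℂ :=
  ∑ n ∈ range X, e (∑ i : Fin k, α i * (n : ℝ) ^ ((i : ℕ) + 1))

lemma continuous_e : Continuous e := by unfold e; fun_prop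

lemma continuous_FF (k X : ℕ) : Continuous (FF k X) := by
  unfold FF
  refine continuous_finsetSum _ fun n _ => continuous_e.comp ?_
  fun_prop

lemma norm_FF_le (k X : ℕ) (α : Fin k → ℝ) : ‖FF k X α‖ ≤ X := by
  have := norm_sum_e_le (fun n => ∑ i : Fin k, α i * (n : ℝ) ^ ((i : ℕ) + 1)) (range X)
  simpa [FF] using this

/-- The cube `[-m, m]^k`. -/
def Cu (k m : ℕ) : Set (Fin k → ℝ) := Set.pi Set.univ (fun _ => Set.Icc (-(m : ℝ)) m)

lemma isCompact_Cu (k m : ℕ) : IsCompact (Cu k m) := isCompact_univ_pi fun _ => isCompact_Icc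

lemma int_e (c : ℤ) (m : ℕ) : ∫ t in Set.Icc (-(m : ℝ)) m, e (t * c) = if c = 0 then 2 * (m : ℂ) else 0 := by
  rw [integral_Icc_eq_integral_Ioc, ← intervalIntegral.integral_of_le (by
    have : (0 : ℝ) ≤ m := Nat.cast_nonneg m
    linarith)]
  split_ifs with hc
  · subst hc
    simp [e_zero]
    ring
  · have hne : (2 * Real.pi * Complex.I * c : ℂ) ≠ 0 := by
      simp [Real.pi_ne_zero, hc]
    have h1 : ∀ t : ℝ, e (t * c) = Complex.exp ((2 * Real.pi * Complex.I * c) * t) := by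
      intro t; unfold e; congr 1; push_cast; ring
    simp only [h1]
    rw [integral_exp_mul_complex hne]
    have h2 : Complex.exp (2 * Real.pi * Complex.I * c * ((m : ℝ) : ℂ)) = 1 := by
      have := e_int (c * m)
      unfold e at this
      rw [← this]; congr 1; push_cast; ring
    have h3 : Complex.exp (2 * Real.pi * Complex.I * c * ((-(m : ℝ) : ℝ) : ℂ)) = 1 := by
      have := e_int (-(c * m))
      unfold e at this
      rw [← this]; congr 1; push_cast; ring
    rw [h2, h3]; simp

lemma e_sum {ι : Type*} (s : Finset ι) (x : ι → ℝ) : e (∑ i ∈ s, x i) = ∏ i ∈ s, e (x i) := by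
  classical
  induction s using Finset.induction_on with
  | empty => simp [e_zero]
  | insert a s ha ih => rw [Finset.sum_insert ha, Finset.prod_insert ha, e_add, ih]

lemma int_cube (k m : ℕ) (c : Fin k → ℤ) :
    ∫ α in Cu k m, e (∑ i, α i * (c i : ℝ)) = if c = 0 then (2 * (m : ℂ)) ^ k else 0 := by
  unfold Cu
  rw [volume_pi, Measure.restrict_pi_pi]
  simp only [e_sum]
  rw [integral_fintype_prod_eq_prod (f := fun i t => e (t * (c i : ℝ)))]
  simp only [int_e]
  split_ifs with h
  · subst h; simp
  · obtain ⟨j, hj⟩ : ∃ j, c j ≠ 0 := by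
      by_contra hcon
      push Not at hcon
      exact h (funext hcon)
    exact Finset.prod_eq_zero (Finset.mem_univ j) (by simp [hj])

lemma FF_pow (k X s : ℕ) (α : Fin k → ℝ) :
    ((‖FF k X α‖ ^ (2 * s) : ℝ) : ℂ) = ∑ z : (Fin s → Fin X) × (Fin s → Fin X),
      e (∑ i : Fin k, α i * ((∑ l, ((z.1 l : ℕ) : ℤ) ^ ((i : ℕ) + 1) - ∑ l, ((z.2 l : ℕ) : ℤ) ^ ((i : ℕ) + 1) : ℤ) : ℝ)) := by
  have h1 : FF k X α ^ s = ∑ x : Fin s → Fin X,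
      e (∑ l, ∑ i : Fin k, α i * ((x l : ℕ) : ℝ) ^ ((i : ℕ) + 1)) := by
    unfold FF
    rw [Finset.sum_range, Fintype.sum_pow]
    refine Finset.sum_congr rfl fun x _ => ?_
    rw [e_sum]
  rw [mul_comm 2 s, pow_mul, ← norm_pow, Complex.ofReal_pow, ← Complex.mul_conj', h1, map_sum,
    Finset.sum_mul_sum, ← Finset.sum_product', ← Finset.univ_product_univ]
  refine Finset.sum_congr rfl fun z _ => ?_
  rw [← e_sub]
  congr 1
  rw [Finset.sum_comm, Finset.sum_comm (f := fun l i => α i * ((z.2 l : ℕ) : ℝ) ^ ((i : ℕ) + 1)),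
    ← Finset.sum_sub_distrib]
  refine Finset.sum_congr rfl fun i _ => ?_
  push_cast
  rw [mul_sub, Finset.mul_sum, Finset.mul_sum]

/-- Orthogonality. -/
theorem integral_FF (k X s m : ℕ) :
    ∫ α in Cu k m, ‖FF k X α‖ ^ (2 * s) = (2 * (m : ℝ)) ^ k * J s k X := by
  classical
  have h : ((∫ α in Cu k m, ‖FF k X α‖ ^ (2 * s) : ℝ) : ℂ) = (((2 * (m : ℝ)) ^ k * J s k X : ℝ) : ℂ) := by
    rw [← integral_complex_ofReal]
    simp only [FF_pow]
    rw [integral_finsetSum]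
    · simp only [int_cube]
      rw [← Finset.sum_filter, Finset.sum_const, nsmul_eq_mul, mul_comm]
      push_cast
      congr 2
      unfold J
      congr 1
      ext z
      simp only [mem_filter, mem_univ, true_and]
      constructor
      · intro hz j hj1 hjk
        have := congrFun hz ⟨j - 1, by omega⟩
        simp only [Pi.zero_apply, sub_eq_zero] at this
        rw [Nat.sub_add_cancel hj1] at this
        exact this
      · intro hz
        funext i
        simp only [Pi.zero_apply, sub_eq_zero]
        exact hz _ (by omega) (by have := i.2; omega)
    · intro z _
      refine ContinuousOn.integrableOn_compact (isCompact_Cu k m) (Continuous.continuousOn ?_)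
      exact continuous_e.comp (by fun_prop)
  exact_mod_cast h

lemma integrable_FF (k X s m : ℕ) : IntegrableOn (fun α => ‖FF k X α‖ ^ s) (Cu k m) :=
  ContinuousOn.integrableOn_compact (isCompact_Cu k m) ((continuous_FF k X).norm.pow s).continuousOn

end VMV

namespace VMV
open Finset MeasureTheory

noncomputable def ext (k : ℕ) (α : Fin k → ℝ) (i : ℕ) : ℝ := if h : i < k then α ⟨i, h⟩ else 0

lemma FF_eq (k X : ℕ) (α : Fin k → ℝ) : FF k X α = ∑ n ∈ range X, e (Phi k (ext k α) n) := by
  unfold FF Phi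
  refine Finset.sum_congr rfl fun n _ => ?_
  rw [Finset.sum_range]
  congr 1
  refine Finset.sum_congr rfl fun i _ => ?_
  simp [ext]

def KS (k : ℕ) : ℕ := ∑ i : Fin k, ((i : ℕ) + 1)

/-- Box around `θ` at scale `Z`. -/
def Bx (k : ℕ) (Q Z : ℝ) (θ : Fin k → ℝ) : Set (Fin k → ℝ) :=
  {α | ∀ i : Fin k, |α i - θ i| * Z ^ ((i : ℕ) + 1) ≤ Q}

/-- Rescaling. -/
noncomputable def psi (k : ℕ) (c : ℝ) (θ α : Fin k → ℝ) : Fin k → ℝ :=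
  fun i => θ i + (α i - θ i) * c ^ ((i : ℕ) + 1)

lemma vol_psi (k : ℕ) {c : ℝ} (hc : 0 < c) (θ : Fin k → ℝ) (S : Set (Fin k → ℝ)) :
    volume (psi k c θ ⁻¹' S) = ENNReal.ofReal ((c ^ KS k)⁻¹) * volume S := by
  set D : (Fin k → ℝ) →ₗ[ℝ] (Fin k → ℝ) :=
    Matrix.toLin' (Matrix.diagonal (fun i : Fin k => c ^ ((i : ℕ) + 1))) with hD
  have hdet : LinearMap.det D = c ^ KS k := by
    rw [hD, LinearMap.det_toLin', Matrix.det_diagonal, Finset.prod_pow_eq_pow_sum, KS]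
  have h1 : psi k c θ ⁻¹' S = (fun x => x + (-θ)) ⁻¹' (D ⁻¹' ((fun x => x + θ) ⁻¹' S)) := by
    ext α
    simp only [Set.mem_preimage]
    have : psi k c θ α = D (α + -θ) + θ := by
      funext i
      simp [psi, hD, Matrix.toLin'_apply, Matrix.mulVec_diagonal]
      ring
    rw [this]
  rw [h1, measure_preimage_add_right, Measure.addHaar_preimage_linearMap _ (by rw [hdet]; positivity),
    measure_preimage_add_right, hdet, abs_of_pos (by positivity)]

lemma isClosed_Bx (k : ℕ) (Q Z : ℝ) (θ : Fin k → ℝ) : IsClosed (Bx k Q Z θ) := by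
  unfold Bx
  simp only [Set.ofPred_forall]
  refine isClosed_iInter fun i => isClosed_le (by fun_prop) continuous_const

/-- Rational points with small height. -/
def Rat' (k Q : ℕ) : Set (Fin k → ℚ) :=
  {θ | ∃ q : ℕ, 1 ≤ q ∧ q ≤ Q ∧ ∃ a : Fin k → ℤ, ∀ i, θ i = a i / q ∧ |θ i| ≤ 2}

/-- set of large values -/
def Big (k X T : ℕ) : Set (Fin k → ℝ) := {α | (X : ℝ) ≤ T * ‖FF k X α‖}

lemma isClosed_Big (k X T : ℕ) : IsClosed (Big k X T) :=
  isClosed_le continuous_const (continuous_const.mul (continuous_FF k X).norm)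

lemma cover {k C : ℕ} (hC : All k 0 C) {X T : ℕ} (hT : 2 ≤ T) (hX : T ^ C ≤ X) :
    Cu k 1 ∩ Big k X T ⊆ ⋃ θ : Rat' k (T ^ C), Bx k ((T : ℝ) ^ C) X (fun i => (θ.1 i : ℝ)) ∩ Big k X T := by
  rintro α ⟨h1, h2⟩
  have hX1 : 1 ≤ X := (Nat.one_le_pow _ _ (by omega)).trans hX
  have h2' : (X : ℝ) ≤ T * ‖FF k X α‖ := h2
  rw [FF_eq] at h2'
  obtain ⟨q, hq1, hq2, a, ha⟩ := hC T X hT hX1 _ h2'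
  have hq1R : (1 : ℝ) ≤ q := by exact_mod_cast hq1
  have hq0 : (0 : ℝ) < q := by linarith
  have hX1R : (1 : ℝ) ≤ X := by exact_mod_cast hX1
  have hXR : (T : ℝ) ^ C ≤ X := by exact_mod_cast hX
  have hb : ∀ i : Fin k, |α i - (a i : ℝ) / q| * (X : ℝ) ^ ((i : ℕ) + 1) ≤ (T : ℝ) ^ C := by
    intro i
    have h := ha i (Nat.zero_le _) i.2
    simp only [ext, i.2, dif_pos, Fin.eta] at h
    refine le_trans ?_ h
    refine mul_le_mul_of_nonneg_right ?_ (by positivity)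
    have e1 : (q : ℝ) * α i - a i = q * (α i - a i / q) := by field_simp
    rw [e1, abs_mul, abs_of_pos hq0]
    nlinarith [abs_nonneg (α i - (a i : ℝ) / q)]
  rw [Set.mem_iUnion]
  refine ⟨⟨fun i => (a i : ℚ) / q, q, hq1, hq2, fun i => a i, fun i => ⟨rfl, ?_⟩⟩, ?_, h2⟩
  · have h3 := hb i
    have h4 : (X : ℝ) ≤ (X : ℝ) ^ ((i : ℕ) + 1) := le_self_pow₀ hX1R (by omega)
    have h5 : |α i - (a i : ℝ) / q| ≤ 1 := by
      by_contra hcon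
      push Not at hcon
      nlinarith
    have h6 : |α i| ≤ 1 := by
      have := h1 i (Set.mem_univ _)
      rw [abs_le]
      simpa using this
    have h7 : |(a i : ℝ) / q| ≤ 2 := by
      have := abs_sub_abs_le_abs_sub ((a i : ℝ) / q) (α i)
      rw [abs_sub_comm] at this
      linarith
    have h8 : ((|(a i : ℚ) / q| : ℚ) : ℝ) ≤ ((2 : ℚ) : ℝ) := by push_cast; exact h7
    exact_mod_cast h8
  · intro i
    push_cast
    exact hb i

lemma transfer {k C C1 : ℕ} (hC1 : 9 + 2 * k + 3 * C ≤ C1) {X T : ℕ} (hT : 2 ≤ T) (hX : T ^ C1 ≤ X)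
    (θ : Rat' k (T ^ C)) :
    Bx k ((T : ℝ) ^ C) X (fun i => (θ.1 i : ℝ)) ∩ Big k X T ⊆
      psi k ((X : ℝ) / (T ^ C1 : ℕ)) (fun i => (θ.1 i : ℝ)) ⁻¹'
        (Bx k ((T : ℝ) ^ C) (T ^ C1 : ℕ) (fun i => (θ.1 i : ℝ)) ∩ Big k (T ^ C1) (2 * T)) := by
  rintro α ⟨h1, h2⟩
  obtain ⟨θ, q, hq1, hq2, a, ha⟩ := θ
  set Y := T ^ C1 with hY
  have hTR : (2 : ℝ) ≤ T := by exact_mod_cast hT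
  have hT0 : (0 : ℝ) < T := by linarith
  have hT1 : (1 : ℝ) ≤ T := by linarith
  have hY1 : 1 ≤ Y := Nat.one_le_pow _ _ (by omega)
  have hY0 : (0 : ℝ) < Y := by exact_mod_cast hY1
  have hX0 : (0 : ℝ) < X := by exact_mod_cast (by omega : 0 < X)
  have hcoef : ∀ i : Fin k, (psi k ((X : ℝ) / Y) (fun i => (θ i : ℝ)) α i - θ i) * (Y : ℝ) ^ ((i : ℕ) + 1) =
      (α i - θ i) * (X : ℝ) ^ ((i : ℕ) + 1) := by
    intro i
    simp only [psi, div_pow]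
    field_simp
    ring
  refine ⟨fun i => ?_, ?_⟩
  · have := h1 i
    simp only at this ⊢
    rw [← abs_of_pos (pow_pos hY0 _), ← abs_mul, hcoef i, abs_mul, abs_of_pos (pow_pos hX0 _)]
    exact this
  · have hqY : q ≤ Y := hq2.trans (Nat.pow_le_pow_right (by omega) (by omega))
    have hcmp := major_compare (k := k) (q := q) (X := X) (Y := Y)
      (γ := fun i => (ext k α i - (if h : i < k then (a ⟨i, h⟩ : ℝ) else 0) / q) * (X : ℝ) ^ (i + 1))
      (B := (T : ℝ) ^ C)
      (fun i hi => by
        have := h1 ⟨i, hi⟩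
        simp only [(ha ⟨i, hi⟩).1] at this
        simp only [ext, hi, dif_pos]
        rw [abs_mul, abs_of_pos (pow_pos hX0 _)]
        push_cast at this
        exact this) (by positivity) hq1 hqY hX (fun i => if h : i < k then a ⟨i, h⟩ else 0)
      (ext k α) (ext k (psi k ((X : ℝ) / Y) (fun i => (θ i : ℝ)) α))
      (fun i hi => by
        simp only [ext, hi, dif_pos]
        field_simp; ring)
      (fun i hi => by
        simp only [ext, hi, dif_pos, psi, (ha ⟨i, hi⟩).1]
        push_cast
        rw [div_pow]
        field_simp)
    rw [← FF_eq, ← FF_eq] at hcmp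
    have hX2 : (1 : ℝ) / T ≤ ‖FF k X α‖ / X := by
      rw [div_le_div_iff₀ hT0 hX0]
      have : (X : ℝ) ≤ T * ‖FF k X α‖ := h2
      linarith
    have hk2 : (k : ℝ) * 2 ^ k ≤ 2 ^ (2 * k) := by
      rw [two_mul, pow_add]
      gcongr
      exact_mod_cast Nat.lt_two_pow_self.le
    have hqR : (q : ℝ) ≤ (T : ℝ) ^ C := by exact_mod_cast hq2
    have hTC : (1 : ℝ) ≤ (T : ℝ) ^ C := one_le_pow₀ hT1
    have h2k : (1 : ℝ) ≤ 2 ^ (2 * k) := one_le_pow₀ (by norm_num)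
    have herr : 4 * q * (1 + 8 * (k * 2 ^ k * (T : ℝ) ^ C)) / Y ≤ 1 / (2 * T) := by
      rw [div_le_div_iff₀ hY0 (by positivity), one_mul]
      calc 4 * q * (1 + 8 * (k * 2 ^ k * (T : ℝ) ^ C)) * (2 * T)
          ≤ 4 * (T : ℝ) ^ C * (2 ^ (2 * k) * (T : ℝ) ^ C + 8 * (2 ^ (2 * k) * (T : ℝ) ^ C)) * (2 * T) := by
            gcongr
            nlinarith
        _ = 72 * 2 ^ (2 * k) * T * (T : ℝ) ^ C * (T : ℝ) ^ C := by ring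
        _ ≤ T ^ 7 * (T : ℝ) ^ (2 * k) * T * (T : ℝ) ^ C * (T : ℝ) ^ C := by
          gcongr
          calc (72 : ℝ) ≤ 2 ^ 7 := by norm_num
            _ ≤ _ := by gcongr
        _ = (T : ℝ) ^ (7 + 2 * k + 1 + C + C) := by rw [pow_add, pow_add, pow_add, pow_add, pow_one]
        _ ≤ (T : ℝ) ^ C1 := pow_le_pow_right₀ hT1 (by omega)
        _ = Y := by rw [hY]; push_cast; rfl
    have h3 : 1 / (2 * T) ≤ ‖FF k Y (psi k ((X : ℝ) / Y) (fun i => (θ i : ℝ)) α)‖ / Y := by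
      have : (1 : ℝ) / T = 1 / (2 * T) + 1 / (2 * T) := by field_simp; norm_num
      linarith
    show (Y : ℝ) ≤ ((2 * T : ℕ) : ℝ) * ‖FF k Y (psi k ((X : ℝ) / Y) (fun i => (θ i : ℝ)) α)‖
    rw [div_le_div_iff₀ (by positivity) hY0] at h3
    push_cast
    linarith

lemma boxes_disjoint {k C C1 : ℕ} (hC1 : 9 + 2 * k + 3 * C ≤ C1) {T : ℕ} (hT : 2 ≤ T)
    (θ θ' : Rat' k (T ^ C)) (hne : θ ≠ θ') :
    Disjoint (Bx k ((T : ℝ) ^ C) (T ^ C1 : ℕ) (fun i => (θ.1 i : ℝ)) ∩ Big k (T ^ C1) (2 * T))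
      (Bx k ((T : ℝ) ^ C) (T ^ C1 : ℕ) (fun i => (θ'.1 i : ℝ)) ∩ Big k (T ^ C1) (2 * T)) := by
  rw [Set.disjoint_left]
  rintro α ⟨h1, _⟩ ⟨h2, _⟩
  apply hne
  obtain ⟨θ, q, hq1, hq2, a, ha⟩ := θ
  obtain ⟨θ', q', hq'1, hq'2, a', ha'⟩ := θ'
  have hTR : (2 : ℝ) ≤ T := by exact_mod_cast hT
  have hT1 : (1 : ℝ) ≤ T := by linarith
  have hq0 : (0 : ℝ) < q := by exact_mod_cast hq1
  have hq'0 : (0 : ℝ) < q' := by exact_mod_cast hq'1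
  apply Subtype.ext
  funext i
  have g1 := h1 i
  have g2 := h2 i
  simp only [(ha i).1] at g1
  simp only [(ha' i).1] at g2
  push_cast at g1 g2
  set Z := (((T : ℝ) ^ C1) ^ ((i : ℕ) + 1)) with hZ
  have hZ1 : (T : ℝ) ^ C1 ≤ Z := le_self_pow₀ (one_le_pow₀ hT1) (by omega)
  have hZ0 : 0 < Z := by positivity
  set Q := (T : ℝ) ^ C with hQ
  have hQ1 : 1 ≤ Q := one_le_pow₀ hT1
  have hZQ : 2 * Q ^ 3 < Z := by
    refine lt_of_lt_of_le ?_ hZ1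
    calc 2 * Q ^ 3 < 4 * Q ^ 3 := by have : 0 < Q ^ 3 := by positivity
                                     linarith
      _ ≤ (T : ℝ) ^ 2 * (T : ℝ) ^ (C * 3) := by
        rw [pow_mul]
        gcongr
        nlinarith
      _ = (T : ℝ) ^ (2 + C * 3) := by rw [pow_add]
      _ ≤ _ := pow_le_pow_right₀ hT1 (by omega)
  have g3 : |(a i : ℝ) / q - a' i / q'| * Z ≤ 2 * Q := by
    have : |(a i : ℝ) / q - a' i / q'| ≤ |α i - a i / q| + |α i - a' i / q'| := by
      have := abs_sub_le ((a i : ℝ) / q) (α i) (a' i / q')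
      rw [abs_sub_comm ((a i : ℝ) / q) (α i)] at this
      exact this
    nlinarith
  have hqQ : (q : ℝ) ≤ Q := by rw [hQ]; exact_mod_cast hq2
  have hq'Q : (q' : ℝ) ≤ Q := by rw [hQ]; exact_mod_cast hq'2
  have g4 : |(a i : ℝ) * q' - a' i * q| * Z < Z := by
    have e1 : (a i : ℝ) * q' - a' i * q = ((a i : ℝ) / q - a' i / q') * (q * q') := by field_simp
    rw [e1, abs_mul, abs_of_pos (by positivity : (0 : ℝ) < q * q')]
    calc |(a i : ℝ) / q - a' i / q'| * (q * q') * Z = (|(a i : ℝ) / q - a' i / q'| * Z) * (q * q') := by ring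
      _ ≤ 2 * Q * (Q * Q) := by gcongr
      _ = 2 * Q ^ 3 := by ring
      _ < Z := hZQ
  have g5 : |a i * (q' : ℤ) - a' i * q| < 1 := by
    have : |(a i : ℝ) * q' - a' i * q| < 1 := by
      by_contra hcon
      push Not at hcon
      nlinarith
    exact_mod_cast this
  have g6 := Int.abs_lt_one_iff.1 g5
  have g7 : (a i : ℚ) * q' - a' i * q = 0 := by exact_mod_cast g6
  show θ i = θ' i
  rw [(ha i).1, (ha' i).1, div_eq_div_iff (by exact_mod_cast hq0.ne') (by exact_mod_cast hq'0.ne')]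
  linarith

lemma box_sub_cube {k C C1 : ℕ} (hC1 : 9 + 2 * k + 3 * C ≤ C1) {T : ℕ} (hT : 2 ≤ T)
    (θ : Rat' k (T ^ C)) :
    Bx k ((T : ℝ) ^ C) (T ^ C1 : ℕ) (fun i => (θ.1 i : ℝ)) ⊆ Cu k 3 := by
  intro α h1 i _
  obtain ⟨θ, q, hq1, hq2, a, ha⟩ := θ
  have hTR : (2 : ℝ) ≤ T := by exact_mod_cast hT
  have hT1 : (1 : ℝ) ≤ T := by linarith
  have g1 := h1 i
  simp only at g1
  push_cast at g1
  have g2 : |(θ i : ℝ)| ≤ 2 := by exact_mod_cast (ha i).2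
  have hZ1 : (T : ℝ) ^ C ≤ ((T : ℝ) ^ C1) ^ ((i : ℕ) + 1) :=
    (pow_le_pow_right₀ hT1 (by omega : C ≤ C1)).trans (le_self_pow₀ (one_le_pow₀ hT1) (by omega))
  have hQ1 : (1 : ℝ) ≤ (T : ℝ) ^ C := one_le_pow₀ hT1
  have g3 : |α i - θ i| ≤ 1 := by
    by_contra hcon
    push Not at hcon
    nlinarith
  have g4 : |α i| ≤ 3 := by
    have := abs_sub_abs_le_abs_sub (α i) (θ i : ℝ)
    linarith
  have := abs_le.1 g4
  simpa using this

lemma level_transfer {k C C1 : ℕ} (hC : All k 0 C) (hC1 : 9 + 2 * k + 3 * C ≤ C1) {X T : ℕ} (hT : 2 ≤ T)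
    (hX : T ^ C1 ≤ X) :
    volume (Cu k 1 ∩ Big k X T) ≤ ENNReal.ofReal ((((X : ℝ) / (T ^ C1 : ℕ)) ^ KS k)⁻¹) *
      volume (Cu k 3 ∩ Big k (T ^ C1) (2 * T)) := by
  have hT0 : 0 < T := by omega
  have hXC : T ^ C ≤ X := (Nat.pow_le_pow_right hT0 (by omega)).trans hX
  have hY0 : (0 : ℝ) < (T ^ C1 : ℕ) := by exact_mod_cast Nat.pow_pos hT0
  have hX0 : (0 : ℝ) < X := hY0.trans_le (by exact_mod_cast hX)
  refine (measure_mono (cover hC hT hXC)).trans ((measure_iUnion_le _).trans ?_)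
  set E : Rat' k (T ^ C) → Set (Fin k → ℝ) := fun θ =>
    Bx k ((T : ℝ) ^ C) (T ^ C1 : ℕ) (fun i => (θ.1 i : ℝ)) ∩ Big k (T ^ C1) (2 * T) with hE
  have h1 : ∀ θ : Rat' k (T ^ C), volume (Bx k ((T : ℝ) ^ C) X (fun i => (θ.1 i : ℝ)) ∩ Big k X T) ≤
      ENNReal.ofReal ((((X : ℝ) / (T ^ C1 : ℕ)) ^ KS k)⁻¹) * volume (E θ) := by
    intro θ
    refine (measure_mono (transfer hC1 hT hX θ)).trans (le_of_eq ?_)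
    rw [vol_psi k (by positivity)]
  refine (ENNReal.tsum_le_tsum h1).trans ?_
  rw [ENNReal.tsum_mul_left]
  gcongr
  rw [← measure_iUnion]
  · refine measure_mono (Set.iUnion_subset fun θ => ?_)
    exact Set.inter_subset_inter_left _ (box_sub_cube hC1 hT θ)
  · intro θ θ' hne
    exact boxes_disjoint hC1 hT θ θ' hne
  · intro θ
    exact ((isClosed_Bx _ _ _ _).inter (isClosed_Big _ _ _)).measurableSet

lemma chebyshev (k Y T s m : ℕ) :
    volume.real (Cu k m ∩ Big k Y T) * (Y : ℝ) ^ (2 * s) ≤ (T : ℝ) ^ (2 * s) * ((2 * (m : ℝ)) ^ k * J s k Y) := by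
  rw [← integral_FF, ← integral_const_mul]
  have h1 : volume.real (Cu k m ∩ Big k Y T) * (Y : ℝ) ^ (2 * s) =
      ∫ _ in Cu k m ∩ Big k Y T, (Y : ℝ) ^ (2 * s) := by
    rw [setIntegral_const, smul_eq_mul]
  have hmeas : MeasurableSet (Cu k m ∩ Big k Y T) :=
    ((isCompact_Cu k m).isClosed.inter (isClosed_Big _ _ _)).measurableSet
  have hfin : volume (Cu k m ∩ Big k Y T) ≠ ⊤ :=
    ((measure_mono Set.inter_subset_left).trans_lt (isCompact_Cu k m).measure_lt_top).ne
  rw [h1]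
  have hInt : IntegrableOn (fun α => (T : ℝ) ^ (2 * s) * ‖FF k Y α‖ ^ (2 * s)) (Cu k m) :=
    (integrable_FF k Y (2 * s) m).const_mul _
  refine (setIntegral_mono_on (integrableOn_const hfin) (hInt.mono_set Set.inter_subset_left) hmeas ?_).trans
    (setIntegral_mono_set hInt ?_ ?_)
  · intro α hα
    rw [← mul_pow]
    exact pow_le_pow_left₀ (Nat.cast_nonneg _) hα.2 _
  · exact Filter.Eventually.of_forall fun α => by positivity
  · exact Filter.Eventually.of_forall fun α hα => hα.1

/-- Level set estimate. -/
theorem level {k : ℕ} (hk : 2 ≤ k) : ∃ (C1 : ℕ) (A : ℝ), 1 ≤ C1 ∧ 0 ≤ A ∧ ∀ X T : ℕ, 2 ≤ T → T ^ C1 ≤ X →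
    volume.real (Cu k 1 ∩ Big k X T) * (X : ℝ) ^ KS k ≤ A * (T : ℝ) ^ (2 * (k * (k + 1)) + 1) := by
  obtain ⟨C, hC⟩ := all_exists k
  set C1 := 9 + 2 * k + 3 * C with hC1
  have hC10 : (0 : ℝ) < C1 := by exact_mod_cast (by omega : 0 < C1)
  obtain ⟨A, hA, hB⟩ := part_one hk (ε := 1 / (C1 : ℝ)) (by positivity)
  refine ⟨C1, 2 ^ (2 * (k * (k + 1))) * 6 ^ k * A, by omega, by positivity, fun X T hT hX => ?_⟩
  set s := k * (k + 1) with hs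
  have hKS : 2 * KS k = s := by
    unfold KS
    rw [← Finset.sum_range (fun i => i + 1), Finset.sum_add_distrib, mul_add, mul_comm 2 (∑ i ∈ range k, i),
      Finset.sum_range_id_mul_two, hs]
    simp
    obtain ⟨j, rfl⟩ : ∃ j, k = j + 1 := ⟨k - 1, by omega⟩
    simp; ring
  have hT0 : 0 < T := by omega
  set Y := T ^ C1 with hY
  have hY1 : 1 ≤ Y := Nat.pow_pos hT0
  have hY0 : (0 : ℝ) < Y := by exact_mod_cast hY1
  have hX0 : (0 : ℝ) < X := hY0.trans_le (by exact_mod_cast hX)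
  have hTR : (0 : ℝ) < T := by exact_mod_cast hT0
  have h1 := level_transfer hC le_rfl hT hX
  rw [← hC1, ← hY] at h1
  have hfin : volume (Cu k 3 ∩ Big k Y (2 * T)) ≠ ⊤ :=
    ((measure_mono Set.inter_subset_left).trans_lt (isCompact_Cu k 3).measure_lt_top).ne
  have h2 : volume.real (Cu k 1 ∩ Big k X T) ≤ (((X : ℝ) / Y) ^ KS k)⁻¹ * volume.real (Cu k 3 ∩ Big k Y (2 * T)) := by
    have := ENNReal.toReal_mono (ENNReal.mul_ne_top ENNReal.ofReal_ne_top hfin) h1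
    rw [ENNReal.toReal_mul, ENNReal.toReal_ofReal (by positivity)] at this
    exact this
  have h3 := chebyshev k Y (2 * T) s 3
  have h4 := hB Y hY1
  rw [← hs] at h4
  have h5 : (Y : ℝ) ^ (3 / 2 * (k : ℝ) * (k + 1) + 1 / (C1 : ℝ)) * (Y : ℝ) ^ KS k = T * (Y : ℝ) ^ (2 * s) := by
    rw [← Real.rpow_natCast (Y : ℝ) (KS k), ← Real.rpow_natCast (Y : ℝ) (2 * s), ← Real.rpow_add hY0]
    have e1 : (T : ℝ) = (Y : ℝ) ^ (1 / (C1 : ℝ)) := by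
      rw [hY, Nat.cast_pow, one_div, Real.pow_rpow_inv_natCast hTR.le (by omega)]
    rw [e1, ← Real.rpow_add hY0]
    congr 1
    have hKR : 2 * (KS k : ℝ) = k * (k + 1) := by
      have : ((2 * KS k : ℕ) : ℝ) = ((k * (k + 1) : ℕ) : ℝ) := by rw [hKS]
      push_cast at this; exact this
    have hsR : (s : ℝ) = k * (k + 1) := by rw [hs]; push_cast; ring
    push_cast
    rw [hsR]; linarith
  set vX := volume.real (Cu k 1 ∩ Big k X T)
  set vY := volume.real (Cu k 3 ∩ Big k Y (2 * T))
  have hvY : 0 ≤ vY := measureReal_nonneg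
  have h6 : vX * (X : ℝ) ^ KS k ≤ (Y : ℝ) ^ KS k * vY := by
    calc vX * (X : ℝ) ^ KS k ≤ ((((X : ℝ) / Y) ^ KS k)⁻¹ * vY) * (X : ℝ) ^ KS k := by gcongr
      _ = _ := by rw [div_pow]; field_simp
  refine h6.trans ?_
  have h7 : (Y : ℝ) ^ KS k * vY * (Y : ℝ) ^ (2 * s) ≤
      (2 ^ (2 * s) * 6 ^ k * A * (T : ℝ) ^ (2 * s + 1)) * (Y : ℝ) ^ (2 * s) := by
    calc (Y : ℝ) ^ KS k * vY * (Y : ℝ) ^ (2 * s) = (Y : ℝ) ^ KS k * (vY * (Y : ℝ) ^ (2 * s)) := by ring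
      _ ≤ (Y : ℝ) ^ KS k * (((2 * T : ℕ) : ℝ) ^ (2 * s) * ((2 * ((3 : ℕ) : ℝ)) ^ k * J s k Y)) := by gcongr
      _ ≤ (Y : ℝ) ^ KS k * (((2 * T : ℕ) : ℝ) ^ (2 * s) * ((2 * ((3 : ℕ) : ℝ)) ^ k *
          (A * (Y : ℝ) ^ (3 / 2 * (k : ℝ) * (k + 1) + 1 / (C1 : ℝ))))) := by gcongr
      _ = (2 : ℝ) ^ (2 * s) * 6 ^ k * A * (T : ℝ) ^ (2 * s) *
          ((Y : ℝ) ^ (3 / 2 * (k : ℝ) * (k + 1) + 1 / (C1 : ℝ)) * (Y : ℝ) ^ KS k) := by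
        push_cast
        rw [mul_pow (2 : ℝ) (T : ℝ)]
        norm_num
        ring
      _ = _ := by rw [h5]; ring
  exact le_of_mul_le_mul_right h7 (by positivity)

end VMV

namespace VMV
open Finset MeasureTheory

lemma two_KS {k : ℕ} (hk : 2 ≤ k) : 2 * KS k = k * (k + 1) := by
  unfold KS
  rw [← Finset.sum_range (fun i => i + 1), Finset.sum_add_distrib, mul_add, mul_comm 2 (∑ i ∈ range k, i),
    Finset.sum_range_id_mul_two]
  simp
  obtain ⟨j, rfl⟩ : ∃ j, k = j + 1 := ⟨k - 1, by omega⟩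
  simp; ring

/-- Pointwise dyadic decomposition. -/
lemma layer_pt (k X p n : ℕ) (α : Fin k → ℝ) :
    ‖FF k X α‖ ≤ X / 2 ^ n ∨ ‖FF k X α‖ ^ p ≤
      ∑ i ∈ range n, (Big k X (2 ^ (i + 1))).indicator (fun _ => ((X : ℝ) / 2 ^ i) ^ p) α := by
  induction n with
  | zero => left; simpa using norm_FF_le k X α
  | succ n ih =>
    rw [Finset.sum_range_succ]
    rcases ih with h | h
    · by_cases h2 : ‖FF k X α‖ ≤ X / 2 ^ (n + 1)
      · exact Or.inl h2
      · right
        push Not at h2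
        have hm : α ∈ Big k X (2 ^ (n + 1)) := by
          rw [div_lt_iff₀ (by positivity)] at h2
          show (X : ℝ) ≤ ((2 ^ (n + 1) : ℕ) : ℝ) * ‖FF k X α‖
          push_cast
          linarith
        rw [Set.indicator_of_mem hm]
        have : ‖FF k X α‖ ^ p ≤ ((X : ℝ) / 2 ^ n) ^ p := by gcongr
        have h0 : 0 ≤ ∑ i ∈ range n, (Big k X (2 ^ (i + 1))).indicator (fun _ => ((X : ℝ) / 2 ^ i) ^ p) α :=
          Finset.sum_nonneg fun i _ => Set.indicator_nonneg (fun _ _ => by positivity) _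
        linarith
    · right
      have h0 : 0 ≤ (Big k X (2 ^ (n + 1))).indicator (fun _ => ((X : ℝ) / 2 ^ n) ^ p) α :=
        Set.indicator_nonneg (fun _ _ => by positivity) _
      linarith

lemma layer_int (k X s r n : ℕ) (hsr : s ≤ r) :
    (2 : ℝ) ^ k * J r k X ≤ ((X : ℝ) / 2 ^ n) ^ (2 * (r - s)) * (2 ^ k * J s k X) +
      ∑ i ∈ range n, volume.real (Cu k 1 ∩ Big k X (2 ^ (i + 1))) * ((X : ℝ) / 2 ^ i) ^ (2 * r) := by
  have e1 := integral_FF k X r 1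
  have e2 := integral_FF k X s 1
  simp only [Nat.cast_one, mul_one] at e1 e2
  rw [← e1, ← e2]
  have hms : ∀ i, MeasurableSet (Big k X (2 ^ (i + 1))) := fun i => (isClosed_Big _ _ _).measurableSet
  have hfin : volume (Cu k 1) ≠ ⊤ := (isCompact_Cu k 1).measure_lt_top.ne
  have hind : ∀ i, IntegrableOn (fun α => (Big k X (2 ^ (i + 1))).indicator
      (fun _ => ((X : ℝ) / 2 ^ i) ^ (2 * r)) α) (Cu k 1) := fun i =>
    (integrableOn_const hfin).indicator (hms i)
  have hi : ∀ i, ∫ α in Cu k 1, (Big k X (2 ^ (i + 1))).indicator (fun _ => ((X : ℝ) / 2 ^ i) ^ (2 * r)) α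
      = volume.real (Cu k 1 ∩ Big k X (2 ^ (i + 1))) * ((X : ℝ) / 2 ^ i) ^ (2 * r) := by
    intro i
    rw [setIntegral_indicator (hms i), setIntegral_const, smul_eq_mul]
  rw [← Finset.sum_congr rfl (fun i _ => hi i), ← integral_finsetSum _ (fun i _ => hind i),
    ← integral_const_mul, ← integral_add ((integrable_FF k X (2 * s) 1).const_mul _)
      (integrable_finsetSum _ (fun i _ => hind i))]
  refine integral_mono (integrable_FF k X (2 * r) 1)
    (((integrable_FF k X (2 * s) 1).const_mul _).add (integrable_finsetSum _ (fun i _ => hind i))) ?_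
  intro α
  beta_reduce
  have h0 : 0 ≤ ∑ i ∈ range n, (Big k X (2 ^ (i + 1))).indicator (fun _ => ((X : ℝ) / 2 ^ i) ^ (2 * r)) α :=
    Finset.sum_nonneg fun i _ => Set.indicator_nonneg (fun _ _ => by positivity) _
  have h1 : 0 ≤ ((X : ℝ) / 2 ^ n) ^ (2 * (r - s)) * ‖FF k X α‖ ^ (2 * s) := by positivity
  rcases layer_pt k X (2 * r) n α with h | h
  · have : ‖FF k X α‖ ^ (2 * r) ≤ ((X : ℝ) / 2 ^ n) ^ (2 * (r - s)) * ‖FF k X α‖ ^ (2 * s) := by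
      rw [show 2 * r = 2 * (r - s) + 2 * s by omega, pow_add]
      gcongr
    linarith
  · linarith

theorem J_bound {k r : ℕ} (hk : 2 ≤ k) (hr : k * (k + 1) < r) :
    ∃ C : ℝ, 0 < C ∧ ∀ X : ℕ, 1 ≤ X → (J r k X : ℝ) * (X : ℝ) ^ KS k ≤ C * (X : ℝ) ^ (2 * r) := by
  obtain ⟨C1, A, hC1, hA, hlev⟩ := level hk
  have hC10 : (0 : ℝ) < C1 := by exact_mod_cast hC1
  obtain ⟨B, hB, hBd⟩ := part_one hk (ε := 1 / (C1 : ℝ)) (by positivity)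
  have hKS := two_KS hk
  have hKR : 2 * (KS k : ℝ) = k * (k + 1) := by exact_mod_cast hKS
  set s := k * (k + 1) with hs
  have hsR : (s : ℝ) = k * (k + 1) := by rw [hs]; push_cast; ring
  refine ⟨2 * B + A * 2 ^ (2 * s + 1) * 2 + 1, by positivity, fun X hX => ?_⟩
  have hX0 : (0 : ℝ) < X := by exact_mod_cast hX
  set n := Nat.log (2 ^ C1) X with hn
  have hn1 : (2 ^ C1) ^ n ≤ X := Nat.pow_log_le_self _ (by omega)
  have hn2 : X < (2 ^ C1) ^ (n + 1) := Nat.lt_pow_succ_log_self (Nat.one_lt_two_pow (by omega)) X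
  clear_value n
  have hL := layer_int k X s r n hr.le
  have hk2 : (1 : ℝ) ≤ 2 ^ k := one_le_pow₀ (by norm_num)
  -- first part
  have hxe : (X : ℝ) ^ (1 / (C1 : ℝ)) ≤ 2 ^ (n + 1) := by
    have : (X : ℝ) ≤ ((2 : ℝ) ^ (n + 1)) ^ C1 := by
      rw [← pow_mul, mul_comm, pow_mul]
      exact_mod_cast hn2.le
    calc (X : ℝ) ^ (1 / (C1 : ℝ)) ≤ (((2 : ℝ) ^ (n + 1)) ^ C1) ^ (1 / (C1 : ℝ)) :=
          Real.rpow_le_rpow hX0.le this (by positivity)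
      _ = 2 ^ (n + 1) := by
          rw [one_div, Real.pow_rpow_inv_natCast (by positivity) (by omega)]
  have hJs : (J s k X : ℝ) * (X : ℝ) ^ KS k ≤ B * 2 ^ (n + 1) * (X : ℝ) ^ (2 * s) := by
    have h1 := hBd X hX
    rw [← hs] at h1
    calc (J s k X : ℝ) * (X : ℝ) ^ KS k
        ≤ (B * (X : ℝ) ^ (3 / 2 * (k : ℝ) * (k + 1) + 1 / (C1 : ℝ))) * (X : ℝ) ^ KS k := by gcongr
      _ = B * (X : ℝ) ^ (1 / (C1 : ℝ)) * (X : ℝ) ^ (2 * s) := by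
        rw [← Real.rpow_natCast (X : ℝ) (KS k), ← Real.rpow_natCast (X : ℝ) (2 * s), mul_assoc B, mul_assoc B,
          ← Real.rpow_add hX0, ← Real.rpow_add hX0]
        congr 2
        push_cast
        rw [hsR]; linarith
      _ ≤ _ := by gcongr
  have hP1 : ((X : ℝ) / 2 ^ n) ^ (2 * (r - s)) * J s k X * (X : ℝ) ^ KS k ≤ 2 * B * (X : ℝ) ^ (2 * r) := by
    have h2 : ((2 : ℝ) ^ n) ≤ (2 ^ n) ^ (2 * (r - s)) := le_self_pow₀ (one_le_pow₀ (by norm_num)) (by omega)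
    calc ((X : ℝ) / 2 ^ n) ^ (2 * (r - s)) * J s k X * (X : ℝ) ^ KS k
        = ((X : ℝ) / 2 ^ n) ^ (2 * (r - s)) * (J s k X * (X : ℝ) ^ KS k) := by ring
      _ ≤ ((X : ℝ) / 2 ^ n) ^ (2 * (r - s)) * (B * 2 ^ (n + 1) * (X : ℝ) ^ (2 * s)) := by gcongr
      _ = 2 * B * (X : ℝ) ^ (2 * r) * (2 ^ n / (2 ^ n) ^ (2 * (r - s))) := by
        rw [div_pow, show 2 * r = 2 * (r - s) + 2 * s by omega, pow_add (X : ℝ)]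
        ring
      _ ≤ 2 * B * (X : ℝ) ^ (2 * r) * 1 := by
        gcongr
        exact (div_le_one (by positivity)).2 h2
      _ = _ := by ring
  have hP2 : (∑ i ∈ range n, volume.real (Cu k 1 ∩ Big k X (2 ^ (i + 1))) * ((X : ℝ) / 2 ^ i) ^ (2 * r)) *
      (X : ℝ) ^ KS k ≤ A * 2 ^ (2 * s + 1) * 2 * (X : ℝ) ^ (2 * r) := by
    have hterm : ∀ i ∈ range n, volume.real (Cu k 1 ∩ Big k X (2 ^ (i + 1))) * ((X : ℝ) / 2 ^ i) ^ (2 * r) *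
        (X : ℝ) ^ KS k ≤ A * 2 ^ (2 * s + 1) * (X : ℝ) ^ (2 * r) * (1 / 2) ^ i := by
      intro i hi
      have hi' := Finset.mem_range.1 hi
      have h1 := hlev X (2 ^ (i + 1)) (by rw [pow_succ]; have := Nat.one_le_two_pow (n := i); omega) (by
        refine le_trans ?_ hn1
        rw [← pow_mul, ← pow_mul, mul_comm C1]
        exact Nat.pow_le_pow_right (by norm_num) (Nat.mul_le_mul_right _ hi'))
      push_cast at h1
      have h3 : ((2 : ℝ) ^ i) ^ (2 * s + 1) * 2 ^ i ≤ (2 ^ i) ^ (2 * r) := by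
        rw [← pow_succ]
        exact pow_le_pow_right₀ (one_le_pow₀ (by norm_num)) (by omega)
      calc volume.real (Cu k 1 ∩ Big k X (2 ^ (i + 1))) * ((X : ℝ) / 2 ^ i) ^ (2 * r) * (X : ℝ) ^ KS k
          = (volume.real (Cu k 1 ∩ Big k X (2 ^ (i + 1))) * (X : ℝ) ^ KS k) * ((X : ℝ) / 2 ^ i) ^ (2 * r) := by ring
        _ ≤ (A * ((2 : ℝ) ^ (i + 1)) ^ (2 * s + 1)) * ((X : ℝ) / 2 ^ i) ^ (2 * r) := by gcongr
        _ = A * 2 ^ (2 * s + 1) * (X : ℝ) ^ (2 * r) * (((2 : ℝ) ^ i) ^ (2 * s + 1) / (2 ^ i) ^ (2 * r)) := by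
          rw [pow_succ (2 : ℝ) i, mul_pow, div_pow]; ring
        _ ≤ A * 2 ^ (2 * s + 1) * (X : ℝ) ^ (2 * r) * (1 / 2) ^ i := by
          gcongr
          rw [one_div, inv_pow, div_le_iff₀ (by positivity), inv_mul_eq_div, le_div_iff₀ (by positivity)]
          exact h3
    rw [Finset.sum_mul]
    refine (Finset.sum_le_sum hterm).trans ?_
    rw [← Finset.mul_sum]
    have hg : ∑ i ∈ range n, (1 / 2 : ℝ) ^ i ≤ 2 := sum_geometric_two_le n
    calc _ ≤ A * 2 ^ (2 * s + 1) * (X : ℝ) ^ (2 * r) * 2 := by gcongr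
      _ = _ := by ring
  set S2 := ∑ i ∈ range n, volume.real (Cu k 1 ∩ Big k X (2 ^ (i + 1))) * ((X : ℝ) / 2 ^ i) ^ (2 * r)
  have hS2 : 0 ≤ S2 := Finset.sum_nonneg fun i _ => by positivity
  have hJ : (J r k X : ℝ) ≤ ((X : ℝ) / 2 ^ n) ^ (2 * (r - s)) * J s k X + S2 := by
    have h4 : (2 : ℝ) ^ k * J r k X ≤ 2 ^ k * (((X : ℝ) / 2 ^ n) ^ (2 * (r - s)) * J s k X + S2) := by
      nlinarith
    exact le_of_mul_le_mul_left h4 (by positivity)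
  have hXp : 0 ≤ (X : ℝ) ^ (2 * r) := by positivity
  calc (J r k X : ℝ) * (X : ℝ) ^ KS k ≤ (((X : ℝ) / 2 ^ n) ^ (2 * (r - s)) * J s k X + S2) * (X : ℝ) ^ KS k := by
        gcongr
    _ ≤ 2 * B * (X : ℝ) ^ (2 * r) + A * 2 ^ (2 * s + 1) * 2 * (X : ℝ) ^ (2 * r) := by
        rw [add_mul]; exact add_le_add hP1 hP2
    _ ≤ _ := by linarith

theorem final {d r : ℕ} (hd : 2 ≤ d) (hr : d * (d + 1) < r) :
    ∃ K : ℝ, 0 < K ∧ ∀ V : ℕ, 1 ≤ V →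
      (Nat.card {vw : (Fin r → ℕ) × (Fin r → ℕ) |
        (∀ i, vw.1 i ∈ Finset.Icc 1 V) ∧ (∀ i, vw.2 i ∈ Finset.Icc 1 V) ∧
        ∀ j ∈ Finset.Icc 1 d, ∑ i, vw.1 i ^ j = ∑ i, vw.2 i ^ j} : ℝ)
      ≤ K * (V : ℝ) ^ (2 * (r : ℝ) - d * (d + 1) / 2) := by
  obtain ⟨C, hC, hJ⟩ := J_bound hd hr
  refine ⟨C, hC, fun V hV => ?_⟩
  have hV0 : (0 : ℝ) < V := by exact_mod_cast hV
  have hfin : ({vw : (Fin r → ℕ) × (Fin r → ℕ) |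
        (∀ i, vw.1 i ∈ Finset.Icc 1 V) ∧ (∀ i, vw.2 i ∈ Finset.Icc 1 V) ∧
        ∀ j ∈ Finset.Icc 1 d, ∑ i, vw.1 i ^ j = ∑ i, vw.2 i ^ j}).Finite := by
    refine Set.Finite.subset (Finset.finite_toSet
      ((Fintype.piFinset fun _ : Fin r => Finset.Icc 1 V) ×ˢ (Fintype.piFinset fun _ : Fin r => Finset.Icc 1 V))) ?_
    rintro ⟨v, w⟩ ⟨h1, h2, -⟩
    simp only [Finset.coe_product, Set.mem_prod, Finset.mem_coe, Fintype.mem_piFinset]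
    exact ⟨h1, h2⟩
  have hcard : Nat.card {vw : (Fin r → ℕ) × (Fin r → ℕ) |
        (∀ i, vw.1 i ∈ Finset.Icc 1 V) ∧ (∀ i, vw.2 i ∈ Finset.Icc 1 V) ∧
        ∀ j ∈ Finset.Icc 1 d, ∑ i, vw.1 i ^ j = ∑ i, vw.2 i ^ j} ≤ J r d V := by
    rw [Nat.card_coe_set_eq, Set.ncard_eq_toFinset_card _ hfin]
    refine card_le_J _ 1 1 one_pos ?_ ?_ ?_
    · intro z hz i
      have h := Finset.mem_Icc.1 (((hfin.mem_toFinset).1 hz).1 i)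
      refine ⟨h.1, one_dvd _, ?_⟩
      rw [Nat.div_one]; omega
    · intro z hz i
      have h := Finset.mem_Icc.1 (((hfin.mem_toFinset).1 hz).2.1 i)
      refine ⟨h.1, one_dvd _, ?_⟩
      rw [Nat.div_one]; omega
    · intro z hz j hj1 hj2
      have h := ((hfin.mem_toFinset).1 hz).2.2 j (Finset.mem_Icc.2 ⟨hj1, hj2⟩)
      exact_mod_cast h
  have h1 : (J r d V : ℝ) ≤ C * (V : ℝ) ^ (2 * (r : ℝ) - d * (d + 1) / 2) := by
    have hKR : 2 * (KS d : ℝ) = d * (d + 1) := by exact_mod_cast two_KS hd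
    rw [show 2 * (r : ℝ) - d * (d + 1) / 2 = ((2 * r : ℕ) : ℝ) - (KS d : ℝ) by push_cast; linarith,
      Real.rpow_sub hV0, Real.rpow_natCast, Real.rpow_natCast, ← mul_div_assoc, le_div_iff₀ (by positivity)]
    exact hJ V hV
  exact le_trans (by exact_mod_cast hcard) h1

end VMV

/-- For `d ≥ 2` and `r > d(d+1)`, the number `J_{r,d}(V)` of solutions of the
Vinogradov system of degree `d` in `2r` variables from `{1,…,V}` satisfies
`J_{r,d}(V) ≪_{d,r} V^{2r - d(d+1)/2}`. -/
theorem vinogradov_mean_value (d r : ℕ) (hd : 2 ≤ d) (hr : d * (d + 1) < r) :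
    ∃ K : ℝ, 0 < K ∧ ∀ V : ℕ, 1 ≤ V →
      (Nat.card {vw : (Fin r → ℕ) × (Fin r → ℕ) |
          (∀ i, vw.1 i ∈ Finset.Icc 1 V) ∧ (∀ i, vw.2 i ∈ Finset.Icc 1 V) ∧
          ∀ j ∈ Finset.Icc 1 d, ∑ i, vw.1 i ^ j = ∑ i, vw.2 i ^ j} : ℝ) ≤
        K * (V : ℝ) ^ (2 * (r : ℝ) - d * (d + 1) / 2) := by
  exact VMV.final hd hr
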